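/- arXiv:2306.14969 — 12 statements merged into one kernel-verified Lean document; each statement's English description precedes it below -/
import Mathlib

section
/- Let W and V be n×n complex matrices. For every θ₀ ∈ ℝ, the map θ ↦ exp(W + θ·V) (matrix exponential) is differentiable at θ₀ and its derivative equals the Bochner integral ∫₀¹ exp((1−s)·H) · V · exp(s·H) ds, where H = W + θ₀·V (Duhamel's formula). -/
open scoped Matrix.Norms.L2Operator

/-!
The function `s ↦ exp ((1 - s) • x) * exp (s • y)` interpolates between `exp x` and `exp y`, so
integrating its derivative gives the exact identity `exp y - exp x = Φ (x, y) (y - x)`, where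
`Φ (x, y)` is the operator `z ↦ ∫₀¹ exp ((1 - s) • x) * z * exp (s • y) ds`. Since `Φ` is
continuous, Carathéodory's criterion shows that `Φ (x, x)` is the Fréchet derivative of `exp`
at `x`, and the chain rule does the rest.
-/

open NormedSpace Topology

section Caratheodory

variable {𝕜 E F : Type*} [NontriviallyNormedField 𝕜] [NormedAddCommGroup E] [NormedSpace 𝕜 E]
  [NormedAddCommGroup F] [NormedSpace 𝕜 F]

theorem hasStrictFDerivAt_of_sub_eq_apply {f : E → F} {Φ : E × E → E →L[𝕜] F} {a : E}
    (hf : ∀ x y, f x - f y = Φ (x, y) (x - y)) (hΦ : ContinuousAt Φ (a, a)) :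
    HasStrictFDerivAt f (Φ (a, a)) a := by
  refine .of_isLittleO <| .of_bound fun c hc => ?_
  have hsmall : ∀ᶠ p in 𝓝 (a, a), ‖Φ p - Φ (a, a)‖ < c := by
    simpa only [dist_eq_norm] using hΦ.eventually (Metric.ball_mem_nhds _ hc)
  filter_upwards [hsmall] with p hp
  calc ‖f p.1 - f p.2 - Φ (a, a) (p.1 - p.2)‖
      = ‖(Φ p - Φ (a, a)) (p.1 - p.2)‖ := by rw [hf, sub_apply]
    _ ≤ c * ‖p.1 - p.2‖ := ContinuousLinearMap.le_of_opNorm_le _ hp.le _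

end Caratheodory

theorem hasDerivAt_exp_one_sub_smul_mul_exp_smul {𝕂 A : Type*} [RCLike 𝕂] [NormedRing A]
    [NormedAlgebra 𝕂 A] [CompleteSpace A] (x y : A) (s : 𝕂) :
    HasDerivAt (fun s : 𝕂 => exp ((1 - s) • x) * exp (s • y))
      (exp ((1 - s) • x) * (y - x) * exp (s • y)) s := by
  have hx : HasDerivAt (fun s : 𝕂 => exp ((1 - s) • x)) (-(exp ((1 - s) • x) * x)) s :=
    (hasDerivAt_exp_smul_const x (1 - s)).comp_const_sub 1 s
  have hy : HasDerivAt (fun s : 𝕂 => exp (s • y)) (y * exp (s • y)) s :=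
    hasDerivAt_exp_smul_const' y s
  exact (hx.mul hy).congr_deriv (by noncomm_ring)

section BanachAlgebra

variable {A : Type*} [NormedRing A] [NormedAlgebra ℝ A] [CompleteSpace A]

theorem continuous_exp_of_real : Continuous (exp : A → A) :=
  let _ : NormedAlgebra ℚ A := .restrictScalars ℚ ℝ A
  exp_continuous

theorem exp_sub_exp_eq_integral (x y : A) :
    exp y - exp x = ∫ s in (0 : ℝ)..1, exp ((1 - s) • x) * (y - x) * exp (s • y) := by
  have hexp : Continuous (exp : A → A) := continuous_exp_of_real
  rw [intervalIntegral.integral_eq_sub_of_hasDerivAt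
    (fun s _ => hasDerivAt_exp_one_sub_smul_mul_exp_smul x y s)
    (Continuous.intervalIntegrable (by fun_prop) _ _)]
  simp

variable (𝕜 : Type*) [RCLike 𝕜] [NormedAlgebra 𝕜 A]

/-- The Duhamel operator `z ↦ ∫₀¹ exp ((1 - s) • x) * z * exp (s • y) ds`, which sends `y - x` to
`exp y - exp x` and on the diagonal `x = y` is the derivative of `exp`. The scalars `𝕜` of the
linear map are independent of the real scalars of the integral, so that `𝕜` may be `ℝ` or `ℂ`. -/
noncomputable def duhamelOperator (x y : A) : A →L[𝕜] A :=
  ∫ s in (0 : ℝ)..1,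
    ContinuousLinearMap.mulLeftRight 𝕜 A (exp ((1 - s) • x)) (exp (s • y))

theorem duhamelOperator_apply (x y z : A) :
    duhamelOperator 𝕜 x y z = ∫ s in (0 : ℝ)..1, exp ((1 - s) • x) * z * exp (s • y) := by
  have hexp : Continuous (exp : A → A) := continuous_exp_of_real
  have hcont : Continuous fun s : ℝ =>
      ContinuousLinearMap.mulLeftRight 𝕜 A (exp ((1 - s) • x)) (exp (s • y)) := by
    fun_prop
  exact ContinuousLinearMap.intervalIntegral_apply (hcont.intervalIntegrable 0 1) z

theorem continuous_duhamelOperator :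
    Continuous fun p : A × A => duhamelOperator 𝕜 p.1 p.2 := by
  have hexp : Continuous (exp : A → A) := continuous_exp_of_real
  unfold duhamelOperator
  fun_prop

theorem hasStrictFDerivAt_exp_duhamelOperator (x : A) :
    HasStrictFDerivAt exp (duhamelOperator 𝕜 x x) x :=
  hasStrictFDerivAt_of_sub_eq_apply (Φ := fun p : A × A => duhamelOperator 𝕜 p.2 p.1)
    (fun x y => (exp_sub_exp_eq_integral y x).trans (duhamelOperator_apply 𝕜 y x (x - y)).symm)
    ((continuous_duhamelOperator 𝕜).comp continuous_swap).continuousAt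

variable {𝕜}

theorem duhamel_formula_general {X : 𝕜 → A} {X' : A} {t : 𝕜} (hX : HasDerivAt X X' t) :
    HasDerivAt (fun θ => exp (X θ))
      (∫ s in (0 : ℝ)..1, exp ((1 - s) • X t) * X' * exp (s • X t)) t := by
  rw [← duhamelOperator_apply 𝕜]
  exact (hasStrictFDerivAt_exp_duhamelOperator 𝕜 (X t)).hasFDerivAt.comp_hasDerivAt t hX

end BanachAlgebra

/-- **Duhamel's formula.** For `n × n` complex matrices `W` and `V`, the map
`θ ↦ exp (W + θ • V)` is differentiable at every `θ₀ ∈ ℝ`, with derivative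
`∫₀¹ exp ((1 - s) • H) * V * exp (s • H) ds` where `H = W + θ₀ • V`. -/
theorem duhamel_formula {n : ℕ} (W V : Matrix (Fin n) (Fin n) ℂ) (θ₀ : ℝ) :
    HasDerivAt (fun θ : ℝ => NormedSpace.exp (W + θ • V))
      (∫ s in (0:ℝ)..1,
        NormedSpace.exp ((1 - s) • (W + θ₀ • V)) * V * NormedSpace.exp (s • (W + θ₀ • V)))
      θ₀ := by
  let _ : NormedAlgebra ℝ (Matrix (Fin n) (Fin n) ℂ) := .restrictScalars ℝ ℂ _
  have hline : HasDerivAt (fun θ : ℝ => W + θ • V) V θ₀ := by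
    simpa only [one_smul] using ((hasDerivAt_id' θ₀).smul_const V).const_add W
  exact duhamel_formula_general hline
end

section
/- Let W and V be n×n complex matrices. For every θ₀ ∈ ℝ, the derivative at θ₀ of the map θ ↦ exp(W + θ·V) equals exp(H) · ∫₀¹ exp(−s·H) · V · exp(s·H) ds, where H = W + θ₀·V. -/
open scoped Matrix.Norms.L2Operator

/-!
By the fundamental theorem of calculus applied to `s ↦ exp ((1 - s) • X) * exp (s • Y)`, the
difference `exp Y - exp X` is the value at `Y - X` of an operator depending continuously on
`(X, Y)`. The value of that operator on the diagonal is therefore the derivative of `exp`, and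
the formula follows by the chain rule.
-/

section Hadamard

open Asymptotics Topology

variable {𝕜 E F : Type*} [NontriviallyNormedField 𝕜]
  [NormedAddCommGroup E] [NormedSpace 𝕜 E] [NormedAddCommGroup F] [NormedSpace 𝕜 F]

theorem hasStrictFDerivAt_of_continuousAt_of_sub_eq {f : E → F} {Φ : E × E → E →L[𝕜] F} {a : E}
    (hΦ : ContinuousAt Φ (a, a))
    (h_sub : ∀ᶠ p in 𝓝 (a, a), f p.1 - f p.2 = Φ p (p.1 - p.2)) :
    HasStrictFDerivAt f (Φ (a, a)) a := by
  rw [hasStrictFDerivAt_iff_isLittleO, isLittleO_iff]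
  intro c hc
  filter_upwards [Metric.continuousAt_iff'.mp hΦ c hc, h_sub] with p hp hp_sub
  rw [dist_eq_norm] at hp
  calc
    ‖f p.1 - f p.2 - Φ (a, a) (p.1 - p.2)‖
    _ = ‖(Φ p - Φ (a, a)) (p.1 - p.2)‖ := by rw [hp_sub, sub_apply]
    _ ≤ c * ‖p.1 - p.2‖ := ContinuousLinearMap.le_of_opNorm_le _ hp.le _

end Hadamard

section BanachAlgebra

open ContinuousLinearMap NormedSpace

variable {A : Type*} [NormedRing A] [NormedAlgebra ℝ A]

@[fun_prop]
theorem continuous_exp_of_normedAlgebra_real [CompleteSpace A] : Continuous (exp : A → A) :=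
  let _ : NormedAlgebra ℚ A := .restrictScalars ℚ ℝ A
  exp_continuous

theorem hasDerivAt_exp_smul_mul_exp_smul [CompleteSpace A] (X Y : A) (s : ℝ) :
    HasDerivAt (fun s : ℝ => exp ((1 - s) • X) * exp (s • Y))
      (exp ((1 - s) • X) * (Y - X) * exp (s • Y)) s := by
  have h_left : HasDerivAt (fun s : ℝ => exp ((1 - s) • X)) (-(exp ((1 - s) • X) * X)) s :=
    (hasDerivAt_exp_smul_const X (1 - s)).comp_const_sub 1 s
  have h_right := hasDerivAt_exp_smul_const' (𝕂 := ℝ) Y s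
  refine (h_left.mul h_right).congr_deriv ?_
  noncomm_ring

variable (𝕜 : Type*) [RCLike 𝕜] [NormedAlgebra 𝕜 A]

/-- The noncommutative divided difference of `exp` at `X` and `Y`: an operator carrying `Y - X` to
`exp Y - exp X` and depending continuously on `(X, Y)`. It is integrated in `A →L[𝕜] A` rather than
pointwise, so that the continuity is for the operator norm. -/
noncomputable def expDividedDifference (X Y : A) : A →L[𝕜] A :=
  ∫ s in (0 : ℝ)..1, mulLeftRight 𝕜 A (exp ((1 - s) • X)) (exp (s • Y))

variable [CompleteSpace A]

theorem continuous_expDividedDifference :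
    Continuous fun p : A × A => expDividedDifference 𝕜 p.1 p.2 := by
  refine intervalIntegral.continuous_parametric_intervalIntegral_of_continuous' ?_ 0 1
  simp only [Function.uncurry_def]
  fun_prop

theorem expDividedDifference_apply (X Y D : A) :
    expDividedDifference 𝕜 X Y D =
      ∫ s in (0 : ℝ)..1, exp ((1 - s) • X) * D * exp (s • Y) := by
  refine intervalIntegral_apply (Continuous.intervalIntegrable ?_ 0 1) D
  fun_prop

theorem expDividedDifference_apply_sub (X Y : A) :
    expDividedDifference 𝕜 X Y (Y - X) = exp Y - exp X := by
  rw [expDividedDifference_apply, intervalIntegral.integral_eq_sub_of_hasDerivAt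
    (fun s _ => hasDerivAt_exp_smul_mul_exp_smul X Y s)
    (Continuous.intervalIntegrable (by fun_prop) 0 1)]
  simp

theorem expDividedDifference_self_apply (H D : A) :
    expDividedDifference 𝕜 H H D =
      exp H * ∫ s in (0 : ℝ)..1, exp ((-s) • H) * D * exp (s • H) := by
  let _ : NormedAlgebra ℚ A := .restrictScalars ℚ ℝ A
  have h_split (s : ℝ) : exp ((1 - s) • H) = exp H * exp ((-s) • H) := by
    rw [← exp_add_of_commute ((Commute.refl H).smul_right (-s))]
    congr 1
    module
  calc
    expDividedDifference 𝕜 H H D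
    _ = ∫ s in (0 : ℝ)..1, exp H * (exp ((-s) • H) * D * exp (s • H)) := by
      simp only [expDividedDifference_apply, h_split, mul_assoc]
    _ = exp H * ∫ s in (0 : ℝ)..1, exp ((-s) • H) * D * exp (s • H) :=
      (mul ℝ A (exp H)).intervalIntegral_comp_comm
        (Continuous.intervalIntegrable (by fun_prop) 0 1)

theorem hasStrictFDerivAt_exp_expDividedDifference (H : A) :
    HasStrictFDerivAt (exp : A → A) (expDividedDifference 𝕜 H H) H := by
  have h_sub (p : A × A) :
      exp p.1 - exp p.2 = expDividedDifference 𝕜 p.1 p.2 (p.1 - p.2) := by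
    rw [← neg_sub p.2 p.1, map_neg, expDividedDifference_apply_sub, neg_sub]
  exact hasStrictFDerivAt_of_continuousAt_of_sub_eq
    (continuous_expDividedDifference 𝕜).continuousAt (.of_forall h_sub)

variable {𝕜}

theorem duhamel_formula'_general {γ : 𝕜 → A} {γ' : A} {θ₀ : 𝕜} (hγ : HasDerivAt γ γ' θ₀) :
    HasDerivAt (fun θ => exp (γ θ))
      (exp (γ θ₀) * ∫ s in (0 : ℝ)..1, exp ((-s) • γ θ₀) * γ' * exp (s • γ θ₀)) θ₀ := by
  rw [← expDividedDifference_self_apply 𝕜]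
  exact (hasStrictFDerivAt_exp_expDividedDifference 𝕜 (γ θ₀)).hasFDerivAt.comp_hasDerivAt θ₀ hγ

end BanachAlgebra

/-- For `n × n` complex matrices `W` and `V`, the derivative at `θ₀` of
`θ ↦ exp (W + θ • V)` equals `exp H * ∫₀¹ exp (−s • H) * V * exp (s • H) ds`,
where `H = W + θ₀ • V`. -/
theorem duhamel_formula' {n : ℕ} (W V : Matrix (Fin n) (Fin n) ℂ) (θ₀ : ℝ) :
    HasDerivAt (fun θ : ℝ => NormedSpace.exp (W + θ • V))
      (NormedSpace.exp (W + θ₀ • V) *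
        ∫ s in (0:ℝ)..1,
          NormedSpace.exp ((-s) • (W + θ₀ • V)) * V * NormedSpace.exp (s • (W + θ₀ • V)))
      θ₀ :=
  duhamel_formula'_general <| by
    simpa only [one_smul] using ((hasDerivAt_id' θ₀).smul_const V).const_add W
end

section
/- The log-partition function θ ↦ log Z(θ) is differentiable on ℝ^m, and its partial derivative with respect to θ_i at any θ equals the Gibbs expectation value Tr[ρ_θ H_i]. Consequently, for any density matrix η, the QBM objective F is differentiable with ∇F(θ)_i = Tr[ρ_θ H_i] − Tr[η H_i]. -/
open scoped Matrix.Norms.L2Operator ComplexOrder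

namespace QBM2

variable {n m : ℕ}

/-- The Hamiltonian `H(θ) = ∑ i, θ i • H i`. -/
noncomputable def ham (H : Fin m → Matrix (Fin n) (Fin n) ℂ) (θ : Fin m → ℝ) :
    Matrix (Fin n) (Fin n) ℂ :=
  ∑ i, θ i • H i

/-- The partition function `Z(θ) = Tr[exp H(θ)]` (its real part). -/
noncomputable def Z (H : Fin m → Matrix (Fin n) (Fin n) ℂ) (θ : Fin m → ℝ) : ℝ :=
  (NormedSpace.exp (ham H θ)).trace.re

/-- The Gibbs state `ρ_θ = exp H(θ) / Z(θ)`. -/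
noncomputable def gibbs (H : Fin m → Matrix (Fin n) (Fin n) ℂ) (θ : Fin m → ℝ) :
    Matrix (Fin n) (Fin n) ℂ :=
  (Z H θ : ℂ)⁻¹ • NormedSpace.exp (ham H θ)

/-- The log-partition function `θ ↦ log Z(θ)`. -/
noncomputable def logZ (H : Fin m → Matrix (Fin n) (Fin n) ℂ) (θ : Fin m → ℝ) : ℝ :=
  Real.log (Z H θ)

/-- The QBM objective `F(θ) = log Z(θ) − ∑ i, θ i * Tr[η H i]`. -/
noncomputable def F (H : Fin m → Matrix (Fin n) (Fin n) ℂ) (η : Matrix (Fin n) (Fin n) ℂ)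
    (θ : Fin m → ℝ) : ℝ :=
  logZ H θ - ∑ i, θ i * (η * H i).trace.re

/-!
A trace only sees the cyclic class of a product, so under a tracial functional `τ` the derivative
`∑ i, a ^ (k - 1 - i) * h * a ^ i` of the `k`-th power at `a` becomes `k * τ (a ^ (k - 1) * h)`, as
if `a` and `h` commuted. Summing the exponential series term by term, `τ ∘ exp` has derivative
`h ↦ τ (exp a * h)`. For the trace composed with the linear map `θ ↦ H(θ)` this is the gradient of
`Z`. Since `H(θ)` is Hermitian, `exp H(θ)` is positive definite, so `Z > 0` and the chain rule for
`log` divides the gradient by `Z`, turning `exp H(θ)` into the Gibbs state.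
-/

section TracialPow

open scoped Nat

variable {𝕜 𝔸 E : Type*} [NontriviallyNormedField 𝕜] [NormedRing 𝔸] [NormedAlgebra 𝕜 𝔸]
  [NormedAddCommGroup E] [NormedSpace 𝕜 E] {τ : 𝔸 →L[𝕜] E}

theorem hasFDerivAt_tracial_pow_succ (hτ : ∀ a b, τ (a * b) = τ (b * a)) (k : ℕ) (a : 𝔸) :
    HasFDerivAt (fun x => τ (x ^ (k + 1)))
      (((k + 1 : ℕ) : 𝕜) • τ ∘L ContinuousLinearMap.mul 𝕜 𝔸 (a ^ k)) a := by
  refine (τ.hasFDerivAt.comp a (hasFDerivAt_pow' (k + 1))).congr_fderiv ?_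
  ext h
  have cyclic : ∀ i ∈ Finset.range (k + 1), τ (a ^ (k - i) * h * a ^ i) = τ (a ^ k * h) := by
    intro i hi
    have hik : i + (k - i) = k := by grind
    rw [hτ, ← mul_assoc, ← pow_add, hik]
  simp [Finset.sum_congr rfl cyclic, ← Nat.cast_smul_eq_nsmul 𝕜]

theorem hasFDerivAt_tracial_expSeries_term [CharZero 𝕜]
    (hτ : ∀ a b, τ (a * b) = τ (b * a)) (k : ℕ) (a : 𝔸) :
    HasFDerivAt (fun x => τ (((k + 1)!⁻¹ : 𝕜) • x ^ (k + 1)))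
      (τ ∘L ContinuousLinearMap.mul 𝕜 𝔸 ((k !⁻¹ : 𝕜) • a ^ k)) a := by
  have hfact : ((k + 1)!⁻¹ : 𝕜) * ((k + 1 : ℕ) : 𝕜) = (k !⁻¹ : 𝕜) := by
    rw [Nat.factorial_succ]
    push_cast
    field_simp
  simp only [map_smul]
  refine ((hasFDerivAt_tracial_pow_succ hτ k a).const_smul ((k + 1)!⁻¹ : 𝕜)).congr_fderiv ?_
  rw [smul_smul, hfact, ContinuousLinearMap.comp_smul]

end TracialPow

section TracialExp

open scoped Nat

variable {𝕜 𝔸 E : Type*} [RCLike 𝕜] [NormedRing 𝔸] [NormedAlgebra 𝕜 𝔸]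
  [NormedAddCommGroup E] [NormedSpace 𝕜 E]

theorem norm_pow_mul_le {R : Type*} [SeminormedRing R] (k : ℕ) (a b : R) :
    ‖a ^ k * b‖ ≤ ‖a‖ ^ k * ‖b‖ := by
  induction k with
  | zero => simp
  | succ k ih =>
    calc ‖a ^ (k + 1) * b‖ = ‖a * (a ^ k * b)‖ := by rw [pow_succ', mul_assoc]
      _ ≤ ‖a‖ * (‖a‖ ^ k * ‖b‖) := (norm_mul_le _ _).trans (by gcongr)
      _ = ‖a‖ ^ (k + 1) * ‖b‖ := by ring

theorem norm_mul_expSeries_term_le (k : ℕ) (a : 𝔸) :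
    ‖ContinuousLinearMap.mul 𝕜 𝔸 ((k !⁻¹ : 𝕜) • a ^ k)‖ ≤ ‖a‖ ^ k / k ! := by
  refine ContinuousLinearMap.opNorm_le_bound _ (by positivity) fun b => ?_
  calc ‖((k !⁻¹ : 𝕜) • a ^ k) * b‖ = (k !⁻¹ : ℝ) * ‖a ^ k * b‖ := by
        rw [smul_mul_assoc, norm_smul, norm_inv, RCLike.norm_natCast]
    _ ≤ (k !⁻¹ : ℝ) * (‖a‖ ^ k * ‖b‖) := by gcongr; exact norm_pow_mul_le k a b
    _ = ‖a‖ ^ k / k ! * ‖b‖ := by ring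

theorem apply_exp_eq_add_tsum [CompleteSpace 𝔸] (τ : 𝔸 →L[𝕜] E) (a : 𝔸) :
    τ (NormedSpace.exp a) = τ 1 + ∑' k : ℕ, τ (((k + 1)!⁻¹ : 𝕜) • a ^ (k + 1)) := by
  have h := τ.hasSum (NormedSpace.exp_series_hasSum_exp' (𝕂 := 𝕜) a)
  rw [← h.tsum_eq, h.summable.tsum_eq_zero_add]
  simp

theorem tsum_comp_mul_expSeries_term [CompleteSpace 𝔸] (τ : 𝔸 →L[𝕜] E) (a : 𝔸) :
    ∑' k : ℕ, τ ∘L ContinuousLinearMap.mul 𝕜 𝔸 ((k !⁻¹ : 𝕜) • a ^ k) =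
      τ ∘L ContinuousLinearMap.mul 𝕜 𝔸 (NormedSpace.exp a) :=
  ((ContinuousLinearMap.compL 𝕜 𝔸 𝔸 E τ ∘L ContinuousLinearMap.mul 𝕜 𝔸).hasSum
    (NormedSpace.exp_series_hasSum_exp' a)).tsum_eq

theorem hasFDerivAt_tracial_exp [CompleteSpace 𝔸] [CompleteSpace E] {τ : 𝔸 →L[𝕜] E}
    (hτ : ∀ a b, τ (a * b) = τ (b * a)) (a : 𝔸) :
    HasFDerivAt (fun x => τ (NormedSpace.exp x))
      (τ ∘L ContinuousLinearMap.mul 𝕜 𝔸 (NormedSpace.exp a)) a := by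
  rw [← tsum_comp_mul_expSeries_term]
  simp only [apply_exp_eq_add_tsum]
  let +nondep : NormedSpace ℝ 𝔸 := .restrictScalars ℝ 𝕜 𝔸
  have ball_connected : IsPreconnected (Metric.ball (0 : 𝔸) (‖a‖ + 1)) :=
    (convex_ball 0 _).isPreconnected
  have norm_deriv_le : ∀ (k : ℕ), ∀ x ∈ Metric.ball (0 : 𝔸) (‖a‖ + 1),
      ‖τ ∘L ContinuousLinearMap.mul 𝕜 𝔸 ((k !⁻¹ : 𝕜) • x ^ k)‖ ≤
        ‖τ‖ * ((‖a‖ + 1) ^ k / k !) := by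
    intro k x hx
    have norm_x_le : ‖x‖ ≤ ‖a‖ + 1 := (mem_ball_zero_iff.mp hx).le
    calc ‖τ ∘L ContinuousLinearMap.mul 𝕜 𝔸 ((k !⁻¹ : 𝕜) • x ^ k)‖
        ≤ ‖τ‖ * ‖ContinuousLinearMap.mul 𝕜 𝔸 ((k !⁻¹ : 𝕜) • x ^ k)‖ :=
          ContinuousLinearMap.opNorm_comp_le _ _
      _ ≤ ‖τ‖ * (‖x‖ ^ k / k !) := by gcongr; exact norm_mul_expSeries_term_le k x
      _ ≤ ‖τ‖ * ((‖a‖ + 1) ^ k / k !) := by gcongr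
  exact (hasFDerivAt_tsum_of_isPreconnected
    ((Real.summable_pow_div_factorial (‖a‖ + 1)).mul_left ‖τ‖) Metric.isOpen_ball ball_connected
    (fun k x _ => hasFDerivAt_tracial_expSeries_term hτ k x) norm_deriv_le
    (Metric.mem_ball_self (by positivity)) (by simp [summable_zero])
    (by simp)).const_add (τ 1)

end TracialExp

theorem posDef_exp {ι 𝕜 : Type*} [Fintype ι] [DecidableEq ι] [RCLike 𝕜] {A : Matrix ι ι 𝕜}
    (hA : A.IsHermitian) : (NormedSpace.exp A).PosDef := by
  let B := (1 / 2 : ℝ) • A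
  have hB : B.IsHermitian := (IsSelfAdjoint.all (1 / 2 : ℝ)).smul hA
  have exp_eq : NormedSpace.exp A = (NormedSpace.exp B).conjTranspose * NormedSpace.exp B := by
    rw [hB.exp.eq, ← Matrix.exp_add_of_commute B B (Commute.refl B), ← add_smul, add_halves,
      one_smul]
  rw [exp_eq]
  exact Matrix.PosDef.conjTranspose_mul_self _
    (Matrix.mulVec_injective_of_isUnit (Matrix.isUnit_exp B))

theorem isHermitian_ham {H : Fin m → Matrix (Fin n) (Fin n) ℂ} (hH : ∀ i, (H i).IsHermitian)
    (θ : Fin m → ℝ) : (ham H θ).IsHermitian :=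
  isSelfAdjoint_sum _ fun i _ => (IsSelfAdjoint.all (θ i)).smul (hH i)

theorem Z_pos [NeZero n] {H : Fin m → Matrix (Fin n) (Fin n) ℂ} (hH : ∀ i, (H i).IsHermitian)
    (θ : Fin m → ℝ) : 0 < Z H θ :=
  (Complex.pos_iff.mp (posDef_exp (isHermitian_ham hH θ)).trace_pos).1

section Differential

variable {ι E : Type*} [Fintype ι] [NormedAddCommGroup E] [NormedSpace ℝ E]

/-- The differential, on `ι → ℝ`, of a function whose partial derivative in the `i`-th coordinate is
`v i`. It is used in place of `gradient`, which is not available for the sup norm of `ι → ℝ`. -/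
noncomputable def differentialOfPartials (v : ι → E) : (ι → ℝ) →L[ℝ] E :=
  LinearMap.toContinuousLinearMap (Fintype.linearCombination ℝ v)

theorem differentialOfPartials_apply (v : ι → E) (θ : ι → ℝ) :
    differentialOfPartials v θ = ∑ i, θ i • v i := rfl

theorem differentialOfPartials_single [DecidableEq ι] (v : ι → E) (i : ι) :
    differentialOfPartials v (Pi.single i 1) = v i :=
  (Fintype.linearCombination_apply_single ℝ v i 1).trans (one_smul ℝ (v i))

end Differential

/-- The functional `A ↦ Re Tr A`, bundled as a continuous real-linear map so that `Z` is `reTrace`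
of an exponential. -/
noncomputable def reTrace (ι : Type*) [Fintype ι] : Matrix ι ι ℂ →L[ℝ] ℝ :=
  LinearMap.toContinuousLinearMap (Complex.reLm ∘ₗ Matrix.traceLinearMap ι ℝ ℂ)

theorem reTrace_apply {ι : Type*} [Fintype ι] (A : Matrix ι ι ℂ) :
    reTrace ι A = A.trace.re := rfl

theorem reTrace_mul_comm {ι : Type*} [Fintype ι] (A B : Matrix ι ι ℂ) :
    reTrace ι (A * B) = reTrace ι (B * A) := by
  rw [reTrace_apply, reTrace_apply, Matrix.trace_mul_comm]

theorem hasFDerivAt_Z (H : Fin m → Matrix (Fin n) (Fin n) ℂ) (θ : Fin m → ℝ) :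
    HasFDerivAt (Z H)
      (differentialOfPartials fun i => (NormedSpace.exp (ham H θ) * H i).trace.re) θ := by
  refine ((hasFDerivAt_tracial_exp reTrace_mul_comm (ham H θ)).comp θ
    (differentialOfPartials H).hasFDerivAt).congr_fderiv ?_
  ext t
  simp [differentialOfPartials_apply, reTrace_apply]

theorem hasFDerivAt_logZ {H : Fin m → Matrix (Fin n) (Fin n) ℂ} {θ : Fin m → ℝ}
    (hZ : Z H θ ≠ 0) :
    HasFDerivAt (logZ H) (differentialOfPartials fun i => (gibbs H θ * H i).trace.re) θ := by
  refine ((hasFDerivAt_Z H θ).log hZ).congr_fderiv ?_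
  ext t
  simp [differentialOfPartials_apply, gibbs, Finset.mul_sum, mul_left_comm, ← Complex.ofReal_inv]

theorem hasFDerivAt_F {H : Fin m → Matrix (Fin n) (Fin n) ℂ} {θ : Fin m → ℝ}
    (hZ : Z H θ ≠ 0) (η : Matrix (Fin n) (Fin n) ℂ) :
    HasFDerivAt (F H η)
      (differentialOfPartials fun i => (gibbs H θ * H i).trace.re - (η * H i).trace.re) θ := by
  refine ((hasFDerivAt_logZ hZ).sub
    (differentialOfPartials fun i => (η * H i).trace.re).hasFDerivAt).congr_fderiv ?_
  ext t
  simp [differentialOfPartials_apply, mul_sub, Finset.sum_sub_distrib]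

theorem logZ_differentiable_and_gradient_general [NeZero n]
    {H : Fin m → Matrix (Fin n) (Fin n) ℂ} (hH : ∀ i, (H i).IsHermitian)
    (η : Matrix (Fin n) (Fin n) ℂ) :
    (Differentiable ℝ (logZ H) ∧
      ∀ (θ : Fin m → ℝ) (i : Fin m),
        fderiv ℝ (logZ H) θ (Pi.single i 1) = (gibbs H θ * H i).trace.re) ∧
    (Differentiable ℝ (F H η) ∧
      ∀ (θ : Fin m → ℝ) (i : Fin m),
        fderiv ℝ (F H η) θ (Pi.single i 1) =
          (gibbs H θ * H i).trace.re - (η * H i).trace.re) := by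
  have hasFDerivAt_log θ := hasFDerivAt_logZ (Z_pos hH θ).ne'
  have hasFDerivAt_obj θ := hasFDerivAt_F (Z_pos hH θ).ne' η
  refine ⟨⟨fun θ => (hasFDerivAt_log θ).differentiableAt, fun θ i => ?_⟩,
    ⟨fun θ => (hasFDerivAt_obj θ).differentiableAt, fun θ i => ?_⟩⟩
  · rw [(hasFDerivAt_log θ).fderiv, differentialOfPartials_single]
  · rw [(hasFDerivAt_obj θ).fderiv, differentialOfPartials_single]

/-- The log-partition function is differentiable with partial derivatives the Gibbs
expectation values `Tr[ρ_θ H i]`; consequently the QBM objective `F` is differentiable with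
`∇F(θ)_i = Tr[ρ_θ H i] − Tr[η H i]`. -/
theorem logZ_differentiable_and_gradient (H : Fin m → Matrix (Fin n) (Fin n) ℂ)
    (hH : ∀ i, (H i).IsHermitian)
    (η : Matrix (Fin n) (Fin n) ℂ) (hη : η.PosSemidef) (hηtr : η.trace = 1) :
    (Differentiable ℝ (logZ H) ∧
      ∀ (θ : Fin m → ℝ) (i : Fin m),
        fderiv ℝ (logZ H) θ (Pi.single i 1) = (gibbs H θ * H i).trace.re) ∧
    (Differentiable ℝ (F H η) ∧
      ∀ (θ : Fin m → ℝ) (i : Fin m),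
        fderiv ℝ (F H η) θ (Pi.single i 1) =
          (gibbs H θ * H i).trace.re - (η * H i).trace.re) := by
  have : NeZero n := ⟨by rintro rfl; simp [Matrix.trace] at hηtr⟩
  exact logZ_differentiable_and_gradient_general hH η

end QBM2
end

section
/- The log-partition function θ ↦ log Z(θ) is a convex function on ℝ^m. Consequently, for any density matrix η, the QBM objective F(θ) = log Z(θ) − ∑_{i=1}^m θ_i Tr[η H_i] is convex on ℝ^m, i.e. the quantum relative entropy S(η‖ρ_θ) is a convex function of the parameters θ. -/
/-!
Let `U` be unitary and let `d_U(X)` be the diagonal of the Hermitian matrix `X` in the orthonormal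
basis given by the columns of `U`. By Schur, `d_U(X)` is a doubly stochastic matrix applied to the
eigenvalues of `X`, so Jensen's inequality gives Peierls' inequality
`∑ i, exp (d_U(X) i) ≤ Tr (exp X)`, with equality when `U` diagonalizes `X`. Hence `log Tr (exp X)`
is the maximum over `U` of the log-sum-exp of `d_U(X)`; since `d_U` is linear and log-sum-exp is
convex, it is convex in `X`. Both functions of `θ` are obtained from it by composing with the linear
map `θ ↦ H(θ)` and subtracting a linear functional.
-/

open scoped Matrix.Norms.L2Operator ComplexOrder

namespace QBM3

variable {n m : ℕ}

/-- The Hamiltonian `H(θ) = ∑ i, θ i • H i`. -/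
noncomputable def ham (H : Fin m → Matrix (Fin n) (Fin n) ℂ) (θ : Fin m → ℝ) :
    Matrix (Fin n) (Fin n) ℂ :=
  ∑ i, θ i • H i

/-- The partition function `Z(θ) = Tr[exp H(θ)]` (its real part). -/
noncomputable def Z (H : Fin m → Matrix (Fin n) (Fin n) ℂ) (θ : Fin m → ℝ) : ℝ :=
  (NormedSpace.exp (ham H θ)).trace.re

/-- The Gibbs state `ρ_θ = exp H(θ) / Z(θ)`. -/
noncomputable def gibbs (H : Fin m → Matrix (Fin n) (Fin n) ℂ) (θ : Fin m → ℝ) :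
    Matrix (Fin n) (Fin n) ℂ :=
  (Z H θ : ℂ)⁻¹ • NormedSpace.exp (ham H θ)

/-- The log-partition function `θ ↦ log Z(θ)`. -/
noncomputable def logZ (H : Fin m → Matrix (Fin n) (Fin n) ℂ) (θ : Fin m → ℝ) : ℝ :=
  Real.log (Z H θ)

/-- The QBM objective `F(θ) = log Z(θ) − ∑ i, θ i * Tr[η H i]`. -/
noncomputable def F (H : Fin m → Matrix (Fin n) (Fin n) ℂ) (η : Matrix (Fin n) (Fin n) ℂ)
    (θ : Fin m → ℝ) : ℝ :=
  logZ H θ - ∑ i, θ i * (η * H i).trace.re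

open Matrix Unitary

variable {ι 𝕜 : Type*} [Fintype ι]

section LogSumExp

/-- The log-sum-exp function `x ↦ log ∑ i, exp (x i)`: the log-partition function of a diagonal
Hamiltonian with energy levels `x`. -/
noncomputable def logSumExp (x : ι → ℝ) : ℝ :=
  Real.log (∑ i, Real.exp (x i))

variable [Nonempty ι]

lemma sum_exp_pos (x : ι → ℝ) : 0 < ∑ i, Real.exp (x i) :=
  Finset.sum_pos (fun _ _ ↦ Real.exp_pos _) Finset.univ_nonempty

lemma logSumExp_le_iff {x : ι → ℝ} {c : ℝ} :
    logSumExp x ≤ c ↔ ∑ i, Real.exp (x i - c) ≤ 1 := by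
  rw [logSumExp, Real.log_le_iff_le_exp (sum_exp_pos x)]
  simp_rw [Real.exp_sub, ← Finset.sum_div]
  rw [div_le_one (Real.exp_pos c)]

lemma convexOn_logSumExp : ConvexOn ℝ Set.univ (logSumExp : (ι → ℝ) → ℝ) := by
  refine ⟨convex_univ, fun x _ y _ a b ha hb hab ↦ logSumExp_le_iff.2 ?_⟩
  have pointwise (i : ι) :
      Real.exp ((a • x + b • y) i - (a • logSumExp x + b • logSumExp y)) ≤
        a * Real.exp (x i - logSumExp x) + b * Real.exp (y i - logSumExp y) := by
    have recenter : (a • x + b • y) i - (a • logSumExp x + b • logSumExp y) =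
        a • (x i - logSumExp x) + b • (y i - logSumExp y) := by
      simp only [Pi.add_apply, Pi.smul_apply, smul_eq_mul]
      ring
    rw [recenter]
    exact convexOn_exp.2 (Set.mem_univ _) (Set.mem_univ _) ha hb hab
  calc ∑ i, Real.exp ((a • x + b • y) i - (a • logSumExp x + b • logSumExp y))
      ≤ ∑ i, (a * Real.exp (x i - logSumExp x) + b * Real.exp (y i - logSumExp y)) :=
        Finset.sum_le_sum fun i _ ↦ pointwise i
    _ = a * ∑ i, Real.exp (x i - logSumExp x) + b * ∑ i, Real.exp (y i - logSumExp y) := by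
        rw [Finset.sum_add_distrib, Finset.mul_sum, Finset.mul_sum]
    _ ≤ a * 1 + b * 1 := by
        gcongr
        · exact logSumExp_le_iff.1 le_rfl
        · exact logSumExp_le_iff.1 le_rfl
    _ = 1 := by rw [mul_one, mul_one, hab]

end LogSumExp

lemma nonempty_of_trace_ne_zero {R : Type*} [AddCommMonoid R] {X : Matrix ι ι R}
    (hX : X.trace ≠ 0) : Nonempty ι := by
  by_contra! h
  exact hX (trace_eq_zero_of_isEmpty X)

variable [DecidableEq ι]

lemma sum_map_mulVec_le_of_mem_doublyStochastic {R : Type*} [Field R] [LinearOrder R]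
    [IsStrictOrderedRing R] {M : Matrix ι ι R} (hM : M ∈ doublyStochastic R ι) {s : Set R}
    {f : R → R} (hf : ConvexOn R s f) {x : ι → R} (hx : ∀ i, x i ∈ s) :
    ∑ i, f ((M *ᵥ x) i) ≤ ∑ i, f (x i) := by
  calc ∑ i, f ((M *ᵥ x) i)
      ≤ ∑ i, (M *ᵥ (f ∘ x)) i := Finset.sum_le_sum fun i _ ↦
        hf.map_sum_le (fun _ _ ↦ nonneg_of_mem_doublyStochastic hM)
          (sum_row_of_mem_doublyStochastic hM i) (fun j _ ↦ hx j)
    _ = ∑ i, f (x i) := sum_mulVec_of_mem_doublyStochastic hM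

variable [RCLike 𝕜]

section ConjDiag

lemma sum_norm_sq_row_eq_one (U : unitaryGroup ι 𝕜) (i : ι) :
    ∑ j, ‖(U : Matrix ι ι 𝕜) i j‖ ^ 2 = 1 := by
  have h : ∑ j, (U : Matrix ι ι 𝕜) i j * star ((U : Matrix ι ι 𝕜) i j) = 1 :=
    (congr_fun₂ (coe_mul_star_self U) i i).trans (one_apply_eq i)
  simp only [RCLike.star_def, RCLike.mul_conj] at h
  exact_mod_cast h

lemma map_norm_sq_mem_doublyStochastic (U : unitaryGroup ι 𝕜) :
    (U : Matrix ι ι 𝕜).map (‖·‖ ^ 2) ∈ doublyStochastic ℝ ι := by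
  refine mem_doublyStochastic_iff_sum.2
    ⟨fun i j ↦ sq_nonneg _, sum_norm_sq_row_eq_one U, fun j ↦ ?_⟩
  simpa [star_apply] using sum_norm_sq_row_eq_one (star U) j

/-- The (real parts of the) diagonal entries of a matrix in the orthonormal basis formed by the
columns of the unitary `U`. -/
noncomputable def conjDiag (U : unitaryGroup ι 𝕜) : Matrix ι ι 𝕜 →ₗ[ℝ] ι → ℝ where
  toFun X i := RCLike.re (conjStarAlgAut 𝕜 _ (star U) X i i)
  map_add' X Y := by ext; simp only [map_add, Matrix.add_apply, Pi.add_apply]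
  map_smul' a X := by
    ext i
    simp [mul_assoc, RCLike.smul_re]

lemma conjDiag_apply (U : unitaryGroup ι 𝕜) (X : Matrix ι ι 𝕜) (i : ι) :
    conjDiag U X i = RCLike.re (conjStarAlgAut 𝕜 _ (star U) X i i) :=
  rfl

lemma conjDiag_eigenvectorUnitary {X : Matrix ι ι 𝕜} (hX : X.IsHermitian) :
    conjDiag hX.eigenvectorUnitary X = hX.eigenvalues := by
  ext i
  rw [conjDiag_apply, hX.conjStarAlgAut_star_eigenvectorUnitary, diagonal_apply_eq,
    Function.comp_apply, RCLike.ofReal_re]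

lemma conjDiag_conjStarAlgAut (U V : unitaryGroup ι 𝕜) (X : Matrix ι ι 𝕜) :
    conjDiag U (conjStarAlgAut 𝕜 _ V X) = conjDiag (star V * U) X := by
  ext i
  rw [conjDiag_apply, conjDiag_apply, ← conjStarAlgAut_mul_apply, star_mul, star_star]

lemma conjDiag_diagonal (U : unitaryGroup ι 𝕜) (x : ι → ℝ) :
    conjDiag U (diagonal (RCLike.ofReal ∘ x)) =
      ((star U : unitaryGroup ι 𝕜) : Matrix ι ι 𝕜).map (‖·‖ ^ 2) *ᵥ x := by
  ext i
  have entry (j : ι) : star ((U : Matrix ι ι 𝕜) j i) * (x j : 𝕜) * (U : Matrix ι ι 𝕜) j i =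
      ((‖(U : Matrix ι ι 𝕜) j i‖ ^ 2 * x j : ℝ) : 𝕜) := by
    rw [mul_right_comm, RCLike.star_def, RCLike.conj_mul]
    push_cast
    rfl
  rw [conjDiag_apply, conjStarAlgAut_star_apply, mul_apply, map_sum]
  simp only [mul_diagonal, star_apply, Function.comp_apply, entry, RCLike.ofReal_re]
  simp [mulVec, dotProduct, star_apply]

lemma conjDiag_eq_mulVec_eigenvalues {X : Matrix ι ι 𝕜} (hX : X.IsHermitian)
    (U : unitaryGroup ι 𝕜) :
    conjDiag U X =
      ((star U * hX.eigenvectorUnitary : unitaryGroup ι 𝕜) : Matrix ι ι 𝕜).map (‖·‖ ^ 2) *ᵥ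
        hX.eigenvalues := by
  conv_lhs => rw [hX.spectral_theorem, conjDiag_conjStarAlgAut, conjDiag_diagonal]
  rw [star_mul, star_star]

lemma sum_map_conjDiag_le_sum_map_eigenvalues {X : Matrix ι ι 𝕜} (hX : X.IsHermitian)
    (U : unitaryGroup ι 𝕜) {s : Set ℝ} {f : ℝ → ℝ} (hf : ConvexOn ℝ s f)
    (hs : ∀ i, hX.eigenvalues i ∈ s) :
    ∑ i, f (conjDiag U X i) ≤ ∑ i, f (hX.eigenvalues i) := by
  rw [conjDiag_eq_mulVec_eigenvalues hX]
  exact sum_map_mulVec_le_of_mem_doublyStochastic (map_norm_sq_mem_doublyStochastic _) hf hs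

end ConjDiag

section LogTraceExp

/-- The log-partition function `log Tr (exp X)` of a single Hamiltonian `X`. As in `Z`, the real
part of the trace is taken. -/
noncomputable def logTraceExp (X : Matrix ι ι 𝕜) : ℝ :=
  Real.log (RCLike.re (NormedSpace.exp X).trace)

lemma trace_exp_eq_sum_exp_eigenvalues {X : Matrix ι ι 𝕜} (hX : X.IsHermitian) :
    (NormedSpace.exp X).trace = ((∑ i, Real.exp (hX.eigenvalues i) : ℝ) : 𝕜) := by
  let U := hX.eigenvectorUnitary
  let D : Matrix ι ι 𝕜 := diagonal (RCLike.ofReal ∘ hX.eigenvalues)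
  calc (NormedSpace.exp X).trace
      = (U * NormedSpace.exp D * star (U : Matrix ι ι 𝕜)).trace := by
        conv_lhs => rw [hX.spectral_theorem, conjStarAlgAut_apply]
        exact congr_arg trace (exp_units_conj (toUnits U) D)
    _ = (NormedSpace.exp D).trace := by rw [trace_mul_cycle, coe_star_mul_self, one_mul]
    _ = ((∑ i, Real.exp (hX.eigenvalues i) : ℝ) : 𝕜) := by
        rw [exp_diagonal, trace_diagonal, RCLike.ofReal_sum]
        refine Finset.sum_congr rfl fun i _ ↦ ?_
        rw [Pi.coe_exp, Real.exp_eq_exp_ℝ]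
        exact (NormedSpace.algebraMap_exp_comm (hX.eigenvalues i)).symm

lemma logTraceExp_eq_logSumExp_eigenvalues {X : Matrix ι ι 𝕜} (hX : X.IsHermitian) :
    logTraceExp X = logSumExp hX.eigenvalues := by
  rw [logTraceExp, trace_exp_eq_sum_exp_eigenvalues hX, RCLike.ofReal_re, logSumExp]

variable [Nonempty ι]

lemma logSumExp_conjDiag_le_logTraceExp {X : Matrix ι ι 𝕜} (hX : X.IsHermitian)
    (U : unitaryGroup ι 𝕜) : logSumExp (conjDiag U X) ≤ logTraceExp X := by
  rw [logTraceExp_eq_logSumExp_eigenvalues hX]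
  exact Real.log_le_log (sum_exp_pos _)
    (sum_map_conjDiag_le_sum_map_eigenvalues hX U convexOn_exp fun _ ↦ Set.mem_univ _)

lemma convexOn_logTraceExp :
    ConvexOn ℝ {X : Matrix ι ι 𝕜 | X.IsHermitian} logTraceExp := by
  have hconvex : Convex ℝ {X : Matrix ι ι 𝕜 | X.IsHermitian} :=
    (selfAdjoint.submodule ℝ (Matrix ι ι 𝕜)).convex
  refine ⟨hconvex, fun X hX Y hY a b ha hb hab ↦ ?_⟩
  have hXY : (a • X + b • Y).IsHermitian := hconvex hX hY ha hb hab
  let U := hXY.eigenvectorUnitary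
  calc logTraceExp (a • X + b • Y)
      = logSumExp (conjDiag U (a • X + b • Y)) := by
        rw [logTraceExp_eq_logSumExp_eigenvalues hXY, conjDiag_eigenvectorUnitary]
    _ = logSumExp (a • conjDiag U X + b • conjDiag U Y) := by
        rw [map_add, map_smul, map_smul]
    _ ≤ a • logSumExp (conjDiag U X) + b • logSumExp (conjDiag U Y) :=
        convexOn_logSumExp.2 (Set.mem_univ _) (Set.mem_univ _) ha hb hab
    _ ≤ a • logTraceExp X + b • logTraceExp Y := by
        gcongr
        · exact logSumExp_conjDiag_le_logTraceExp hX U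
        · exact logSumExp_conjDiag_le_logTraceExp hY U

theorem logZ_convex_and_F_convex_general {E : Type*} [AddCommGroup E] [Module ℝ E]
    (A : E →ₗ[ℝ] Matrix ι ι 𝕜) (hA : ∀ x, (A x).IsHermitian) (c : E →ₗ[ℝ] ℝ) :
    ConvexOn ℝ Set.univ (fun x ↦ logTraceExp (A x)) ∧
      ConvexOn ℝ Set.univ (fun x ↦ logTraceExp (A x) - c x) := by
  have hlog : ConvexOn ℝ Set.univ (logTraceExp ∘ A) :=
    ((convexOn_logTraceExp (ι := ι) (𝕜 := 𝕜)).comp_linearMap A).subset (fun x _ ↦ hA x) convex_univ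
  exact ⟨hlog, hlog.sub (c.concaveOn convex_univ)⟩

end LogTraceExp

lemma isHermitian_ham {H : Fin m → Matrix (Fin n) (Fin n) ℂ} (hH : ∀ i, (H i).IsHermitian)
    (θ : Fin m → ℝ) : (ham H θ).IsHermitian :=
  sum_mem (S := selfAdjoint.submodule ℝ (Matrix (Fin n) (Fin n) ℂ)) fun i _ ↦
    Submodule.smul_mem _ (θ i) (hH i)

/-- The log-partition function is convex on `ℝ^m`; consequently, for any density matrix `η`,
the QBM objective `F` (i.e. the quantum relative entropy `S(η‖ρ_θ)` as a function of `θ`,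
up to a constant) is convex. -/
theorem logZ_convex_and_F_convex (H : Fin m → Matrix (Fin n) (Fin n) ℂ)
    (hH : ∀ i, (H i).IsHermitian)
    (η : Matrix (Fin n) (Fin n) ℂ) (hη : η.PosSemidef) (hηtr : η.trace = 1) :
    ConvexOn ℝ Set.univ (logZ H) ∧ ConvexOn ℝ Set.univ (F H η) := by
  have : Nonempty (Fin n) := nonempty_of_trace_ne_zero (hηtr ▸ one_ne_zero)
  -- `ham H` and the linear part of `F H η` are definitionally these linear combinations.
  exact logZ_convex_and_F_convex_general (Fintype.linearCombination ℝ H) (isHermitian_ham hH)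
    (Fintype.linearCombination ℝ fun i ↦ (η * H i).trace.re)

end QBM3
end

section
/- Assume the Hermitian matrices H_1,…,H_m are nonzero, traceless, and pairwise orthogonal with respect to the Hilbert–Schmidt inner product (Tr[H_i H_j] = 0 for i ≠ j). If two parameter vectors a, b ∈ ℝ^m satisfy Tr[ρ_a H_i] = Tr[ρ_b H_i] for all i ∈ {1,…,m}, then ρ_a = ρ_b as matrices and a = b. In other words, the map from parameters to Gibbs-state expectation values is injective, so the stationary point of the quantum relative entropy is unique (strict convexity). -/
open scoped Matrix.Norms.L2Operator ComplexOrder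

namespace QBM4

variable {n m : ℕ}

/-- The Hamiltonian `H(θ) = ∑ i, θ i • H i`. -/
noncomputable def ham (H : Fin m → Matrix (Fin n) (Fin n) ℂ) (θ : Fin m → ℝ) :
    Matrix (Fin n) (Fin n) ℂ :=
  ∑ i, θ i • H i

/-- The partition function `Z(θ) = Tr[exp H(θ)]` (its real part). -/
noncomputable def Z (H : Fin m → Matrix (Fin n) (Fin n) ℂ) (θ : Fin m → ℝ) : ℝ :=
  (NormedSpace.exp (ham H θ)).trace.re

/-- The Gibbs state `ρ_θ = exp H(θ) / Z(θ)`. -/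
noncomputable def gibbs (H : Fin m → Matrix (Fin n) (Fin n) ℂ) (θ : Fin m → ℝ) :
    Matrix (Fin n) (Fin n) ℂ :=
  (Z H θ : ℂ)⁻¹ • NormedSpace.exp (ham H θ)

/-- The log-partition function `θ ↦ log Z(θ)`. -/
noncomputable def logZ (H : Fin m → Matrix (Fin n) (Fin n) ℂ) (θ : Fin m → ℝ) : ℝ :=
  Real.log (Z H θ)

/-- The QBM objective `F(θ) = log Z(θ) − ∑ i, θ i * Tr[η H i]`. -/
noncomputable def F (H : Fin m → Matrix (Fin n) (Fin n) ℂ) (η : Matrix (Fin n) (Fin n) ℂ)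
    (θ : Fin m → ℝ) : ℝ :=
  logZ H θ - ∑ i, θ i * (η * H i).trace.re

/-!
Since `log ρ_θ = H(θ) - log Z(θ) • 1` and both Gibbs states have trace `1`, equal expectation values
give `Tr[(log ρ_a - log ρ_b) (ρ_a - ρ_b)] = 0`; this trace is the symmetrised relative entropy
`S(ρ_a‖ρ_b) + S(ρ_b‖ρ_a)`. In the eigenbases of `ρ_a` and `ρ_b`, with eigenvalues `p i` and `q j`,
it is the sum of `(log (p i) - log (q j)) * (p i - q j)`, each weighted by the squared overlap of
the two eigenvectors. Every term is nonnegative, hence zero, and so is its counterpart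
`(p i - q j) ^ 2` times the weight in `Tr[(ρ_a - ρ_b) ^ 2]`. Thus `ρ_a = ρ_b`, and comparing
logarithms shows that `H(a - b)` is a multiple of the identity, which forces `a = b` as soon as the
`H i` are linearly independent modulo the identity.
-/

section Overlap

variable {ι 𝕜 : Type*} [Fintype ι] [DecidableEq ι] [RCLike 𝕜] {A B : Matrix ι ι 𝕜}

/-- The unitary matrix `Uᴴ * V` of inner products between the eigenvectors of two Hermitian matrices
`A = U * D * Uᴴ` and `B = V * D' * Vᴴ`; it expresses traces of products of functions of `A` and
functions of `B` through their eigenvalues. -/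
noncomputable def eigenbasisOverlap (hA : A.IsHermitian) (hB : B.IsHermitian) : Matrix ι ι 𝕜 :=
  star (hA.eigenvectorUnitary : Matrix ι ι 𝕜) * hB.eigenvectorUnitary

theorem trace_cfc_mul_cfc (hA : A.IsHermitian) (hB : B.IsHermitian) (f g : ℝ → ℝ) :
    (cfc f A * cfc g B).trace =
      ((∑ i, ∑ j, f (hA.eigenvalues i) * g (hB.eigenvalues j) *
        ‖eigenbasisOverlap hA hB i j‖ ^ 2 : ℝ) : 𝕜) := by
  set W := eigenbasisOverlap hA hB with hW
  calc (cfc f A * cfc g B).trace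
    _ = (Matrix.diagonal (RCLike.ofReal ∘ f ∘ hA.eigenvalues) * W *
          (Matrix.diagonal (RCLike.ofReal ∘ g ∘ hB.eigenvalues) * star W)).trace := by
      simp only [hA.cfc_eq, hB.cfc_eq, Matrix.IsHermitian.cfc, Unitary.conjStarAlgAut_apply, hW,
        eigenbasisOverlap, star_mul, star_star, mul_assoc]
      rw [Matrix.trace_mul_comm]
      simp only [mul_assoc]
    _ = ∑ i, ∑ j, (f (hA.eigenvalues i) * W i j) * (g (hB.eigenvalues j) * star (W i j)) := by
      simp only [Matrix.trace, Matrix.diag_apply, Matrix.mul_apply (N := _ * _),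
        Matrix.diagonal_mul, Matrix.star_apply, Function.comp_apply]
    _ = _ := by
      simp only [RCLike.ofReal_sum, RCLike.ofReal_mul, RCLike.ofReal_pow, ← RCLike.mul_conj,
        RCLike.star_def, mul_mul_mul_comm]

theorem trace_cfc_sub_cfc_mul_cfc_sub_cfc (hA : A.IsHermitian) (hB : B.IsHermitian)
    (f g : ℝ → ℝ) :
    ((cfc f A - cfc f B) * (cfc g A - cfc g B)).trace =
      ((∑ i, ∑ j, (f (hA.eigenvalues i) - f (hB.eigenvalues j)) *
        (g (hA.eigenvalues i) - g (hB.eigenvalues j)) *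
          ‖eigenbasisOverlap hA hB i j‖ ^ 2 : ℝ) : 𝕜) := by
  -- The factor `1`, read as a function of the other matrix, turns the diagonal terms into double
  -- sums with the same weights.
  have hAA : cfc f A * cfc g A = cfc (fun x ↦ f x * g x) A * cfc (fun _ : ℝ ↦ (1 : ℝ)) B := by
    rw [cfc_const_one ℝ B hB.isSelfAdjoint, mul_one,
      cfc_mul f g A (A.finite_real_spectrum.continuousOn f)
        (A.finite_real_spectrum.continuousOn g)]
  have hBB : cfc f B * cfc g B = cfc (fun _ : ℝ ↦ (1 : ℝ)) A * cfc (fun x ↦ f x * g x) B := by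
    rw [cfc_const_one ℝ A hA.isSelfAdjoint, one_mul,
      cfc_mul f g B (B.finite_real_spectrum.continuousOn f)
        (B.finite_real_spectrum.continuousOn g)]
  rw [sub_mul, mul_sub, mul_sub, Matrix.trace_sub, Matrix.trace_sub, Matrix.trace_sub, hAA, hBB,
    Matrix.trace_mul_comm (cfc f B)]
  simp only [trace_cfc_mul_cfc hA hB, ← RCLike.ofReal_sub, ← Finset.sum_sub_distrib]
  refine congrArg _ <| Finset.sum_congr rfl fun i _ ↦ Finset.sum_congr rfl fun j _ ↦ ?_
  ring

theorem eq_of_re_trace_cfc_sub_cfc_mul_sub_eq_zero (hA : A.IsHermitian) (hB : B.IsHermitian)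
    {f : ℝ → ℝ} {s : Set ℝ} (hf : StrictMonoOn f s) (hAs : spectrum ℝ A ⊆ s)
    (hBs : spectrum ℝ B ⊆ s)
    (h : RCLike.re ((cfc f A - cfc f B) * (A - B)).trace = 0) : A = B := by
  set α := hA.eigenvalues
  set β := hB.eigenvalues
  have hα i : α i ∈ s := hAs (hA.eigenvalues_mem_spectrum_real i)
  have hβ j : β j ∈ s := hBs (hB.eigenvalues_mem_spectrum_real j)
  have trace_mul_sub (g : ℝ → ℝ) : ((cfc g A - cfc g B) * (A - B)).trace =
      ((∑ i, ∑ j, (g (α i) - g (β j)) * (α i - β j) *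
        ‖eigenbasisOverlap hA hB i j‖ ^ 2 : ℝ) : 𝕜) := by
    simpa only [cfc_id ℝ A hA.isSelfAdjoint, cfc_id ℝ B hB.isSelfAdjoint, id]
      using trace_cfc_sub_cfc_mul_cfc_sub_cfc hA hB g id
  have hnonneg i j :
      0 ≤ (f (α i) - f (β j)) * (α i - β j) * ‖eigenbasisOverlap hA hB i j‖ ^ 2 :=
    mul_nonneg ((monovaryOn_id_iff.2 hf.monotoneOn).sub_mul_sub_nonneg (hβ j) (hα i))
      (sq_nonneg _)
  have hzero i j :
      (f (α i) - f (β j)) * (α i - β j) * ‖eigenbasisOverlap hA hB i j‖ ^ 2 = 0 := by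
    rw [trace_mul_sub, RCLike.ofReal_re, ← Fintype.sum_prod_type',
      Fintype.sum_eq_zero_iff_of_nonneg fun p ↦ hnonneg p.1 p.2] at h
    exact congrFun h (i, j)
  have hsub i j : (α i - β j) * (α i - β j) * ‖eigenbasisOverlap hA hB i j‖ ^ 2 = 0 := by
    simpa only [mul_eq_zero, sub_eq_zero, hf.injOn.eq_iff (hα i) (hβ j), or_self] using hzero i j
  have htrace : ((A - B) * (A - B)).trace = 0 := by
    have hid := trace_mul_sub id
    simp only [cfc_id ℝ A hA.isSelfAdjoint, cfc_id ℝ B hB.isSelfAdjoint, id, hsub,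
      Finset.sum_const_zero, RCLike.ofReal_zero] at hid
    exact hid
  rw [← sub_eq_zero, ← Matrix.trace_conjTranspose_mul_self_eq_zero_iff, (hA.sub hB).eq, htrace]

end Overlap

open scoped Matrix in
theorem linearIndependent_mkQ_span_one_of_trace_eq_zero {κ ι 𝕜 : Type*} [Fintype ι]
    [DecidableEq ι] [RCLike 𝕜] {H : κ → Matrix ι ι 𝕜} (hne : ∀ i, H i ≠ 0)
    (htr : ∀ i, (H i).trace = 0) (horth : Pairwise fun i j ↦ ((H i)ᴴ * H j).trace = 0) :
    LinearIndependent ℝ ((Submodule.span ℝ {(1 : Matrix ι ι 𝕜)}).mkQ ∘ H) := by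
  rw [linearIndependent_iff']
  intro t c hc i hi
  obtain ⟨r, hr⟩ : ∃ r : ℝ, r • (1 : Matrix ι ι 𝕜) = ∑ j ∈ t, c j • H j := by
    rw [← Submodule.mem_span_singleton, ← Submodule.ker_mkQ (Submodule.span ℝ _),
      LinearMap.mem_ker, map_sum]
    simpa only [map_smul, Function.comp_apply] using hc
  have hself : c i • ((H i)ᴴ * H i).trace = 0 :=
    calc c i • ((H i)ᴴ * H i).trace
      _ = ((H i)ᴴ * ∑ j ∈ t, c j • H j).trace := by
        rw [Finset.mul_sum, Matrix.trace_sum, Finset.sum_eq_single_of_mem i hi]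
        · rw [Matrix.mul_smul, Matrix.trace_smul]
        · intro j _ hj
          rw [Matrix.mul_smul, Matrix.trace_smul, horth hj.symm, smul_zero]
      _ = r • star (H i).trace := by
        rw [← hr, Matrix.mul_smul, mul_one, Matrix.trace_smul, Matrix.trace_conjTranspose]
      _ = 0 := by rw [htr, star_zero, smul_zero]
  exact (smul_eq_zero.1 hself).resolve_right
    (Matrix.trace_conjTranspose_mul_self_eq_zero_iff.not.2 (hne i))

open scoped MatrixOrder in
theorem posDef_exp {ι : Type*} [Fintype ι] [DecidableEq ι] {A : Matrix ι ι ℂ}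
    (hA : A.IsHermitian) : (NormedSpace.exp A).PosDef :=
  (Matrix.nonneg_iff_posSemidef.1 hA.isSelfAdjoint.exp_nonneg).posDef_iff_isUnit.2
    (Matrix.isUnit_exp A)

section Gibbs

variable {H : Fin m → Matrix (Fin n) (Fin n) ℂ}

theorem isHermitian_ham (hHerm : ∀ i, (H i).IsHermitian) (θ : Fin m → ℝ) :
    (ham H θ).IsHermitian :=
  isSelfAdjoint_sum _ fun i _ ↦ (IsSelfAdjoint.all (θ i)).smul (hHerm i).isSelfAdjoint

theorem ofReal_Z (hHerm : ∀ i, (H i).IsHermitian) (θ : Fin m → ℝ) :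
    (Z H θ : ℂ) = (NormedSpace.exp (ham H θ)).trace :=
  Complex.conj_eq_iff_re.1 <| by
    rw [starRingEnd_apply, ← Matrix.trace_conjTranspose, (isHermitian_ham hHerm θ).exp.eq]

theorem Z_pos [Nonempty (Fin n)] (hHerm : ∀ i, (H i).IsHermitian) (θ : Fin m → ℝ) :
    0 < Z H θ :=
  (Complex.pos_iff.1 (posDef_exp (isHermitian_ham hHerm θ)).trace_pos).1

theorem gibbs_eq_real_smul (θ : Fin m → ℝ) :
    gibbs H θ = (Z H θ)⁻¹ • NormedSpace.exp (ham H θ) := by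
  rw [gibbs, ← Complex.ofReal_inv, Complex.coe_smul]

theorem posDef_gibbs [Nonempty (Fin n)] (hHerm : ∀ i, (H i).IsHermitian) (θ : Fin m → ℝ) :
    (gibbs H θ).PosDef := by
  rw [gibbs_eq_real_smul]
  exact (posDef_exp (isHermitian_ham hHerm θ)).smul (inv_pos.2 (Z_pos hHerm θ))

theorem trace_gibbs [Nonempty (Fin n)] (hHerm : ∀ i, (H i).IsHermitian) (θ : Fin m → ℝ) :
    (gibbs H θ).trace = 1 := by
  rw [gibbs, Matrix.trace_smul, ← ofReal_Z hHerm, smul_eq_mul,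
    inv_mul_cancel₀ (Complex.ofReal_ne_zero.2 (Z_pos hHerm θ).ne')]

open scoped MatrixOrder in
theorem log_gibbs [Nonempty (Fin n)] (hHerm : ∀ i, (H i).IsHermitian) (θ : Fin m → ℝ) :
    CFC.log (gibbs H θ) = ham H θ - logZ H θ • 1 := by
  have hham := isHermitian_ham hHerm θ
  rw [gibbs_eq_real_smul, CFC.log_smul' _ (inv_pos.2 (Z_pos hHerm θ))
    (posDef_exp hham).isStrictlyPositive, CFC.log_exp _ hham, Real.log_inv,
    Algebra.algebraMap_eq_smul_one, neg_smul, neg_add_eq_sub, logZ]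

theorem ham_sub (a b : Fin m → ℝ) : ham H (a - b) = ham H a - ham H b := by
  simp [ham, sub_smul]

theorem re_trace_mul_ham (X : Matrix (Fin n) (Fin n) ℂ) (θ : Fin m → ℝ) :
    (X * ham H θ).trace.re = ∑ i, θ i * (X * H i).trace.re := by
  simp [ham, Finset.mul_sum, Matrix.trace_sum]

theorem gibbs_eq_of_expectations_eq (hHerm : ∀ i, (H i).IsHermitian) {a b : Fin m → ℝ}
    (hexp : ∀ i, (gibbs H a * H i).trace.re = (gibbs H b * H i).trace.re) :
    gibbs H a = gibbs H b := by
  cases isEmpty_or_nonempty (Fin n)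
  · exact Subsingleton.elim _ _
  have hspec θ : spectrum ℝ (gibbs H θ) ⊆ Set.Ioi 0 := by
    rw [(posDef_gibbs hHerm θ).1.spectrum_real_eq_range_eigenvalues]
    exact Set.range_subset_iff.2 (posDef_gibbs hHerm θ).eigenvalues_pos
  have hham θ : ((gibbs H a - gibbs H b) * ham H θ).trace.re = 0 := by
    simp [re_trace_mul_ham, sub_mul, Matrix.trace_sub, hexp]
  have hlog : ((CFC.log (gibbs H a) - CFC.log (gibbs H b)) *
      (gibbs H a - gibbs H b)).trace.re = 0 := by
    rw [Matrix.trace_mul_comm, log_gibbs hHerm, log_gibbs hHerm]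
    simp [mul_sub, hham, Matrix.trace_sub, trace_gibbs hHerm]
  exact eq_of_re_trace_cfc_sub_cfc_mul_sub_eq_zero (posDef_gibbs hHerm a).1
    (posDef_gibbs hHerm b).1 Real.strictMonoOn_log (hspec a) (hspec b) hlog

theorem ham_sub_mem_span_one_of_gibbs_eq (hHerm : ∀ i, (H i).IsHermitian) {a b : Fin m → ℝ}
    (h : gibbs H a = gibbs H b) :
    ham H (a - b) ∈ Submodule.span ℝ {(1 : Matrix (Fin n) (Fin n) ℂ)} := by
  cases isEmpty_or_nonempty (Fin n)
  · simp [Subsingleton.elim (ham H (a - b)) 0]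
  have hlog : ham H a - logZ H a • 1 = ham H b - logZ H b • 1 := by
    rw [← log_gibbs hHerm, ← log_gibbs hHerm, h]
  refine Submodule.mem_span_singleton.2 ⟨logZ H a - logZ H b, ?_⟩
  rw [ham_sub, sub_smul, sub_eq_sub_iff_sub_eq_sub.1 hlog]

theorem gibbs_expectations_injective_general (hHerm : ∀ i, (H i).IsHermitian)
    (hindep : LinearIndependent ℝ
      ((Submodule.span ℝ {(1 : Matrix (Fin n) (Fin n) ℂ)}).mkQ ∘ H))
    (a b : Fin m → ℝ)
    (hexp : ∀ i, (gibbs H a * H i).trace.re = (gibbs H b * H i).trace.re) :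
    gibbs H a = gibbs H b ∧ a = b := by
  have hgibbs := gibbs_eq_of_expectations_eq hHerm hexp
  refine ⟨hgibbs, sub_eq_zero.1 <| funext <| Fintype.linearIndependent_iff.1 hindep _ ?_⟩
  have hham := ham_sub_mem_span_one_of_gibbs_eq hHerm hgibbs
  rw [← Submodule.Quotient.mk_eq_zero, ← Submodule.mkQ_apply, ham, map_sum] at hham
  simpa using hham

end Gibbs

/-- If the `H i` are nonzero, traceless, Hermitian, and pairwise orthogonal in the
Hilbert–Schmidt inner product, then equal Gibbs expectation values imply equal Gibbs
states and equal parameters: the parameters-to-expectations map is injective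
(uniqueness of the stationary point of the relative entropy / strict convexity). -/
theorem gibbs_expectations_injective (H : Fin m → Matrix (Fin n) (Fin n) ℂ)
    (hHerm : ∀ i, (H i).IsHermitian) (hne : ∀ i, H i ≠ 0)
    (htraceless : ∀ i, (H i).trace = 0)
    (horth : ∀ i j, i ≠ j → ((H i) * (H j)).trace = 0)
    (a b : Fin m → ℝ)
    (hexp : ∀ i, (gibbs H a * H i).trace.re = (gibbs H b * H i).trace.re) :
    gibbs H a = gibbs H b ∧ a = b := by
  have hindep := linearIndependent_mkQ_span_one_of_trace_eq_zero hne htraceless fun i j hij ↦ by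
    simpa only [(hHerm i).eq] using horth i j hij
  exact gibbs_expectations_injective_general hHerm hindep a b hexp

end QBM4
end

section
/- For all θ ∈ ℝ^m and all indices j, k ∈ {1,…,m}, the second partial derivative ∂²(log Z)/∂θ_j ∂θ_k exists at θ and satisfies |∂²(log Z(θ))/∂θ_j ∂θ_k| ≤ 2‖H_j‖·‖H_k‖, where ‖·‖ is the operator (spectral) norm. The same bound holds for the second partial derivatives of the QBM objective F for any density matrix η, since F differs from log Z by a linear function of θ. -/
open scoped Matrix.Norms.L2Operator ComplexOrder

namespace QBM5

variable {n m : ℕ}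

/-- The Hamiltonian `H(θ) = ∑ i, θ i • H i`. -/
noncomputable def ham (H : Fin m → Matrix (Fin n) (Fin n) ℂ) (θ : Fin m → ℝ) :
    Matrix (Fin n) (Fin n) ℂ :=
  ∑ i, θ i • H i

/-- The partition function `Z(θ) = Tr[exp H(θ)]` (its real part). -/
noncomputable def Z (H : Fin m → Matrix (Fin n) (Fin n) ℂ) (θ : Fin m → ℝ) : ℝ :=
  (NormedSpace.exp (ham H θ)).trace.re

/-- The Gibbs state `ρ_θ = exp H(θ) / Z(θ)`. -/
noncomputable def gibbs (H : Fin m → Matrix (Fin n) (Fin n) ℂ) (θ : Fin m → ℝ) :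
    Matrix (Fin n) (Fin n) ℂ :=
  (Z H θ : ℂ)⁻¹ • NormedSpace.exp (ham H θ)

/-- The log-partition function `θ ↦ log Z(θ)`. -/
noncomputable def logZ (H : Fin m → Matrix (Fin n) (Fin n) ℂ) (θ : Fin m → ℝ) : ℝ :=
  Real.log (Z H θ)

/-- The QBM objective `F(θ) = log Z(θ) − ∑ i, θ i * Tr[η H i]`. -/
noncomputable def F (H : Fin m → Matrix (Fin n) (Fin n) ℂ) (η : Matrix (Fin n) (Fin n) ℂ)
    (θ : Fin m → ℝ) : ℝ :=
  logZ H θ - ∑ i, θ i * (η * H i).trace.re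

/-!
The directional derivative of `log Tr[exp X]` along `B` is the Gibbs expectation `⟨B⟩`, and by
Duhamel's formula `D exp(X)[B] = ∫₀¹ exp(uX) B exp((1-u)X) du` the derivative of `⟨A⟩` along `B` is
`∫₀¹ Tr[A exp(uX) B exp((1-u)X)] du / Tr[exp X] - ⟨A⟩⟨B⟩`. Each of the two terms is at most
`‖A‖ ‖B‖`. Indeed, in an eigenbasis of `X` with eigenvalues `x_a`, the integrand is at most
`∑_{a,b} |A_ba| |B_ab| exp(u x_a) exp((1-u) x_b)`. By convexity the product of exponentials is at
most `u exp(x_a) + (1-u) exp(x_b)`, and by Cauchy–Schwarz the remaining sum over one index is at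
most `‖A‖ ‖B‖`, since the rows and columns of a matrix have `ℓ²` norm at most its operator norm.
-/

section Duhamel

variable {𝔸 : Type*} [NormedRing 𝔸] [NormedAlgebra ℝ 𝔸] [CompleteSpace 𝔸]

lemma differentiable_exp : Differentiable ℝ (NormedSpace.exp : 𝔸 → 𝔸) := fun x =>
  (NormedSpace.exp_analytic x).differentiableAt

@[fun_prop]
lemma continuous_exp : Continuous (NormedSpace.exp : 𝔸 → 𝔸) := differentiable_exp.continuous

lemma exp_sub_exp_eq_integral (x y : 𝔸) :
    NormedSpace.exp y - NormedSpace.exp x =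
      ∫ u in (0 : ℝ)..1,
        NormedSpace.exp (u • y) * (y - x) * NormedSpace.exp ((1 - u) • x) := by
  have hderiv (u : ℝ) : HasDerivAt
      (fun u : ℝ => NormedSpace.exp (u • y) * NormedSpace.exp ((1 - u) • x))
      (NormedSpace.exp (u • y) * (y - x) * NormedSpace.exp ((1 - u) • x)) u := by
    have hy := hasDerivAt_exp_smul_const y u
    have hx := (hasDerivAt_exp_smul_const' x (1 - u)).scomp u ((hasDerivAt_id u).const_sub 1)
    refine (hy.fun_mul hx).congr_deriv ?_
    rw [Function.comp_apply, neg_smul, one_smul]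
    noncomm_ring
  have hcont : Continuous fun u : ℝ =>
      NormedSpace.exp (u • y) * (y - x) * NormedSpace.exp ((1 - u) • x) := by fun_prop
  rw [intervalIntegral.integral_eq_sub_of_hasDerivAt (fun u _ => hderiv u)
    (hcont.intervalIntegrable 0 1)]
  simp

lemma hasLineDerivAt_exp (x b : 𝔸) :
    HasLineDerivAt ℝ NormedSpace.exp
      (∫ u in (0 : ℝ)..1, NormedSpace.exp (u • x) * b * NormedSpace.exp ((1 - u) • x)) x b := by
  let G (t : ℝ) : 𝔸 := ∫ u in (0 : ℝ)..1,
    NormedSpace.exp (u • (x + t • b)) * b * NormedSpace.exp ((1 - u) • x)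
  have hG : Continuous G :=
    intervalIntegral.continuous_parametric_intervalIntegral_of_continuous' (by fun_prop) 0 1
  have hslope (t : ℝ) : NormedSpace.exp (x + t • b) - NormedSpace.exp x = t • G t := by
    simp only [G, exp_sub_exp_eq_integral x, add_sub_cancel_left, mul_smul_comm, smul_mul_assoc,
      intervalIntegral.integral_smul]
  have hlim : Filter.Tendsto G (nhdsWithin 0 {0}ᶜ) (nhds (G 0)) :=
    hG.continuousAt.tendsto.mono_left nhdsWithin_le_nhds
  simp only [G, zero_smul, add_zero] at hlim
  refine hasDerivAt_iff_tendsto_slope.2 (hlim.congr' ?_)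
  filter_upwards [self_mem_nhdsWithin] with t ht
  rw [slope_def_module, zero_smul, add_zero, hslope, sub_zero, inv_smul_smul₀ ht]

lemma fderiv_exp_apply (x b : 𝔸) :
    fderiv ℝ NormedSpace.exp x b =
      ∫ u in (0 : ℝ)..1, NormedSpace.exp (u • x) * b * NormedSpace.exp ((1 - u) • x) := by
  rw [← (differentiable_exp x).lineDeriv_eq_fderiv, (hasLineDerivAt_exp x b).lineDeriv]

end Duhamel

section EntryBounds

variable {ι κ 𝕜 : Type*} [Fintype ι] [Fintype κ] [RCLike 𝕜]

lemma sum_norm_sq_col_le [DecidableEq ι] (P : Matrix κ ι 𝕜) (a : ι) :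
    ∑ b, ‖P b a‖ ^ 2 ≤ ‖P‖ ^ 2 := by
  have h := P.l2_opNorm_mulVec (EuclideanSpace.single a (1 : 𝕜))
  rw [PiLp.norm_single, norm_one, mul_one] at h
  simpa [EuclideanSpace.norm_sq_eq] using pow_le_pow_left₀ (norm_nonneg _) h 2

lemma sum_norm_sq_row_le [DecidableEq κ] (P : Matrix ι κ 𝕜) (a : ι) :
    ∑ b, ‖P a b‖ ^ 2 ≤ ‖P‖ ^ 2 := by
  classical
  simpa [Matrix.l2_opNorm_conjTranspose] using sum_norm_sq_col_le P.conjTranspose a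

lemma sum_norm_mul_norm_le [DecidableEq ι] [DecidableEq κ] (P : Matrix κ ι 𝕜) (Q : Matrix ι κ 𝕜)
    (a : ι) :
    ∑ b, ‖P b a‖ * ‖Q a b‖ ≤ ‖P‖ * ‖Q‖ := by
  refine le_of_sq_le_sq ?_ (by positivity)
  calc (∑ b, ‖P b a‖ * ‖Q a b‖) ^ 2
      ≤ (∑ b, ‖P b a‖ ^ 2) * ∑ b, ‖Q a b‖ ^ 2 := Finset.sum_mul_sq_le_sq_mul_sq _ _ _
    _ ≤ ‖P‖ ^ 2 * ‖Q‖ ^ 2 := by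
        gcongr
        · exact sum_norm_sq_col_le P a
        · exact sum_norm_sq_row_le Q a
    _ = (‖P‖ * ‖Q‖) ^ 2 := (mul_pow _ _ 2).symm

lemma exp_mul_exp_le_convex_combination (x y : ℝ) {u : ℝ} (hu : u ∈ Set.Icc (0 : ℝ) 1) :
    Real.exp (u * x) * Real.exp ((1 - u) * y) ≤ u * Real.exp x + (1 - u) * Real.exp y := by
  rw [← Real.exp_add]
  exact convexOn_exp.2 (Set.mem_univ x) (Set.mem_univ y) hu.1 (sub_nonneg.2 hu.2)
    (add_sub_cancel u 1)

lemma norm_trace_mul_diagonal_mul_diagonal_le [DecidableEq ι] (P Q : Matrix ι ι 𝕜) (l : ι → ℝ)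
    {u : ℝ} (hu : u ∈ Set.Icc (0 : ℝ) 1) :
    ‖(P * (Matrix.diagonal (fun a => (Real.exp (u * l a) : 𝕜)) * Q *
        Matrix.diagonal (fun b => (Real.exp ((1 - u) * l b) : 𝕜)))).trace‖ ≤
      ‖P‖ * ‖Q‖ * ∑ a, Real.exp (l a) := by
  have hu₀ : 0 ≤ u := hu.1
  have hu₁ : 0 ≤ 1 - u := sub_nonneg.2 hu.2
  calc _ = ‖∑ b, ∑ a, P b a * ((Real.exp (u * l a) : 𝕜) * Q a b *
          (Real.exp ((1 - u) * l b) : 𝕜))‖ := by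
        simp only [Matrix.trace, Matrix.diag, Matrix.mul_apply (M := P), Matrix.mul_diagonal,
          Matrix.diagonal_mul]
    _ ≤ ∑ b, ∑ a, ‖P b a * ((Real.exp (u * l a) : 𝕜) * Q a b *
          (Real.exp ((1 - u) * l b) : 𝕜))‖ :=
        norm_sum_le_of_le _ fun b _ => norm_sum_le _ _
    _ = ∑ b, ∑ a, ‖P b a‖ * ‖Q a b‖ * (Real.exp (u * l a) * Real.exp ((1 - u) * l b)) := by
        simp only [norm_mul, RCLike.norm_ofReal, Real.abs_exp]
        exact Finset.sum_congr rfl fun b _ => Finset.sum_congr rfl fun a _ => by ring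
    _ ≤ ∑ b, ∑ a, ‖P b a‖ * ‖Q a b‖ * (u * Real.exp (l a) + (1 - u) * Real.exp (l b)) := by
        gcongr with b _ a _
        exact exp_mul_exp_le_convex_combination _ _ hu
    _ = u * ∑ a, Real.exp (l a) * ∑ b, ‖P b a‖ * ‖Q a b‖ +
          (1 - u) * ∑ b, Real.exp (l b) * ∑ a, ‖Q a b‖ * ‖P b a‖ := by
        simp only [mul_add, Finset.sum_add_distrib, Finset.mul_sum]
        congr 1
        · rw [Finset.sum_comm]
          exact Finset.sum_congr rfl fun a _ => Finset.sum_congr rfl fun b _ => by ring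
        · exact Finset.sum_congr rfl fun b _ => Finset.sum_congr rfl fun a _ => by ring
    _ ≤ u * ∑ a, Real.exp (l a) * (‖P‖ * ‖Q‖) + (1 - u) * ∑ b, Real.exp (l b) * (‖Q‖ * ‖P‖) := by
        gcongr with a _ b _
        · exact sum_norm_mul_norm_le P Q a
        · exact sum_norm_mul_norm_le Q P b
    _ = ‖P‖ * ‖Q‖ * ∑ a, Real.exp (l a) := by
        rw [← Finset.sum_mul, ← Finset.sum_mul]
        ring

end EntryBounds

section GibbsExpectation

variable {ι : Type*} [Fintype ι] [DecidableEq ι] {X : Matrix ι ι ℂ}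

lemma trace_conjStarAlgAut (U : Matrix.unitaryGroup ι ℂ) (M : Matrix ι ι ℂ) :
    (Unitary.conjStarAlgAut ℂ (Matrix ι ι ℂ) U M).trace = M.trace := by
  rw [Unitary.conjStarAlgAut_apply, Matrix.trace_mul_comm, ← mul_assoc,
    Unitary.coe_star_mul_self, one_mul]

lemma exp_smul_eq_conjStarAlgAut (hX : X.IsHermitian) (t : ℝ) :
    NormedSpace.exp (t • X) = Unitary.conjStarAlgAut ℂ (Matrix ι ι ℂ) hX.eigenvectorUnitary
      (Matrix.diagonal fun a => (Real.exp (t * hX.eigenvalues a) : ℂ)) := by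
  let : NormedAlgebra ℚ (Matrix ι ι ℂ) := .restrictScalars ℚ ℝ _
  set φ := Unitary.conjStarAlgAut ℂ (Matrix ι ι ℂ) hX.eigenvectorUnitary
  have hφ : Continuous φ := (StarAlgEquiv.isometry φ).continuous
  have hdiag : t • X = φ (Matrix.diagonal fun a => ((t * hX.eigenvalues a : ℝ) : ℂ)) := by
    conv_lhs => rw [hX.spectral_theorem, ← Complex.coe_smul, ← map_smul, ← Matrix.diagonal_smul]
    congr 2
    ext a
    simp
  rw [hdiag, ← NormedSpace.map_exp φ hφ, Matrix.exp_diagonal]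
  congr 2
  ext a
  rw [Pi.coe_exp, Complex.ofReal_exp, Complex.exp_eq_exp_ℂ]

lemma re_trace_exp_eq_sum (hX : X.IsHermitian) :
    (NormedSpace.exp X).trace.re = ∑ a, Real.exp (hX.eigenvalues a) := by
  have h := exp_smul_eq_conjStarAlgAut hX 1
  simp only [one_smul, one_mul] at h
  rw [h, trace_conjStarAlgAut, Matrix.trace_diagonal, Complex.re_sum]
  simp only [Complex.ofReal_re]

lemma re_trace_exp_pos [Nonempty ι] (hX : X.IsHermitian) : 0 < (NormedSpace.exp X).trace.re := by
  rw [re_trace_exp_eq_sum hX]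
  positivity

lemma norm_trace_mul_exp_mul_exp_le (hX : X.IsHermitian) (A B : Matrix ι ι ℂ) {u : ℝ}
    (hu : u ∈ Set.Icc (0 : ℝ) 1) :
    ‖(A * (NormedSpace.exp (u • X) * B * NormedSpace.exp ((1 - u) • X))).trace‖ ≤
      ‖A‖ * ‖B‖ * (NormedSpace.exp X).trace.re := by
  set φ := Unitary.conjStarAlgAut ℂ (Matrix ι ι ℂ) hX.eigenvectorUnitary with hφ
  obtain ⟨P, rfl⟩ := EquivLike.surjective φ A
  obtain ⟨Q, rfl⟩ := EquivLike.surjective φ B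
  rw [exp_smul_eq_conjStarAlgAut hX, exp_smul_eq_conjStarAlgAut hX, ← hφ, ← map_mul, ← map_mul,
    ← map_mul, trace_conjStarAlgAut, re_trace_exp_eq_sum hX, StarAlgEquiv.norm_map,
    StarAlgEquiv.norm_map]
  exact norm_trace_mul_diagonal_mul_diagonal_le P Q hX.eigenvalues hu

/-- The trace pairing `B ↦ Re Tr[A B]` as a continuous real-linear functional, so that it can be
composed with Fréchet derivatives and moved under integrals. -/
noncomputable def reTraceMul (A : Matrix ι ι ℂ) : Matrix ι ι ℂ →L[ℝ] ℝ :=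
  Complex.reCLM ∘L (Matrix.traceLinearMap ι ℝ ℂ ∘ₗ LinearMap.mulLeft ℝ A).toContinuousLinearMap

lemma reTraceMul_apply (A B : Matrix ι ι ℂ) : reTraceMul A B = (A * B).trace.re := rfl

lemma reTraceMul_one_apply (B : Matrix ι ι ℂ) : reTraceMul 1 B = B.trace.re := by
  rw [reTraceMul_apply, one_mul]

lemma reTraceMul_fderiv_exp (A X B : Matrix ι ι ℂ) :
    reTraceMul A (fderiv ℝ NormedSpace.exp X B) =
      ∫ u in (0 : ℝ)..1,
        (A * (NormedSpace.exp (u • X) * B * NormedSpace.exp ((1 - u) • X))).trace.re := by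
  have hcont : Continuous fun u : ℝ =>
      NormedSpace.exp (u • X) * B * NormedSpace.exp ((1 - u) • X) := by fun_prop
  rw [fderiv_exp_apply]
  exact ((reTraceMul A).intervalIntegral_comp_comm (hcont.intervalIntegrable 0 1)).symm

lemma re_trace_fderiv_exp (X B : Matrix ι ι ℂ) :
    (fderiv ℝ NormedSpace.exp X B).trace.re = (B * NormedSpace.exp X).trace.re := by
  have hcyc (u : ℝ) :
      (NormedSpace.exp (u • X) * B * NormedSpace.exp ((1 - u) • X)).trace =
        (B * NormedSpace.exp X).trace := by
    rw [mul_assoc, Matrix.trace_mul_comm, mul_assoc, ← Matrix.exp_add_of_commute _ _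
      (((Commute.refl X).smul_left _).smul_right _), ← add_smul, sub_add_cancel, one_smul]
  rw [← reTraceMul_one_apply, reTraceMul_fderiv_exp]
  simp only [one_mul, hcyc, intervalIntegral.integral_const, sub_zero, one_smul]

lemma abs_reTraceMul_fderiv_exp_le (hX : X.IsHermitian) (A B : Matrix ι ι ℂ) :
    |reTraceMul A (fderiv ℝ NormedSpace.exp X B)| ≤
      ‖A‖ * ‖B‖ * (NormedSpace.exp X).trace.re := by
  rw [reTraceMul_fderiv_exp, ← Real.norm_eq_abs]
  refine (intervalIntegral.norm_integral_le_of_norm_le_const fun u hu => ?_).trans_eq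
    (by rw [sub_zero, abs_one, mul_one])
  rw [Set.uIoc_of_le zero_le_one] at hu
  exact (Complex.abs_re_le_norm _).trans
    (norm_trace_mul_exp_mul_exp_le hX A B (Set.Ioc_subset_Icc_self hu))

/-- The expectation `Tr[A ρ]` of the observable `A` in the Gibbs state `ρ = exp X / Tr[exp X]` of
the Hamiltonian `X`. Real parts are taken in numerator and denominator so that it is a real
function of every matrix `X`, Hermitian or not, and can be differentiated on the whole space. -/
noncomputable def gibbsExpectation (A X : Matrix ι ι ℂ) : ℝ :=
  (A * NormedSpace.exp X).trace.re / (NormedSpace.exp X).trace.re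

lemma abs_gibbsExpectation_le [Nonempty ι] (hX : X.IsHermitian) (A : Matrix ι ι ℂ) :
    |gibbsExpectation A X| ≤ ‖A‖ := by
  have hZ := re_trace_exp_pos hX
  have h := norm_trace_mul_exp_mul_exp_le hX A 1 (Set.left_mem_Icc.2 zero_le_one)
  simp only [zero_smul, NormedSpace.exp_zero, one_mul, sub_zero, one_smul, mul_one,
    CStarRing.norm_one] at h
  rw [gibbsExpectation, abs_div, abs_of_pos hZ, div_le_iff₀ hZ]
  exact (Complex.abs_re_le_norm _).trans h

lemma hasFDerivAt_re_trace_mul_exp (A X : Matrix ι ι ℂ) :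
    HasFDerivAt (fun Y => (A * NormedSpace.exp Y).trace.re)
      (reTraceMul A ∘L fderiv ℝ NormedSpace.exp X) X :=
  (reTraceMul A).hasFDerivAt.comp X (differentiable_exp X).hasFDerivAt

lemma hasFDerivAt_re_trace_exp (X : Matrix ι ι ℂ) :
    HasFDerivAt (fun Y => (NormedSpace.exp Y).trace.re)
      (reTraceMul 1 ∘L fderiv ℝ NormedSpace.exp X) X := by
  simpa only [one_mul] using hasFDerivAt_re_trace_mul_exp 1 X

lemma hasFDerivAt_log_re_trace_exp [Nonempty ι] (hX : X.IsHermitian) :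
    HasFDerivAt (fun Y => Real.log (NormedSpace.exp Y).trace.re)
      ((NormedSpace.exp X).trace.re⁻¹ • reTraceMul (NormedSpace.exp X)) X := by
  refine ((hasFDerivAt_re_trace_exp X).log (re_trace_exp_pos hX).ne').congr_fderiv ?_
  ext B
  simp [re_trace_fderiv_exp, reTraceMul_apply, Matrix.trace_mul_comm B]

lemma hasFDerivAt_gibbsExpectation [Nonempty ι] (hX : X.IsHermitian) (A : Matrix ι ι ℂ) :
    HasFDerivAt (gibbsExpectation A)
      ((NormedSpace.exp X).trace.re⁻¹ • (reTraceMul A ∘L fderiv ℝ NormedSpace.exp X -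
        gibbsExpectation A X • reTraceMul (NormedSpace.exp X))) X := by
  have hZ := (re_trace_exp_pos hX).ne'
  have hinv := (hasDerivAt_inv hZ).comp_hasFDerivAt X (hasFDerivAt_re_trace_exp X)
  refine ((hasFDerivAt_re_trace_mul_exp A X).fun_mul hinv).congr_fderiv ?_
  ext B
  simp only [neg_smul, smul_neg, Function.comp_apply, add_apply, neg_apply, sub_apply, smul_apply,
    ContinuousLinearMap.comp_apply, reTraceMul_apply, one_mul, re_trace_fderiv_exp,
    Matrix.trace_mul_comm B, smul_eq_mul, gibbsExpectation]
  field_simp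
  ring

-- The Kubo–Mori covariance of `A` and `B`: their correlation minus the product of expectations.
lemma fderiv_gibbsExpectation_apply [Nonempty ι] (hX : X.IsHermitian) (A B : Matrix ι ι ℂ) :
    fderiv ℝ (gibbsExpectation A) X B =
      (NormedSpace.exp X).trace.re⁻¹ * reTraceMul A (fderiv ℝ NormedSpace.exp X B) -
        gibbsExpectation A X * gibbsExpectation B X := by
  rw [(hasFDerivAt_gibbsExpectation hX A).fderiv]
  simp only [smul_apply, sub_apply, ContinuousLinearMap.comp_apply, reTraceMul_apply, smul_eq_mul,
    Matrix.trace_mul_comm B, gibbsExpectation]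
  ring

lemma abs_fderiv_gibbsExpectation_le [Nonempty ι] (hX : X.IsHermitian) (A B : Matrix ι ι ℂ) :
    |fderiv ℝ (gibbsExpectation A) X B| ≤ 2 * ‖B‖ * ‖A‖ := by
  set Z := (NormedSpace.exp X).trace.re
  have hZ : 0 < Z := re_trace_exp_pos hX
  have hcorr : |Z⁻¹ * reTraceMul A (fderiv ℝ NormedSpace.exp X B)| ≤ ‖A‖ * ‖B‖ := by
    rw [abs_mul, abs_of_pos (inv_pos.2 hZ), inv_mul_le_iff₀ hZ, mul_comm Z]
    exact abs_reTraceMul_fderiv_exp_le hX A B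
  have hprod : |gibbsExpectation A X * gibbsExpectation B X| ≤ ‖A‖ * ‖B‖ := by
    rw [abs_mul]
    gcongr <;> exact abs_gibbsExpectation_le hX _
  rw [fderiv_gibbsExpectation_apply hX]
  linarith [abs_sub (Z⁻¹ * reTraceMul A (fderiv ℝ NormedSpace.exp X B))
    (gibbsExpectation A X * gibbsExpectation B X)]

end GibbsExpectation

section LogPartition

variable {H : Fin m → Matrix (Fin n) (Fin n) ℂ}

/-- The Hamiltonian `θ ↦ H(θ)` as a continuous linear map, through which the derivatives of `logZ`
and `F` are reduced by the chain rule to derivatives with respect to a matrix. -/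
noncomputable def hamCLM (H : Fin m → Matrix (Fin n) (Fin n) ℂ) :
    (Fin m → ℝ) →L[ℝ] Matrix (Fin n) (Fin n) ℂ :=
  (Fintype.linearCombination ℝ H).toContinuousLinearMap

lemma hamCLM_apply (H : Fin m → Matrix (Fin n) (Fin n) ℂ) (θ : Fin m → ℝ) :
    hamCLM H θ = ham H θ := rfl

lemma ham_single (H : Fin m → Matrix (Fin n) (Fin n) ℂ) (k : Fin m) :
    ham H (Pi.single k 1) = H k := by
  rw [← hamCLM_apply]
  exact (Fintype.linearCombination_apply_single ℝ H k 1).trans (one_smul ℝ _)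

lemma isHermitian_ham (hH : ∀ i, (H i).IsHermitian) (θ : Fin m → ℝ) : (ham H θ).IsHermitian :=
  isSelfAdjoint_sum _ fun i _ => (IsSelfAdjoint.all (θ i)).smul (hH i)

lemma hasFDerivAt_logZ [NeZero n] (hH : ∀ i, (H i).IsHermitian) (θ : Fin m → ℝ) :
    HasFDerivAt (logZ H)
      (((NormedSpace.exp (ham H θ)).trace.re⁻¹ • reTraceMul (NormedSpace.exp (ham H θ))) ∘L
        hamCLM H) θ :=
  (hasFDerivAt_log_re_trace_exp (isHermitian_ham hH θ)).comp θ (hamCLM H).hasFDerivAt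

lemma fderiv_logZ_apply [NeZero n] (hH : ∀ i, (H i).IsHermitian) (θ v : Fin m → ℝ) :
    fderiv ℝ (logZ H) θ v = gibbsExpectation (ham H v) (ham H θ) := by
  rw [(hasFDerivAt_logZ hH θ).fderiv]
  simp only [ContinuousLinearMap.smul_comp, smul_apply, ContinuousLinearMap.comp_apply,
    hamCLM_apply, reTraceMul_apply, smul_eq_mul, Matrix.trace_mul_comm (ham H v), gibbsExpectation]
  ring

lemma hasFDerivAt_fderiv_logZ_apply [NeZero n] (hH : ∀ i, (H i).IsHermitian)
    (θ v : Fin m → ℝ) :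
    HasFDerivAt (fun θ' => fderiv ℝ (logZ H) θ' v)
      (fderiv ℝ (gibbsExpectation (ham H v)) (ham H θ) ∘L hamCLM H) θ := by
  simp only [fderiv_logZ_apply hH]
  have h := hasFDerivAt_gibbsExpectation (isHermitian_ham hH θ) (ham H v)
  exact h.differentiableAt.hasFDerivAt.comp θ (hamCLM H).hasFDerivAt

lemma abs_fderiv_fderiv_logZ_apply_le [NeZero n] (hH : ∀ i, (H i).IsHermitian)
    (θ u v : Fin m → ℝ) :
    |fderiv ℝ (fun θ' => fderiv ℝ (logZ H) θ' v) θ u| ≤ 2 * ‖ham H u‖ * ‖ham H v‖ := by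
  rw [(hasFDerivAt_fderiv_logZ_apply hH θ v).fderiv]
  exact abs_fderiv_gibbsExpectation_le (isHermitian_ham hH θ) (ham H v) (ham H u)

lemma fderiv_F_apply [NeZero n] (hH : ∀ i, (H i).IsHermitian)
    (η : Matrix (Fin n) (Fin n) ℂ) (θ v : Fin m → ℝ) :
    fderiv ℝ (F H η) θ v = fderiv ℝ (logZ H) θ v - reTraceMul η (ham H v) := by
  have hF : F H η = fun θ' => logZ H θ' - (reTraceMul η ∘L hamCLM H) θ' := by
    ext θ'
    simp [F, hamCLM_apply, ham, reTraceMul_apply]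
  rw [hF, ((hasFDerivAt_logZ hH θ).differentiableAt.hasFDerivAt.fun_sub
    (reTraceMul η ∘L hamCLM H).hasFDerivAt).fderiv]
  rfl

end LogPartition

theorem second_partials_exist_and_bounded_general [NeZero n]
    (H : Fin m → Matrix (Fin n) (Fin n) ℂ) (hHerm : ∀ i, (H i).IsHermitian)
    (η : Matrix (Fin n) (Fin n) ℂ) (θ u v : Fin m → ℝ) :
    (DifferentiableAt ℝ (fun θ' => fderiv ℝ (logZ H) θ' v) θ ∧
      |fderiv ℝ (fun θ' => fderiv ℝ (logZ H) θ' v) θ u| ≤ 2 * ‖ham H u‖ * ‖ham H v‖) ∧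
    (DifferentiableAt ℝ (fun θ' => fderiv ℝ (F H η) θ' v) θ ∧
      |fderiv ℝ (fun θ' => fderiv ℝ (F H η) θ' v) θ u| ≤ 2 * ‖ham H u‖ * ‖ham H v‖) := by
  have hdiff := (hasFDerivAt_fderiv_logZ_apply hHerm θ v).differentiableAt
  have hbound := abs_fderiv_fderiv_logZ_apply_le hHerm θ u v
  simp only [fderiv_F_apply hHerm η, fderiv_sub_const]
  exact ⟨⟨hdiff, hbound⟩, hdiff.sub_const _, hbound⟩

/-- The second partial derivatives `∂²(log Z)/∂θ_j ∂θ_k` exist and are bounded in absolute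
value by `2‖H_j‖·‖H_k‖` (operator norm); the same holds for the QBM objective `F`, which
differs from `log Z` by a linear function of `θ`. -/
theorem second_partials_exist_and_bounded (H : Fin m → Matrix (Fin n) (Fin n) ℂ)
    (hHerm : ∀ i, (H i).IsHermitian)
    (η : Matrix (Fin n) (Fin n) ℂ) (hη : η.PosSemidef) (hηtr : η.trace = 1)
    (θ : Fin m → ℝ) (j k : Fin m) :
    (DifferentiableAt ℝ (fun θ' => fderiv ℝ (logZ H) θ' (Pi.single k 1)) θ ∧
      |fderiv ℝ (fun θ' => fderiv ℝ (logZ H) θ' (Pi.single k 1)) θ (Pi.single j 1)| ≤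
        2 * ‖H j‖ * ‖H k‖) ∧
    (DifferentiableAt ℝ (fun θ' => fderiv ℝ (F H η) θ' (Pi.single k 1)) θ ∧
      |fderiv ℝ (fun θ' => fderiv ℝ (F H η) θ' (Pi.single k 1)) θ (Pi.single j 1)| ≤
        2 * ‖H j‖ * ‖H k‖) := by
  have : NeZero n := ⟨by rintro rfl; simp [Matrix.trace] at hηtr⟩
  simpa only [ham_single] using
    second_partials_exist_and_bounded_general H hHerm η θ (Pi.single j 1) (Pi.single k 1)

end QBM5
end

section
/- The gradient map G : ℝ^m → ℝ^m defined by G(θ)_i = Tr[ρ_θ H_i] is Lipschitz continuous with Lipschitz constant L = 2m·max_{1≤j≤m} ‖H_j‖² with respect to the Euclidean norm on ℝ^m. Consequently, for any density matrix η the QBM objective F (and hence the quantum relative entropy S(η‖ρ_θ) as a function of θ) is L-smooth with L = 2m·max_j ‖H_j‖². -/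
open scoped Matrix.Norms.L2Operator ComplexOrder

namespace QBM6

variable {n m : ℕ}

/-- The Hamiltonian `H(θ) = ∑ i, θ i • H i`. -/
noncomputable def ham (H : Fin m → Matrix (Fin n) (Fin n) ℂ) (θ : Fin m → ℝ) :
    Matrix (Fin n) (Fin n) ℂ :=
  ∑ i, θ i • H i

/-- The partition function `Z(θ) = Tr[exp H(θ)]` (its real part). -/
noncomputable def Z (H : Fin m → Matrix (Fin n) (Fin n) ℂ) (θ : Fin m → ℝ) : ℝ :=
  (NormedSpace.exp (ham H θ)).trace.re

/-- The Gibbs state `ρ_θ = exp H(θ) / Z(θ)`. -/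
noncomputable def gibbs (H : Fin m → Matrix (Fin n) (Fin n) ℂ) (θ : Fin m → ℝ) :
    Matrix (Fin n) (Fin n) ℂ :=
  (Z H θ : ℂ)⁻¹ • NormedSpace.exp (ham H θ)

/-- The log-partition function `θ ↦ log Z(θ)`. -/
noncomputable def logZ (H : Fin m → Matrix (Fin n) (Fin n) ℂ) (θ : Fin m → ℝ) : ℝ :=
  Real.log (Z H θ)

/-- The QBM objective `F(θ) = log Z(θ) − ∑ i, θ i * Tr[η H i]`. -/
noncomputable def F (H : Fin m → Matrix (Fin n) (Fin n) ℂ) (η : Matrix (Fin n) (Fin n) ℂ)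
    (θ : Fin m → ℝ) : ℝ :=
  logZ H θ - ∑ i, θ i * (η * H i).trace.re

/-- The Gibbs expectation-value (gradient) map `G(θ)_i = Tr[ρ_θ H_i]`,
as a map of Euclidean spaces. -/
noncomputable def G (H : Fin m → Matrix (Fin n) (Fin n) ℂ)
    (θ : EuclideanSpace ℝ (Fin m)) : EuclideanSpace ℝ (Fin m) :=
  WithLp.toLp 2 fun i => (gibbs H θ.ofLp * H i).trace.re

/-- The gradient of the QBM objective, `∇F(θ)_i = Tr[ρ_θ H_i] − Tr[η H_i]`. -/
noncomputable def gradF (H : Fin m → Matrix (Fin n) (Fin n) ℂ)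
    (η : Matrix (Fin n) (Fin n) ℂ) (θ : EuclideanSpace ℝ (Fin m)) :
    EuclideanSpace ℝ (Fin m) :=
  WithLp.toLp 2 fun i => (gibbs H θ.ofLp * H i).trace.re - (η * H i).trace.re

/-!
Put `A = H(a) - log Z(a)` and `B = H(b) - log Z(b)`, so that `ρ_a = exp A` and `ρ_b = exp B` have
trace one. In eigenbases `A uᵢ = αᵢ uᵢ`, `B wⱼ = βⱼ wⱼ`, the quantity `Tr[(ρ_a - ρ_b) K]` is the
sum of `(exp αᵢ - exp βⱼ) ⟨uᵢ, wⱼ⟩ ⟨wⱼ, K uᵢ⟩`. Since the logarithmic mean of `exp αᵢ` and `exp βⱼ`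
is at most their arithmetic mean, the Cauchy–Schwarz inequality gives
`|Tr[(ρ_a - ρ_b) K]|² ≤ Tr[(ρ_a - ρ_b)(A - B)] ‖K‖²`. The constants `log Z` drop out of the
right-hand side because both states have trace one, so the case `K = H(a - b)` bounds its first
factor by `‖H(a - b)‖²`. Finally `‖G(a) - G(b)‖² = Tr[(ρ_a - ρ_b) H(G(a) - G(b))]`.
-/

theorem le_of_sq_le_mul_self {x c : ℝ} (hc : 0 ≤ c) (h : x ^ 2 ≤ c * x) : x ≤ c := by
  by_contra! hx
  exact (mul_lt_mul_of_pos_right hx (hc.trans_lt hx)).not_ge (sq x ▸ h)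

theorem exp_sub_exp_le_mul_half_add {a b : ℝ} (hba : b ≤ a) :
    Real.exp a - Real.exp b ≤ (a - b) * ((Real.exp a + Real.exp b) / 2) := by
  have one_le : 1 ≤ Real.exp (a - b) := Real.one_le_exp (sub_nonneg.2 hba)
  have log_bound : 2 * (Real.exp (a - b) - 1) ≤ (a - b) * (Real.exp (a - b) + 1) := by
    have h := Real.le_log_one_add_of_nonneg (sub_nonneg.2 one_le)
    rw [add_sub_cancel, Real.log_exp, div_le_iff₀ (by linarith)] at h
    linarith
  have exp_a : Real.exp a = Real.exp (a - b) * Real.exp b := by rw [← Real.exp_add, sub_add_cancel]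
  rw [exp_a]
  linarith [mul_le_mul_of_nonneg_right log_bound (Real.exp_pos b).le]

theorem sq_exp_sub_exp_le (a b : ℝ) :
    (Real.exp a - Real.exp b) ^ 2 ≤
      (Real.exp a - Real.exp b) * (a - b) * ((Real.exp a + Real.exp b) / 2) := by
  wlog hba : b ≤ a generalizing a b
  · linarith [this b a (le_of_not_ge hba)]
  rw [sq, mul_assoc]
  exact mul_le_mul_of_nonneg_left (exp_sub_exp_le_mul_half_add hba)
    (sub_nonneg.2 (Real.exp_le_exp.2 hba))

section OperatorNorm

variable {𝕜 k d : Type*} [RCLike 𝕜] [Fintype k] [Fintype d] [DecidableEq d]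

theorem sum_norm_sq_col_le (X : Matrix k d 𝕜) (j : d) : ∑ i, ‖X i j‖ ^ 2 ≤ ‖X‖ ^ 2 := by
  have h := pow_le_pow_left₀ (norm_nonneg _)
    (Matrix.l2_opNorm_mulVec X (EuclideanSpace.single j (1 : 𝕜))) 2
  rw [EuclideanSpace.norm_sq_eq] at h
  simpa using h

theorem sum_norm_sq_row_le (X : Matrix k d 𝕜) (i : k) : ∑ j, ‖X i j‖ ^ 2 ≤ ‖X‖ ^ 2 := by
  classical
  simpa [Matrix.conjTranspose_apply, Matrix.l2_opNorm_conjTranspose] using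
    sum_norm_sq_col_le X.conjTranspose i

theorem sum_half_add_mul_norm_sq_le {p : k → ℝ} {q : d → ℝ}
    (hp : ∀ i, 0 ≤ p i) (hq : ∀ j, 0 ≤ q j) (X : Matrix k d 𝕜) :
    ∑ i, ∑ j, (p i + q j) / 2 * ‖X i j‖ ^ 2 ≤ (∑ i, p i + ∑ j, q j) / 2 * ‖X‖ ^ 2 := by
  calc ∑ i, ∑ j, (p i + q j) / 2 * ‖X i j‖ ^ 2
      = (∑ i, p i * ∑ j, ‖X i j‖ ^ 2 + ∑ j, q j * ∑ i, ‖X i j‖ ^ 2) / 2 := by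
        simp only [Finset.mul_sum]
        rw [Finset.sum_comm (γ := d), ← Finset.sum_add_distrib, Finset.sum_div]
        refine Finset.sum_congr rfl fun i _ => ?_
        rw [← Finset.sum_add_distrib, Finset.sum_div]
        exact Finset.sum_congr rfl fun j _ => by ring
    _ ≤ (∑ i, p i * ‖X‖ ^ 2 + ∑ j, q j * ‖X‖ ^ 2) / 2 := by
        gcongr with i _ j _
        · exact hp i
        · exact sum_norm_sq_row_le X i
        · exact hq j
        · exact sum_norm_sq_col_le X j
    _ = (∑ i, p i + ∑ j, q j) / 2 * ‖X‖ ^ 2 := by rw [← Finset.sum_mul, ← Finset.sum_mul]; ring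

end OperatorNorm

section EigenMatrix

variable {𝕜 d : Type*} [RCLike 𝕜] [Fintype d] [DecidableEq d] {A B : Matrix d d 𝕜}

/-- The matrix elements `⟨uᵢ, K wⱼ⟩` of `K` between the eigenbasis `u` of `A` and the eigenbasis `w`
of `B`, where perturbations of functions of `A` and `B` become entrywise. In particular
`eigenMatrix hA hB 1` is the matrix of overlaps `⟨uᵢ, wⱼ⟩`. -/
noncomputable def eigenMatrix (hA : A.IsHermitian) (hB : B.IsHermitian) (K : Matrix d d 𝕜) :
    Matrix d d 𝕜 :=
  star (hA.eigenvectorUnitary : Matrix d d 𝕜) * K * (hB.eigenvectorUnitary : Matrix d d 𝕜)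

theorem norm_eigenMatrix (hA : A.IsHermitian) (hB : B.IsHermitian) (K : Matrix d d 𝕜) :
    ‖eigenMatrix hA hB K‖ = ‖K‖ := by
  rw [eigenMatrix, CStarRing.norm_mul_mem_unitary _ hB.eigenvectorUnitary.2,
    CStarRing.norm_mem_unitary_mul _ (Unitary.star_mem hA.eigenvectorUnitary.2)]

theorem conjTranspose_eigenMatrix (hA : A.IsHermitian) (hB : B.IsHermitian) (K : Matrix d d 𝕜) :
    (eigenMatrix hA hB K).conjTranspose = eigenMatrix hB hA K.conjTranspose := by
  simp [eigenMatrix, Matrix.star_eq_conjTranspose, Matrix.mul_assoc]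

theorem trace_mul_eq_sum_eigenMatrix (hA : A.IsHermitian) (hB : B.IsHermitian)
    (X K : Matrix d d 𝕜) :
    (X * K).trace = ∑ i, ∑ j, eigenMatrix hA hB X i j * eigenMatrix hB hA K j i := by
  have h : eigenMatrix hA hB X * eigenMatrix hB hA K =
      star (hA.eigenvectorUnitary : Matrix d d 𝕜) * (X * K) * hA.eigenvectorUnitary := by
    simp only [eigenMatrix, mul_assoc]
    rw [← mul_assoc (hB.eigenvectorUnitary : Matrix d d 𝕜),
      Unitary.mul_star_self_of_mem hB.eigenvectorUnitary.2, one_mul]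
  calc (X * K).trace = (eigenMatrix hA hB X * eigenMatrix hB hA K).trace := by
        rw [h, Matrix.trace_mul_cycle, Unitary.mul_star_self_of_mem hA.eigenvectorUnitary.2,
          one_mul]
    _ = ∑ i, ∑ j, eigenMatrix hA hB X i j * eigenMatrix hB hA K j i := by
        simp only [Matrix.trace, Matrix.diag_apply, Matrix.mul_apply]

theorem cfc_eq_conj_diagonal (hA : A.IsHermitian) (f : ℝ → ℝ) :
    cfc f A = (hA.eigenvectorUnitary : Matrix d d 𝕜) *
      Matrix.diagonal (fun i => (f (hA.eigenvalues i) : 𝕜)) *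
        star (hA.eigenvectorUnitary : Matrix d d 𝕜) := by
  rw [hA.cfc_eq, Matrix.IsHermitian.cfc, Unitary.conjStarAlgAut_apply]
  rfl

theorem trace_cfc (hA : A.IsHermitian) (f : ℝ → ℝ) :
    (cfc f A).trace = ((∑ i, f (hA.eigenvalues i) : ℝ) : 𝕜) := by
  rw [cfc_eq_conj_diagonal hA, Matrix.trace_mul_comm, ← mul_assoc, Unitary.coe_star_mul_self,
    one_mul, Matrix.trace_diagonal, RCLike.ofReal_sum]

theorem eigenMatrix_cfc_sub_cfc (hA : A.IsHermitian) (hB : B.IsHermitian) (f : ℝ → ℝ) (i j : d) :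
    eigenMatrix hA hB (cfc f A - cfc f B) i j =
      ((f (hA.eigenvalues i) - f (hB.eigenvalues j) : ℝ) : 𝕜) * eigenMatrix hA hB 1 i j := by
  have h : eigenMatrix hA hB (cfc f A - cfc f B) =
      Matrix.diagonal (fun i => (f (hA.eigenvalues i) : 𝕜)) * eigenMatrix hA hB 1 -
        eigenMatrix hA hB 1 * Matrix.diagonal (fun j => (f (hB.eigenvalues j) : 𝕜)) := by
    simp only [eigenMatrix, cfc_eq_conj_diagonal hA, cfc_eq_conj_diagonal hB, mul_sub, sub_mul,
      mul_one, mul_assoc, Unitary.coe_star_mul_self]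
    simp only [← mul_assoc, Unitary.coe_star_mul_self, one_mul]
  rw [h, Matrix.sub_apply, Matrix.diagonal_mul, Matrix.mul_diagonal]
  push_cast
  ring

theorem trace_cfc_sub_cfc_mul (hA : A.IsHermitian) (hB : B.IsHermitian) (f : ℝ → ℝ)
    (K : Matrix d d 𝕜) :
    ((cfc f A - cfc f B) * K).trace =
      ∑ i, ∑ j, ((f (hA.eigenvalues i) - f (hB.eigenvalues j) : ℝ) : 𝕜) *
        eigenMatrix hA hB 1 i j * eigenMatrix hB hA K j i := by
  simp only [trace_mul_eq_sum_eigenMatrix hA hB, eigenMatrix_cfc_sub_cfc]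

theorem re_trace_cfc_sub_cfc_mul_sub (hA : A.IsHermitian) (hB : B.IsHermitian) (f : ℝ → ℝ) :
    RCLike.re ((cfc f A - cfc f B) * (A - B)).trace =
      ∑ i, ∑ j, (f (hA.eigenvalues i) - f (hB.eigenvalues j)) *
        (hA.eigenvalues i - hB.eigenvalues j) * ‖eigenMatrix hA hB 1 i j‖ ^ 2 := by
  have entry (i j : d) : eigenMatrix hB hA (A - B) j i =
      ((hA.eigenvalues i - hB.eigenvalues j : ℝ) : 𝕜) * star (eigenMatrix hA hB 1 i j) := by
    have h : eigenMatrix hA hB (A - B) i j =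
        ((hA.eigenvalues i - hB.eigenvalues j : ℝ) : 𝕜) * eigenMatrix hA hB 1 i j := by
      have cfc_id_A : cfc id A = A := cfc_id ℝ A hA
      have cfc_id_B : cfc id B = B := cfc_id ℝ B hB
      simpa only [cfc_id_A, cfc_id_B, id] using eigenMatrix_cfc_sub_cfc hA hB id i j
    rw [← (hA.sub hB).eq, ← conjTranspose_eigenMatrix, Matrix.conjTranspose_apply, h, star_mul',
      RCLike.star_def, RCLike.conj_ofReal]
  rw [trace_cfc_sub_cfc_mul hA hB, map_sum]
  refine Finset.sum_congr rfl fun i _ => ?_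
  rw [map_sum]
  refine Finset.sum_congr rfl fun j _ => ?_
  rw [entry, mul_mul_mul_comm, RCLike.star_def, RCLike.mul_conj]
  norm_cast

theorem norm_trace_cfc_sub_cfc_mul_le_sum (hA : A.IsHermitian) (hB : B.IsHermitian) (f : ℝ → ℝ)
    (K : Matrix d d 𝕜) :
    ‖((cfc f A - cfc f B) * K).trace‖ ≤
      ∑ ij : d × d, |f (hA.eigenvalues ij.1) - f (hB.eigenvalues ij.2)| *
        ‖eigenMatrix hA hB 1 ij.1 ij.2‖ * ‖eigenMatrix hA hB K.conjTranspose ij.1 ij.2‖ := by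
  rw [trace_cfc_sub_cfc_mul hA hB, ← Fintype.sum_prod_type']
  refine norm_sum_le_of_le _ fun ij _ => ?_
  rw [norm_mul, norm_mul, RCLike.norm_ofReal, ← conjTranspose_eigenMatrix hB hA,
    Matrix.conjTranspose_apply, norm_star]

/-- The hypothesis `hfg` bounds the difference quotients of `f` by the mean of `g` at the two
endpoints; for `f = g = exp` they are logarithmic means. -/
theorem sq_norm_trace_cfc_sub_cfc_mul_le (hA : A.IsHermitian) (hB : B.IsHermitian) {f g : ℝ → ℝ}
    (hf : Monotone f) (hg : ∀ x, 0 ≤ g x)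
    (hfg : ∀ x y, (f x - f y) ^ 2 ≤ (f x - f y) * (x - y) * ((g x + g y) / 2))
    (K : Matrix d d 𝕜) :
    ‖((cfc f A - cfc f B) * K).trace‖ ^ 2 ≤
      RCLike.re ((cfc f A - cfc f B) * (A - B)).trace *
        ((RCLike.re (cfc g A).trace + RCLike.re (cfc g B).trace) / 2 * ‖K‖ ^ 2) := by
  set α := hA.eigenvalues
  set β := hB.eigenvalues
  set Q := eigenMatrix hA hB 1
  set M := eigenMatrix hA hB K.conjTranspose
  have sq_term_le (x y q r : ℝ) : (|f x - f y| * q * r) ^ 2 ≤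
      (f x - f y) * (x - y) * q ^ 2 * ((g x + g y) / 2 * r ^ 2) := by
    rw [mul_pow, mul_pow, sq_abs]
    linarith [mul_le_mul_of_nonneg_right (hfg x y) (mul_nonneg (sq_nonneg q) (sq_nonneg r))]
  have weight_nonneg (i j : d) : 0 ≤ (f (α i) - f (β j)) * (α i - β j) * ‖Q i j‖ ^ 2 :=
    mul_nonneg (monovary_iff_forall_mul_nonneg.1 (hf.monovary monotone_id) _ _) (sq_nonneg _)
  calc ‖((cfc f A - cfc f B) * K).trace‖ ^ 2
      ≤ (∑ ij : d × d, |f (α ij.1) - f (β ij.2)| * ‖Q ij.1 ij.2‖ * ‖M ij.1 ij.2‖) ^ 2 := by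
        gcongr
        exact norm_trace_cfc_sub_cfc_mul_le_sum hA hB f K
    _ ≤ (∑ ij : d × d, (f (α ij.1) - f (β ij.2)) * (α ij.1 - β ij.2) * ‖Q ij.1 ij.2‖ ^ 2) *
        ∑ ij : d × d, (g (α ij.1) + g (β ij.2)) / 2 * ‖M ij.1 ij.2‖ ^ 2 :=
        Finset.sum_sq_le_sum_mul_sum_of_sq_le_mul _ (fun _ _ => weight_nonneg _ _)
          (fun _ _ => mul_nonneg (div_nonneg (add_nonneg (hg _) (hg _)) zero_le_two)
            (sq_nonneg _))
          fun _ _ => sq_term_le _ _ _ _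
    _ = RCLike.re ((cfc f A - cfc f B) * (A - B)).trace *
        ∑ i, ∑ j, (g (α i) + g (β j)) / 2 * ‖M i j‖ ^ 2 := by
        rw [re_trace_cfc_sub_cfc_mul_sub hA hB, Fintype.sum_prod_type, Fintype.sum_prod_type]
    _ ≤ RCLike.re ((cfc f A - cfc f B) * (A - B)).trace *
        ((∑ i, g (α i) + ∑ j, g (β j)) / 2 * ‖M‖ ^ 2) := by
        gcongr
        · rw [re_trace_cfc_sub_cfc_mul_sub hA hB]
          exact Finset.sum_nonneg fun i _ => Finset.sum_nonneg fun j _ => weight_nonneg i j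
        · exact sum_half_add_mul_norm_sq_le (fun i => hg (α i)) (fun j => hg (β j)) M
    _ = RCLike.re ((cfc f A - cfc f B) * (A - B)).trace *
        ((RCLike.re (cfc g A).trace + RCLike.re (cfc g B).trace) / 2 * ‖K‖ ^ 2) := by
        rw [trace_cfc hA, trace_cfc hB, RCLike.ofReal_re, RCLike.ofReal_re, norm_eigenMatrix,
          Matrix.l2_opNorm_conjTranspose]

end EigenMatrix

section GibbsState

variable {d : Type*} [Fintype d] [DecidableEq d] {A B : Matrix d d ℂ}

/-- The partition function `Tr[exp A]` of a single Hamiltonian `A`; as in `Z`, only the real part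
is kept. -/
noncomputable def partitionFunction (A : Matrix d d ℂ) : ℝ :=
  (NormedSpace.exp A).trace.re

/-- The Gibbs state `exp A / Tr[exp A]` of a single Hamiltonian `A`, so that
`gibbs H θ = gibbsState (ham H θ)`. -/
noncomputable def gibbsState (A : Matrix d d ℂ) : Matrix d d ℂ :=
  (partitionFunction A : ℂ)⁻¹ • NormedSpace.exp A

theorem exp_eq_cfc (hA : A.IsHermitian) : NormedSpace.exp A = cfc Real.exp A :=
  (CFC.real_exp_eq_normedSpace_exp hA).symm

theorem trace_exp (hA : A.IsHermitian) : (NormedSpace.exp A).trace = partitionFunction A := by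
  rw [partitionFunction, exp_eq_cfc hA, trace_cfc hA]
  rfl

theorem partitionFunction_pos [Nonempty d] (hA : A.IsHermitian) : 0 < partitionFunction A := by
  rw [partitionFunction, exp_eq_cfc hA, trace_cfc hA]
  exact Finset.sum_pos (fun _ _ => Real.exp_pos _) Finset.univ_nonempty

theorem trace_gibbsState [Nonempty d] (hA : A.IsHermitian) : (gibbsState A).trace = 1 := by
  have hZ : (partitionFunction A : ℂ) ≠ 0 := mod_cast (partitionFunction_pos hA).ne'
  rw [gibbsState, Matrix.trace_smul, trace_exp hA, smul_eq_mul, inv_mul_cancel₀ hZ]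

theorem exp_sub_algebraMap (A : Matrix d d ℂ) (c : ℂ) :
    NormedSpace.exp (A - algebraMap ℂ _ c) = (Complex.exp c)⁻¹ • NormedSpace.exp A := by
  rw [sub_eq_add_neg, ← map_neg,
    Matrix.exp_add_of_commute _ _ (Algebra.commutes (-c) A).symm, ← NormedSpace.algebraMap_exp_comm,
    ← Complex.exp_eq_exp_ℂ, Complex.exp_neg, ← Algebra.commutes, ← Algebra.smul_def]

theorem gibbsState_eq_exp [Nonempty d] (hA : A.IsHermitian) :
    gibbsState A = NormedSpace.exp (A - algebraMap ℂ _ (Real.log (partitionFunction A) : ℂ)) := by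
  rw [exp_sub_algebraMap, ← Complex.ofReal_exp, Real.exp_log (partitionFunction_pos hA), gibbsState]

theorem sq_norm_trace_exp_sub_exp_mul_le (hA : A.IsHermitian) (hB : B.IsHermitian)
    (K : Matrix d d ℂ) :
    ‖((NormedSpace.exp A - NormedSpace.exp B) * K).trace‖ ^ 2 ≤
      ((NormedSpace.exp A - NormedSpace.exp B) * (A - B)).trace.re *
        ((partitionFunction A + partitionFunction B) / 2 * ‖K‖ ^ 2) := by
  rw [partitionFunction, partitionFunction, exp_eq_cfc hA, exp_eq_cfc hB]
  exact sq_norm_trace_cfc_sub_cfc_mul_le hA hB Real.exp_monotone (fun x => (Real.exp_pos x).le)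
    sq_exp_sub_exp_le K

theorem isHermitian_sub_algebraMap_ofReal (hA : A.IsHermitian) (c : ℝ) :
    (A - algebraMap ℂ _ (c : ℂ)).IsHermitian :=
  hA.sub (IsSelfAdjoint.algebraMap _ (Complex.conj_ofReal c))

theorem sq_norm_trace_gibbsState_sub_mul_le [Nonempty d] (hA : A.IsHermitian) (hB : B.IsHermitian)
    (K : Matrix d d ℂ) :
    ‖((gibbsState A - gibbsState B) * K).trace‖ ^ 2 ≤
      ((gibbsState A - gibbsState B) * (A - B)).trace.re * ‖K‖ ^ 2 := by
  set a := Real.log (partitionFunction A)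
  set b := Real.log (partitionFunction B)
  have partition_eq_one {C : Matrix d d ℂ} (hC : C.IsHermitian) : partitionFunction
      (C - algebraMap ℂ _ (Real.log (partitionFunction C) : ℂ)) = 1 := by
    rw [partitionFunction, ← gibbsState_eq_exp hC, trace_gibbsState hC, Complex.one_re]
  have trace_shift : ((gibbsState A - gibbsState B) *
      (A - algebraMap ℂ _ (a : ℂ) - (B - algebraMap ℂ _ (b : ℂ)))).trace =
      ((gibbsState A - gibbsState B) * (A - B)).trace := by
    rw [sub_sub_sub_comm, ← map_sub, mul_sub, Matrix.trace_sub, ← Algebra.commutes,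
      ← Algebra.smul_def, Matrix.trace_smul, Matrix.trace_sub, trace_gibbsState hA,
      trace_gibbsState hB, sub_self, smul_zero, sub_zero]
  have h := sq_norm_trace_exp_sub_exp_mul_le (isHermitian_sub_algebraMap_ofReal hA a)
    (isHermitian_sub_algebraMap_ofReal hB b) K
  rw [partition_eq_one hA, partition_eq_one hB, ← gibbsState_eq_exp hA, ← gibbsState_eq_exp hB,
    trace_shift] at h
  simpa only [add_self_div_two, one_mul] using h

theorem norm_trace_gibbsState_sub_mul_le [Nonempty d] (hA : A.IsHermitian) (hB : B.IsHermitian)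
    (K : Matrix d d ℂ) :
    ‖((gibbsState A - gibbsState B) * K).trace‖ ≤ ‖A - B‖ * ‖K‖ := by
  set t := ‖((gibbsState A - gibbsState B) * (A - B)).trace‖
  have self_bound : t ≤ ‖A - B‖ ^ 2 := by
    refine le_of_sq_le_mul_self (by positivity) ?_
    rw [mul_comm]
    exact (sq_norm_trace_gibbsState_sub_mul_le hA hB (A - B)).trans
      (by gcongr; exact Complex.re_le_norm _)
  refine le_of_sq_le_sq ?_ (by positivity)
  calc ‖((gibbsState A - gibbsState B) * K).trace‖ ^ 2
      ≤ ((gibbsState A - gibbsState B) * (A - B)).trace.re * ‖K‖ ^ 2 :=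
        sq_norm_trace_gibbsState_sub_mul_le hA hB K
    _ ≤ ‖A - B‖ ^ 2 * ‖K‖ ^ 2 := by
        gcongr
        exact (Complex.re_le_norm _).trans self_bound
    _ = (‖A - B‖ * ‖K‖) ^ 2 := (mul_pow _ _ _).symm

end GibbsState

section GradientMap

variable (H : Fin m → Matrix (Fin n) (Fin n) ℂ)

theorem gibbs_eq_gibbsState (θ : Fin m → ℝ) : gibbs H θ = gibbsState (ham H θ) :=
  rfl

theorem isHermitian_ham (hH : ∀ i, (H i).IsHermitian) (θ : Fin m → ℝ) : (ham H θ).IsHermitian :=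
  isSelfAdjoint_sum _ fun i _ => (IsSelfAdjoint.all (θ i)).smul (hH i).isSelfAdjoint

theorem ham_sub (a b : Fin m → ℝ) : ham H (a - b) = ham H a - ham H b := by
  simp [ham, sub_smul]

theorem norm_ham_le (θ : EuclideanSpace ℝ (Fin m)) :
    ‖ham H θ.ofLp‖ ≤ √(∑ i, ‖H i‖ ^ 2) * ‖θ‖ :=
  calc ‖ham H θ.ofLp‖ ≤ ∑ i, ‖H i‖ * ‖θ i‖ :=
        norm_sum_le_of_le _ fun i _ => by rw [norm_smul, mul_comm]
    _ ≤ √(∑ i, ‖H i‖ ^ 2) * √(∑ i, ‖θ i‖ ^ 2) := Real.sum_mul_le_sqrt_mul_sqrt _ _ _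
    _ = √(∑ i, ‖H i‖ ^ 2) * ‖θ‖ := by rw [EuclideanSpace.norm_eq]

theorem inner_G (θ u : EuclideanSpace ℝ (Fin m)) :
    inner ℝ (G H θ) u = (gibbs H θ.ofLp * ham H u.ofLp).trace.re := by
  simp [G, ham, PiLp.inner_apply, Finset.mul_sum, Matrix.trace_sum]

theorem gradF_sub_gradF (η : Matrix (Fin n) (Fin n) ℂ) (a b : EuclideanSpace ℝ (Fin m)) :
    gradF H η a - gradF H η b = G H a - G H b := by
  ext i
  simp [gradF, G]

theorem norm_G_sub_G_le_of_norm_ham_le [NeZero n] (hH : ∀ i, (H i).IsHermitian) {C : ℝ}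
    (hC : ∀ θ : EuclideanSpace ℝ (Fin m), ‖ham H θ.ofLp‖ ≤ C * ‖θ‖)
    (a b : EuclideanSpace ℝ (Fin m)) : ‖G H a - G H b‖ ≤ C ^ 2 * ‖a - b‖ := by
  set g := G H a - G H b
  refine le_of_sq_le_mul_self (by positivity) ?_
  calc ‖g‖ ^ 2 = inner ℝ (G H a - G H b) g := (real_inner_self_eq_norm_sq g).symm
    _ = ((gibbsState (ham H a.ofLp) - gibbsState (ham H b.ofLp)) * ham H g.ofLp).trace.re := by
        rw [inner_sub_left, inner_G, inner_G, ← Complex.sub_re, ← Matrix.trace_sub, ← sub_mul,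
          gibbs_eq_gibbsState, gibbs_eq_gibbsState]
    _ ≤ ‖ham H a.ofLp - ham H b.ofLp‖ * ‖ham H g.ofLp‖ :=
        (Complex.re_le_norm _).trans
          (norm_trace_gibbsState_sub_mul_le (isHermitian_ham H hH _) (isHermitian_ham H hH _) _)
    _ ≤ C * ‖a - b‖ * (C * ‖g‖) := by
        rw [← ham_sub, ← WithLp.ofLp_sub]
        exact mul_le_mul (hC _) (hC _) (norm_nonneg _) ((norm_nonneg _).trans (hC _))
    _ = C ^ 2 * ‖a - b‖ * ‖g‖ := by ring

theorem gradient_lipschitz_general [NeZero n] (hH : ∀ i, (H i).IsHermitian)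
    (η : Matrix (Fin n) (Fin n) ℂ) :
    (∀ a b : EuclideanSpace ℝ (Fin m), ‖G H a - G H b‖ ≤ (∑ i, ‖H i‖ ^ 2) * ‖a - b‖) ∧
    (∀ a b : EuclideanSpace ℝ (Fin m),
      ‖gradF H η a - gradF H η b‖ ≤ (∑ i, ‖H i‖ ^ 2) * ‖a - b‖) := by
  have lipschitz_G (a b : EuclideanSpace ℝ (Fin m)) :
      ‖G H a - G H b‖ ≤ (∑ i, ‖H i‖ ^ 2) * ‖a - b‖ := by
    simpa only [Real.sq_sqrt (Finset.sum_nonneg fun i _ => sq_nonneg ‖H i‖)] using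
      norm_G_sub_G_le_of_norm_ham_le H hH (norm_ham_le H) a b
  exact ⟨lipschitz_G, fun a b => (gradF_sub_gradF H η a b).symm ▸ lipschitz_G a b⟩

end GradientMap

/-- The gradient map `G(θ)_i = Tr[ρ_θ H_i]` is Lipschitz with constant
`L = 2m·max_j ‖H_j‖²` in the Euclidean norm; hence, for any density matrix `η`,
the QBM objective (the relative entropy as a function of `θ`) is `L`-smooth:
its gradient `∇F` is `L`-Lipschitz. -/
theorem gradient_lipschitz (hm : 0 < m) (H : Fin m → Matrix (Fin n) (Fin n) ℂ)
    (hHerm : ∀ i, (H i).IsHermitian)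
    (η : Matrix (Fin n) (Fin n) ℂ) (hη : η.PosSemidef) (hηtr : η.trace = 1)
    (L : ℝ) (hL : L = 2 * m * (Finset.univ.sup' ⟨⟨0, hm⟩, Finset.mem_univ _⟩ fun j => ‖H j‖ ^ 2)) :
    (∀ a b : EuclideanSpace ℝ (Fin m), ‖G H a - G H b‖ ≤ L * ‖a - b‖) ∧
    (∀ a b : EuclideanSpace ℝ (Fin m), ‖gradF H η a - gradF H η b‖ ≤ L * ‖a - b‖) := by
  have : NeZero n := ⟨by rintro rfl; simp [Matrix.trace] at hηtr⟩
  have sum_le : ∑ i, ‖H i‖ ^ 2 ≤ m * Finset.univ.sup' ⟨⟨0, hm⟩, Finset.mem_univ _⟩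
      fun j => ‖H j‖ ^ 2 := by
    simpa using Finset.sum_le_card_nsmul Finset.univ (fun j => ‖H j‖ ^ 2) _
      fun j hj => Finset.le_sup' (fun j => ‖H j‖ ^ 2) hj
  have sum_nonneg : 0 ≤ ∑ i, ‖H i‖ ^ 2 := Finset.sum_nonneg fun i _ => sq_nonneg _
  have sum_le_L : ∑ i, ‖H i‖ ^ 2 ≤ L := by linarith
  exact (gradient_lipschitz_general H hHerm η).imp
    (fun h a b => (h a b).trans (by gcongr)) fun h a b => (h a b).trans (by gcongr)

end QBM6
end

section
/- Let η be a density matrix, F(θ) = log Z(θ) − ∑_{i=1}^m θ_i Tr[η H_i], and L = 2m·max_{1≤i≤m} ‖H_i‖². For any θ ∈ ℝ^m and any γ > 0, the exact gradient-descent step θ' = θ − γ·∇F(θ) satisfies F(θ') − F(θ) ≤ −γ·(1 − γL/2)·‖∇F(θ)‖². In particular, if γ ≤ 2/L then F(θ') ≤ F(θ), so exact gradient descent on the quantum relative entropy with learning rate at most 2/L never increases the relative entropy. -/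
open scoped Matrix.Norms.L2Operator ComplexOrder

namespace QBM10

variable {n m : ℕ}

/-- The Hamiltonian `H(θ) = ∑ i, θ i • H i`. -/
noncomputable def ham (H : Fin m → Matrix (Fin n) (Fin n) ℂ) (θ : Fin m → ℝ) :
    Matrix (Fin n) (Fin n) ℂ :=
  ∑ i, θ i • H i

/-- The partition function `Z(θ) = Tr[exp H(θ)]` (its real part). -/
noncomputable def Z (H : Fin m → Matrix (Fin n) (Fin n) ℂ) (θ : Fin m → ℝ) : ℝ :=
  (NormedSpace.exp (ham H θ)).trace.re

/-- The Gibbs state `ρ_θ = exp H(θ) / Z(θ)`. -/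
noncomputable def gibbs (H : Fin m → Matrix (Fin n) (Fin n) ℂ) (θ : Fin m → ℝ) :
    Matrix (Fin n) (Fin n) ℂ :=
  (Z H θ : ℂ)⁻¹ • NormedSpace.exp (ham H θ)

/-- The log-partition function `θ ↦ log Z(θ)`. -/
noncomputable def logZ (H : Fin m → Matrix (Fin n) (Fin n) ℂ) (θ : Fin m → ℝ) : ℝ :=
  Real.log (Z H θ)

/-- The QBM objective `F(θ) = log Z(θ) − ∑ i, θ i * Tr[η H i]`. -/
noncomputable def F (H : Fin m → Matrix (Fin n) (Fin n) ℂ) (η : Matrix (Fin n) (Fin n) ℂ)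
    (θ : Fin m → ℝ) : ℝ :=
  logZ H θ - ∑ i, θ i * (η * H i).trace.re

/-- The gradient of the QBM objective, `∇F(θ)_i = Tr[ρ_θ H_i] − Tr[η H_i]`. -/
noncomputable def gradF (H : Fin m → Matrix (Fin n) (Fin n) ℂ)
    (η : Matrix (Fin n) (Fin n) ℂ) (θ : EuclideanSpace ℝ (Fin m)) :
    EuclideanSpace ℝ (Fin m) :=
  WithLp.toLp 2 fun i => (gibbs H θ * H i).trace.re - (η * H i).trace.re

/-! The log-partition function `log Tr exp` is convex, with curvature at most `1` in operator norm:
`log Tr e^B ≤ log Tr e^A + Tr[e^A (B - A)] / Tr e^A + ‖B - A‖² / 2`. By duality this is a quantum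
Pinsker inequality for `e^B` and `e^A`. Expanding all traces in an eigenbasis of `A` on one side and
one of `B` on the other reduces it, one pair of eigenvalues at a time, to the scalar Pinsker
inequality `3 (x - 1)² ≤ (4 + 2 x) (x log x + 1 - x)`, so no derivative of the matrix exponential is
needed. Since `‖∑ i, δ i • H i‖² ≤ (∑ i, ‖H i‖²) ‖δ‖²`, the objective `F` has a quadratic upper
bound with constant `∑ i, ‖H i‖² ≤ L / 2`, from which the descent of a gradient
step is read off. -/

lemma sum_le_card_mul_sup' {ι R : Type*} [Semiring R] [LinearOrder R] [IsOrderedAddMonoid R]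
    {s : Finset ι} (hs : s.Nonempty) (f : ι → R) : ∑ i ∈ s, f i ≤ s.card * s.sup' hs f := by
  rw [← nsmul_eq_mul]
  exact s.sum_le_card_nsmul f _ fun i hi ↦ s.le_sup' f hi

open InformationTheory in
lemma three_mul_sub_one_sq_le_mul_klFun {x : ℝ} (hx : 0 ≤ x) :
    3 * (x - 1) ^ 2 ≤ (4 + 2 * x) * klFun x := by
  let gap : ℝ → ℝ := fun y ↦ (4 + 2 * y) * klFun y - 3 * (y - 1) ^ 2
  have hasDerivAt_gap {y : ℝ} (hy : y ≠ 0) :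
      HasDerivAt gap (4 * (y + 1) * Real.log y - 8 * (y - 1)) y := by
    convert! ((((hasDerivAt_id y).const_mul 2).const_add 4).mul (hasDerivAt_klFun hy)).sub
      ((((hasDerivAt_id y).sub_const 1).pow 2).const_mul 3) using 1
    simp only [mul_one, klFun, id_eq, Nat.cast_ofNat, Nat.add_one_sub_one, pow_one]
    ring
  have hasDerivAt_deriv_gap {y : ℝ} (hy : y ≠ 0) :
      HasDerivAt (fun y ↦ 4 * (y + 1) * Real.log y - 8 * (y - 1))
        (4 * (Real.log y - (1 - y⁻¹))) y := by
    convert! ((((hasDerivAt_id y).add_const 1).const_mul 4).mul (Real.hasDerivAt_log hy)).sub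
      (((hasDerivAt_id y).sub_const 1).const_mul 8) using 1
    simp only [mul_one, id_eq]
    field_simp
    ring
  -- `gap` and its derivative vanish at `1`, so convexity makes `gap` nonnegative.
  have convexOn_gap : ConvexOn ℝ (Set.Ici 0) gap := by
    refine convexOn_of_hasDerivWithinAt2_nonneg (convex_Ici 0)
      (by have := continuous_klFun; fun_prop)
      (f' := fun y ↦ 4 * (y + 1) * Real.log y - 8 * (y - 1))
      (f'' := fun y ↦ 4 * (Real.log y - (1 - y⁻¹))) ?_ ?_ ?_ <;>
      simp only [interior_Ici, Set.mem_Ioi] <;> intro y hy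
    · exact (hasDerivAt_gap hy.ne').hasDerivWithinAt
    · exact (hasDerivAt_deriv_gap hy.ne').hasDerivWithinAt
    · linarith [Real.one_sub_inv_le_log_of_pos hy]
  have rightDeriv_gap_one : derivWithin gap (Set.Ioi 1) 1 = 0 := by
    simpa using
      (hasDerivAt_gap one_ne_zero).hasDerivWithinAt.derivWithin (uniqueDiffWithinAt_Ioi 1)
  have gap_one_le : gap 1 ≤ gap x :=
    convexOn_gap.isMinOn_of_rightDeriv_eq_zero (by simp) rightDeriv_gap_one hx
  simpa [gap, klFun_one] using gap_one_le

lemma exp_sub_exp_sq_le (a b : ℝ) :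
    (Real.exp b - Real.exp a) ^ 2 ≤ 4 * (Real.exp a / 3 + Real.exp b / 6) *
      (Real.exp b * (b - a) - Real.exp b + Real.exp a) := by
  have h := mul_le_mul_of_nonneg_left
    (three_mul_sub_one_sq_le_mul_klFun (Real.exp_pos (b - a)).le) (sq_nonneg (Real.exp a))
  have hexp : Real.exp b = Real.exp a * Real.exp (b - a) := by
    rw [← Real.exp_add, add_sub_cancel]
  rw [InformationTheory.klFun, Real.log_exp] at h
  rw [hexp]
  linarith

lemma exp_sub_exp_mul_re_mul_le {𝕜 : Type*} [RCLike 𝕜] (a b : ℝ) (x y : 𝕜) :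
    (Real.exp b - Real.exp a) * RCLike.re (x * y) ≤
      (Real.exp b * (b - a) - Real.exp b + Real.exp a) * ‖y‖ ^ 2 +
        (Real.exp a / 3 + Real.exp b / 6) * ‖x‖ ^ 2 := by
  have hre : RCLike.re (x * y) ^ 2 ≤ ‖x‖ ^ 2 * ‖y‖ ^ 2 := by
    rw [← mul_pow, ← norm_mul, ← sq_abs]
    gcongr
    exact RCLike.abs_re_le_norm _
  have hd := exp_sub_exp_sq_le a b
  set d := Real.exp b - Real.exp a
  set P := Real.exp a / 3 + Real.exp b / 6
  set D := Real.exp b * (b - a) - Real.exp b + Real.exp a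
  have hP : 0 < P := by positivity
  have hD : 0 ≤ D := nonneg_of_mul_nonneg_right ((sq_nonneg d).trans hd) (mul_pos four_pos hP)
  refine le_of_abs_le (abs_le_of_sq_le_sq ?_ (by positivity))
  calc (d * RCLike.re (x * y)) ^ 2 ≤ 4 * P * D * (‖x‖ ^ 2 * ‖y‖ ^ 2) := by
        rw [mul_pow]
        gcongr
    _ = 4 * (D * ‖y‖ ^ 2) * (P * ‖x‖ ^ 2) := by ring
    _ ≤ (D * ‖y‖ ^ 2 + P * ‖x‖ ^ 2) ^ 2 := four_mul_le_sq_add _ _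

section Matrix

open Matrix
open scoped InnerProductSpace

variable {𝕜 ι κ κ' : Type*} [RCLike 𝕜] [Fintype ι] [DecidableEq ι] [Fintype κ] [Fintype κ']

lemma trace_eq_sum_inner (u : OrthonormalBasis κ 𝕜 (EuclideanSpace 𝕜 ι)) (M : Matrix ι ι 𝕜) :
    M.trace = ∑ i, ⟪u i, toEuclideanCLM (𝕜 := 𝕜) M (u i)⟫_𝕜 := by
  rw [← M.trace_toLin_eq (EuclideanSpace.basisFun ι 𝕜).toBasis,
    ← toEuclideanLin_eq_toLin_orthonormal, LinearMap.trace_eq_sum_inner _ u]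
  rfl

lemma trace_eq_sum_sum_inner (u : OrthonormalBasis κ 𝕜 (EuclideanSpace 𝕜 ι))
    (w : OrthonormalBasis κ' 𝕜 (EuclideanSpace 𝕜 ι)) (M : Matrix ι ι 𝕜) :
    M.trace = ∑ i, ∑ j, ⟪u i, toEuclideanCLM (𝕜 := 𝕜) M (w j)⟫_𝕜 * ⟪w j, u i⟫_𝕜 := by
  rw [trace_eq_sum_inner u]
  refine Finset.sum_congr rfl fun i _ ↦ ?_
  nth_rw 2 [← w.sum_repr' (u i)]
  simp only [map_sum, map_smul, inner_sum, inner_smul_right, mul_comm]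

lemma sum_sq_norm_inner_toEuclideanCLM_left_le (u : OrthonormalBasis κ 𝕜 (EuclideanSpace 𝕜 ι))
    (M : Matrix ι ι 𝕜) (x : EuclideanSpace 𝕜 ι) :
    ∑ i, ‖⟪u i, toEuclideanCLM (𝕜 := 𝕜) M x⟫_𝕜‖ ^ 2 ≤ ‖M‖ ^ 2 * ‖x‖ ^ 2 := by
  rw [u.sum_sq_norm_inner_right, ← mul_pow, ← l2_opNorm_toEuclideanCLM]
  gcongr
  exact ContinuousLinearMap.le_opNorm _ x

lemma inner_toEuclideanCLM_right (M : Matrix ι ι 𝕜) (x y : EuclideanSpace 𝕜 ι) :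
    ⟪x, toEuclideanCLM (𝕜 := 𝕜) M y⟫_𝕜 = ⟪toEuclideanCLM (𝕜 := 𝕜) Mᴴ x, y⟫_𝕜 := by
  rw [← star_eq_conjTranspose, map_star, ContinuousLinearMap.star_eq_adjoint,
    ContinuousLinearMap.adjoint_inner_left]

lemma sum_sq_norm_inner_toEuclideanCLM_right_le
    (w : OrthonormalBasis κ 𝕜 (EuclideanSpace 𝕜 ι)) (M : Matrix ι ι 𝕜)
    (x : EuclideanSpace 𝕜 ι) :
    ∑ j, ‖⟪x, toEuclideanCLM (𝕜 := 𝕜) M (w j)⟫_𝕜‖ ^ 2 ≤ ‖M‖ ^ 2 * ‖x‖ ^ 2 := by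
  simpa only [inner_toEuclideanCLM_right, norm_inner_symm _ (w _), l2_opNorm_conjTranspose] using
    sum_sq_norm_inner_toEuclideanCLM_left_le w Mᴴ x

lemma sum_sum_add_mul_sq_norm_inner_toEuclideanCLM_le
    (u : OrthonormalBasis κ 𝕜 (EuclideanSpace 𝕜 ι))
    (w : OrthonormalBasis κ' 𝕜 (EuclideanSpace 𝕜 ι)) (M : Matrix ι ι 𝕜)
    {p : κ → ℝ} {q : κ' → ℝ} (hp : ∀ i, 0 ≤ p i) (hq : ∀ j, 0 ≤ q j) :
    ∑ i, ∑ j, (p i + q j) * ‖⟪u i, toEuclideanCLM (𝕜 := 𝕜) M (w j)⟫_𝕜‖ ^ 2 ≤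
      (∑ i, p i + ∑ j, q j) * ‖M‖ ^ 2 := by
  let x i j := ‖⟪u i, toEuclideanCLM (𝕜 := 𝕜) M (w j)⟫_𝕜‖ ^ 2
  have sum_row (i : κ) : ∑ j, x i j ≤ ‖M‖ ^ 2 := by
    simpa [x] using sum_sq_norm_inner_toEuclideanCLM_right_le w M (u i)
  have sum_col (j : κ') : ∑ i, x i j ≤ ‖M‖ ^ 2 := by
    simpa [x] using sum_sq_norm_inner_toEuclideanCLM_left_le u M (w j)
  calc ∑ i, ∑ j, (p i + q j) * x i j = ∑ i, p i * ∑ j, x i j + ∑ j, q j * ∑ i, x i j := by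
        simp only [add_mul, Finset.sum_add_distrib, Finset.mul_sum]
        rw [Finset.sum_comm (f := fun i j ↦ q j * x i j)]
    _ ≤ ∑ i, p i * ‖M‖ ^ 2 + ∑ j, q j * ‖M‖ ^ 2 := by
        gcongr with i _ j _
        · exact hp i
        · exact sum_row i
        · exact hq j
        · exact sum_col j
    _ = _ := by rw [← Finset.sum_mul, ← Finset.sum_mul, ← add_mul]

variable {A B : Matrix ι ι 𝕜}

lemma toEuclideanCLM_eigenvectorBasis (hA : A.IsHermitian) (i : ι) :
    toEuclideanCLM (𝕜 := 𝕜) A (hA.eigenvectorBasis i) =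
      (hA.eigenvalues i : 𝕜) • hA.eigenvectorBasis i := by
  apply WithLp.ofLp_injective
  rw [ofLp_toEuclideanCLM, hA.mulVec_eigenvectorBasis, WithLp.ofLp_smul,
    RCLike.real_smul_eq_coe_smul (K := 𝕜)]

lemma exp_mulVec_of_mulVec_eq_smul {v : ι → 𝕜} {c : 𝕜} (h : A *ᵥ v = c • v) :
    NormedSpace.exp A *ᵥ v = NormedSpace.exp c • v := by
  have pow_mulVec (k : ℕ) : A ^ k *ᵥ v = c ^ k • v := by
    induction k with
    | zero => simp
    | succ k ih => rw [pow_succ, ← mulVec_mulVec, h, mulVec_smul, ih, smul_smul, pow_succ']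
  have hseries := (NormedSpace.exp_series_hasSum_exp' (𝕂 := 𝕜) A).map
    (mulVec.addMonoidHomLeft v) (continuous_id.matrix_mulVec continuous_const)
  refine hseries.unique ?_
  simpa [Function.comp_def, mulVec.addMonoidHomLeft, smul_mulVec, pow_mulVec, smul_smul] using
    (NormedSpace.exp_series_hasSum_exp' (𝕂 := 𝕜) c).smul_const v

lemma ofReal_exp (x : ℝ) : (Real.exp x : 𝕜) = NormedSpace.exp (x : 𝕜) := by
  rw [Real.exp_eq_exp_ℝ]
  exact NormedSpace.algebraMap_exp_comm x

lemma toEuclideanCLM_exp_eigenvectorBasis (hA : A.IsHermitian) (i : ι) :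
    toEuclideanCLM (𝕜 := 𝕜) (NormedSpace.exp A) (hA.eigenvectorBasis i) =
      (Real.exp (hA.eigenvalues i) : 𝕜) • hA.eigenvectorBasis i := by
  apply WithLp.ofLp_injective
  rw [ofLp_toEuclideanCLM, ofReal_exp, WithLp.ofLp_smul]
  exact exp_mulVec_of_mulVec_eq_smul (congrArg WithLp.ofLp (toEuclideanCLM_eigenvectorBasis hA i))

lemma re_trace_exp (hA : A.IsHermitian) :
    RCLike.re (NormedSpace.exp A).trace = ∑ i, Real.exp (hA.eigenvalues i) := by
  simp only [trace_eq_sum_inner hA.eigenvectorBasis, toEuclideanCLM_exp_eigenvectorBasis,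
    inner_smul_right, inner_self_eq_norm_sq_to_K, OrthonormalBasis.norm_eq_one, RCLike.ofReal_one,
    one_pow, mul_one, map_sum, RCLike.ofReal_re]

lemma re_trace_exp_pos [Nonempty ι] (hA : A.IsHermitian) :
    0 < RCLike.re (NormedSpace.exp A).trace := by
  rw [re_trace_exp hA]
  exact Finset.sum_pos (fun i _ ↦ Real.exp_pos _) Finset.univ_nonempty

lemma re_trace_exp_mul_eq_sum_sum_left (hA : A.IsHermitian)
    (w : OrthonormalBasis κ 𝕜 (EuclideanSpace 𝕜 ι)) (X : Matrix ι ι 𝕜) :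
    RCLike.re (NormedSpace.exp A * X).trace = ∑ i, ∑ j, Real.exp (hA.eigenvalues i) *
      RCLike.re (⟪hA.eigenvectorBasis i, toEuclideanCLM (𝕜 := 𝕜) X (w j)⟫_𝕜 *
        ⟪w j, hA.eigenvectorBasis i⟫_𝕜) := by
  simp only [trace_eq_sum_sum_inner hA.eigenvectorBasis w, map_mul, mul_apply_eq_comp,
    inner_toEuclideanCLM_right (NormedSpace.exp A), hA.exp.eq, toEuclideanCLM_exp_eigenvectorBasis,
    inner_smul_left, RCLike.conj_ofReal, mul_assoc, map_sum, RCLike.re_ofReal_mul]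

lemma re_trace_exp_mul_eq_sum_sum_right (u : OrthonormalBasis κ 𝕜 (EuclideanSpace 𝕜 ι))
    (hB : B.IsHermitian) (X : Matrix ι ι 𝕜) :
    RCLike.re (NormedSpace.exp B * X).trace = ∑ i, ∑ j, Real.exp (hB.eigenvalues j) *
      RCLike.re (⟪u i, toEuclideanCLM (𝕜 := 𝕜) X (hB.eigenvectorBasis j)⟫_𝕜 *
        ⟪hB.eigenvectorBasis j, u i⟫_𝕜) := by
  simp only [trace_mul_comm _ X, trace_eq_sum_sum_inner u hB.eigenvectorBasis, map_mul,
    mul_apply_eq_comp, toEuclideanCLM_exp_eigenvectorBasis, map_smul, inner_smul_right, mul_assoc,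
    map_sum, RCLike.re_ofReal_mul]

lemma re_inner_mul_inner_symm {E : Type*} [NormedAddCommGroup E] [InnerProductSpace 𝕜 E]
    (x y : E) : RCLike.re (⟪x, y⟫_𝕜 * ⟪y, x⟫_𝕜) = ‖⟪x, y⟫_𝕜‖ ^ 2 := by
  rw [inner_mul_symm_re_eq_norm, norm_mul, norm_inner_symm y x, sq]

/-- The trace-corrected (Umegaki) relative entropy
`Tr[e^B (log e^B - log e^A)] - Tr[e^B] + Tr[e^A]` of `exp B` with respect to `exp A`, in terms of
the logarithms `A` and `B`. -/
noncomputable def relEntropyExp (A B : Matrix ι ι 𝕜) : ℝ :=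
  RCLike.re (NormedSpace.exp B * (B - A)).trace - RCLike.re (NormedSpace.exp B).trace +
    RCLike.re (NormedSpace.exp A).trace

lemma inner_toEuclideanCLM_sub_eigenvectorBasis (hA : A.IsHermitian) (hB : B.IsHermitian)
    (i j : ι) :
    ⟪hA.eigenvectorBasis i, toEuclideanCLM (𝕜 := 𝕜) (B - A) (hB.eigenvectorBasis j)⟫_𝕜 =
      ((hB.eigenvalues j - hA.eigenvalues i : ℝ) : 𝕜) *
        ⟪hA.eigenvectorBasis i, hB.eigenvectorBasis j⟫_𝕜 := by
  rw [map_sub, _root_.sub_apply, inner_sub_right, inner_toEuclideanCLM_right A, hA.eq,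
    toEuclideanCLM_eigenvectorBasis, toEuclideanCLM_eigenvectorBasis, inner_smul_left,
    inner_smul_right, RCLike.conj_ofReal, RCLike.ofReal_sub, sub_mul]

lemma relEntropyExp_eq_sum_sum (hA : A.IsHermitian) (hB : B.IsHermitian) :
    relEntropyExp A B = ∑ i, ∑ j,
      (Real.exp (hB.eigenvalues j) * (hB.eigenvalues j - hA.eigenvalues i) -
        Real.exp (hB.eigenvalues j) + Real.exp (hA.eigenvalues i)) *
        ‖⟪hA.eigenvectorBasis i, hB.eigenvectorBasis j⟫_𝕜‖ ^ 2 := by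
  have hexpA := re_trace_exp_mul_eq_sum_sum_left hA hB.eigenvectorBasis 1
  have hexpB := re_trace_exp_mul_eq_sum_sum_right hA.eigenvectorBasis hB 1
  simp only [mul_one, map_one, one_apply_eq_self, re_inner_mul_inner_symm] at hexpA hexpB
  rw [relEntropyExp, re_trace_exp_mul_eq_sum_sum_right hA.eigenvectorBasis hB, hexpA, hexpB]
  simp only [inner_toEuclideanCLM_sub_eigenvectorBasis, mul_assoc, RCLike.re_ofReal_mul,
    re_inner_mul_inner_symm, ← Finset.sum_sub_distrib, ← Finset.sum_add_distrib, add_mul, sub_mul]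

/-- Quantum Pinsker inequality, in the dual form obtained by pairing with a test matrix `X`. -/
lemma re_trace_exp_sub_exp_mul_le (hA : A.IsHermitian) (hB : B.IsHermitian) (X : Matrix ι ι 𝕜) :
    RCLike.re ((NormedSpace.exp B - NormedSpace.exp A) * X).trace ≤
      relEntropyExp A B + (RCLike.re (NormedSpace.exp A).trace / 3 +
        RCLike.re (NormedSpace.exp B).trace / 6) * ‖X‖ ^ 2 := by
  let u := hA.eigenvectorBasis
  let w := hB.eigenvectorBasis
  let a := hA.eigenvalues
  let b := hB.eigenvalues
  let x i j := ⟪u i, toEuclideanCLM (𝕜 := 𝕜) X (w j)⟫_𝕜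
  calc RCLike.re ((NormedSpace.exp B - NormedSpace.exp A) * X).trace
      = ∑ i, ∑ j, (Real.exp (b j) - Real.exp (a i)) * RCLike.re (x i j * ⟪w j, u i⟫_𝕜) := by
        simp only [sub_mul, trace_sub, map_sub, re_trace_exp_mul_eq_sum_sum_right u hB,
          re_trace_exp_mul_eq_sum_sum_left hA w, ← Finset.sum_sub_distrib, a, b, x, u, w]
    _ ≤ ∑ i, ∑ j, ((Real.exp (b j) * (b j - a i) - Real.exp (b j) + Real.exp (a i)) *
          ‖⟪w j, u i⟫_𝕜‖ ^ 2 + (Real.exp (a i) / 3 + Real.exp (b j) / 6) * ‖x i j‖ ^ 2) := by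
        gcongr with i _ j _
        exact exp_sub_exp_mul_re_mul_le _ _ _ _
    _ = relEntropyExp A B +
          ∑ i, ∑ j, (Real.exp (a i) / 3 + Real.exp (b j) / 6) * ‖x i j‖ ^ 2 := by
        simp only [relEntropyExp_eq_sum_sum hA hB, Finset.sum_add_distrib, norm_inner_symm (w _),
          a, b, u, w]
    _ ≤ _ := by
        rw [re_trace_exp hA, re_trace_exp hB, Finset.sum_div, Finset.sum_div]
        gcongr
        exact sum_sum_add_mul_sq_norm_inner_toEuclideanCLM_le u w X
          (fun _ ↦ by positivity) (fun _ ↦ by positivity)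

lemma exp_sub_smul_one (B : Matrix ι ι 𝕜) (c : ℝ) :
    NormedSpace.exp (B - (c : 𝕜) • 1) = (Real.exp (-c) : 𝕜) • NormedSpace.exp B := by
  have hcomm : Commute (algebraMap 𝕜 (Matrix ι ι 𝕜) ((-c : ℝ) : 𝕜)) B := Algebra.commutes _ _
  have hshift : B - (c : 𝕜) • 1 = algebraMap 𝕜 (Matrix ι ι 𝕜) ((-c : ℝ) : 𝕜) + B := by
    rw [Algebra.algebraMap_eq_smul_one, RCLike.ofReal_neg, neg_smul, neg_add_eq_sub]
  rw [hshift, exp_add_of_commute _ _ hcomm, ← NormedSpace.algebraMap_exp_comm, ← ofReal_exp,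
    Algebra.algebraMap_eq_smul_one, smul_one_mul]

lemma log_re_trace_exp_le [Nonempty ι] (hA : A.IsHermitian) (hB : B.IsHermitian) :
    Real.log (RCLike.re (NormedSpace.exp B).trace) ≤
      Real.log (RCLike.re (NormedSpace.exp A).trace) +
        RCLike.re (NormedSpace.exp A * (B - A)).trace / RCLike.re (NormedSpace.exp A).trace +
        ‖B - A‖ ^ 2 / 2 := by
  have hZA : 0 < RCLike.re (NormedSpace.exp A).trace := re_trace_exp_pos hA
  have hZB : 0 < RCLike.re (NormedSpace.exp B).trace := re_trace_exp_pos hB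
  set ZA := RCLike.re (NormedSpace.exp A).trace
  let c := Real.log (RCLike.re (NormedSpace.exp B).trace) - Real.log ZA
  -- A scalar shift of `B` equalizes the two traces without changing the Gibbs state of `B`.
  let B' := B - (c : 𝕜) • 1
  have hB' : B'.IsHermitian := hB.sub (isHermitian_one.smul (RCLike.conj_ofReal c))
  have htrace : RCLike.re (NormedSpace.exp B').trace = ZA := by
    rw [exp_sub_smul_one, trace_smul, smul_eq_mul, RCLike.re_ofReal_mul, neg_sub, Real.exp_sub,
      Real.exp_log hZA, Real.exp_log hZB, div_mul_cancel₀ _ hZB.ne']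
  have hpinsker := re_trace_exp_sub_exp_mul_le hA hB' (B - A)
  have hrel : relEntropyExp A B' =
      RCLike.re (NormedSpace.exp B' * (B - A)).trace - c * ZA := by
    rw [relEntropyExp, sub_right_comm, mul_sub, mul_smul_comm, mul_one, trace_sub, trace_smul,
      map_sub, smul_eq_mul, RCLike.re_ofReal_mul, htrace, sub_add_cancel]
  rw [sub_mul, trace_sub, map_sub, hrel, htrace] at hpinsker
  have hc : c ≤ RCLike.re (NormedSpace.exp A * (B - A)).trace / ZA + ‖B - A‖ ^ 2 / 2 := by
    rw [div_add' _ _ _ hZA.ne', le_div_iff₀ hZA]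
    linarith
  linarith

end Matrix

section Hamiltonian

variable (H : Fin m → Matrix (Fin n) (Fin n) ℂ) (η : Matrix (Fin n) (Fin n) ℂ)

variable {H} in
lemma isHermitian_ham (hH : ∀ i, (H i).IsHermitian) (θ : Fin m → ℝ) : (ham H θ).IsHermitian :=
  isSelfAdjoint_sum _ fun i _ ↦ (hH i).smul (IsSelfAdjoint.all (θ i))

lemma ham_sub (θ θ' : Fin m → ℝ) :
    ham H θ' - ham H θ = ham H (θ' - θ) := by
  simp only [ham, Pi.sub_apply, sub_smul, Finset.sum_sub_distrib]

lemma norm_ham_sq_le (δ : EuclideanSpace ℝ (Fin m)) :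
    ‖ham H δ‖ ^ 2 ≤ (∑ i, ‖H i‖ ^ 2) * ‖δ‖ ^ 2 := by
  calc ‖ham H δ‖ ^ 2 ≤ (∑ i, ‖H i‖ * ‖δ i‖) ^ 2 := by
        gcongr
        refine (norm_sum_le _ _).trans_eq (Finset.sum_congr rfl fun i _ ↦ ?_)
        rw [norm_smul, mul_comm]
    _ ≤ _ := by
        rw [EuclideanSpace.norm_sq_eq]
        exact Finset.sum_mul_sq_le_sq_mul_sq _ _ _

lemma re_trace_exp_ham_mul_ham_div_Z (θ δ : Fin m → ℝ) :
    (NormedSpace.exp (ham H θ) * ham H δ).trace.re / Z H θ =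
      ∑ i, δ i * (gibbs H θ * H i).trace.re := by
  simp only [gibbs, ham, Finset.mul_sum, Matrix.trace_sum, Complex.re_sum, Finset.sum_div,
    mul_smul_comm, smul_mul_assoc, Matrix.trace_smul, Complex.smul_re, smul_eq_mul,
    ← Complex.ofReal_inv, Complex.re_ofReal_mul]
  exact Finset.sum_congr rfl fun i _ ↦ by ring

lemma inner_gradF (θ δ : EuclideanSpace ℝ (Fin m)) :
    inner ℝ (gradF H η θ) δ =
      ∑ i, δ i * (gibbs H θ * H i).trace.re - ∑ i, δ i * (η * H i).trace.re := by
  simp only [PiLp.inner_apply, gradF, RCLike.inner_apply, conj_trivial, mul_sub,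
    Finset.sum_sub_distrib]

variable {H}

lemma logZ_le [NeZero n] (hH : ∀ i, (H i).IsHermitian) (θ θ' : EuclideanSpace ℝ (Fin m)) :
    logZ H θ' ≤ logZ H θ + ∑ i, (θ' - θ) i * (gibbs H θ * H i).trace.re +
      (∑ i, ‖H i‖ ^ 2) / 2 * ‖θ' - θ‖ ^ 2 := by
  calc logZ H θ' ≤ logZ H θ + (NormedSpace.exp (ham H θ) * ham H (θ' - θ).ofLp).trace.re / Z H θ +
        ‖ham H (θ' - θ).ofLp‖ ^ 2 / 2 := by
        rw [WithLp.ofLp_sub, ← ham_sub]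
        exact log_re_trace_exp_le (isHermitian_ham hH θ) (isHermitian_ham hH θ')
    _ ≤ _ := by
        rw [re_trace_exp_ham_mul_ham_div_Z, div_mul_eq_mul_div]
        gcongr
        exact norm_ham_sq_le H (θ' - θ)

lemma F_sub_le [NeZero n] (hH : ∀ i, (H i).IsHermitian) (θ θ' : EuclideanSpace ℝ (Fin m)) :
    F H η θ' - F H η θ ≤
      inner ℝ (gradF H η θ) (θ' - θ) + (∑ i, ‖H i‖ ^ 2) / 2 * ‖θ' - θ‖ ^ 2 := by
  have hη : ∑ i, (θ' - θ) i * (η * H i).trace.re =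
      ∑ i, θ' i * (η * H i).trace.re - ∑ i, θ i * (η * H i).trace.re := by
    simp only [PiLp.sub_apply, sub_mul, Finset.sum_sub_distrib]
  rw [inner_gradF, hη, F, F]
  linarith [logZ_le hH θ θ']

end Hamiltonian

theorem descent_step_general [NeZero n] (H : Fin m → Matrix (Fin n) (Fin n) ℂ)
    (hHerm : ∀ i, (H i).IsHermitian) (η : Matrix (Fin n) (Fin n) ℂ) {L : ℝ}
    (hL : ∑ i, ‖H i‖ ^ 2 ≤ L) (θ : EuclideanSpace ℝ (Fin m)) (γ : ℝ) :
    F H η (θ - γ • gradF H η θ) - F H η θ ≤ -γ * (1 - γ * L / 2) * ‖gradF H η θ‖ ^ 2 ∧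
      (0 ≤ γ → γ * L ≤ 2 → F H η (θ - γ • gradF H η θ) ≤ F H η θ) := by
  set g := gradF H η θ
  have hdescent : F H η (θ - γ • g) - F H η θ ≤ -γ * (1 - γ * L / 2) * ‖g‖ ^ 2 := by
    calc _ ≤ inner ℝ g (-(γ • g)) + (∑ i, ‖H i‖ ^ 2) / 2 * ‖-(γ • g)‖ ^ 2 := by
          simpa using F_sub_le η hHerm θ (θ - γ • g)
      _ ≤ inner ℝ g (-(γ • g)) + L / 2 * ‖-(γ • g)‖ ^ 2 := by gcongr
      _ = _ := by
          rw [inner_neg_right, inner_smul_right, real_inner_self_eq_norm_sq, norm_neg, norm_smul,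
            mul_pow, Real.norm_eq_abs, sq_abs]
          ring
  refine ⟨hdescent, fun hγ hγL ↦ sub_nonpos.mp (hdescent.trans ?_)⟩
  have hstep : 0 ≤ γ * (1 - γ * L / 2) := mul_nonneg hγ (by linarith)
  linarith [mul_nonneg hstep (sq_nonneg ‖g‖)]

/-- **Descent step for exact gradient descent on the relative entropy.** With
`L = 2m·max_i ‖H_i‖²`, the step `θ' = θ − γ∇F(θ)` satisfies
`F(θ') − F(θ) ≤ −γ(1 − γL/2)‖∇F(θ)‖²`; in particular, if `γ ≤ 2/L` then
`F(θ') ≤ F(θ)`: gradient descent never increases the relative entropy. -/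
theorem descent_step (hm : 0 < m) (H : Fin m → Matrix (Fin n) (Fin n) ℂ)
    (hHerm : ∀ i, (H i).IsHermitian)
    (η : Matrix (Fin n) (Fin n) ℂ) (hη : η.PosSemidef) (hηtr : η.trace = 1)
    (L : ℝ)
    (hL : L = 2 * m * (Finset.univ.sup' ⟨⟨0, hm⟩, Finset.mem_univ _⟩ fun i => ‖H i‖ ^ 2))
    (θ : EuclideanSpace ℝ (Fin m)) (γ : ℝ) (hγ : 0 < γ)
    (θ' : EuclideanSpace ℝ (Fin m)) (hθ' : θ' = θ - γ • gradF H η θ) :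
    F H η θ' - F H η θ ≤ -γ * (1 - γ * L / 2) * ‖gradF H η θ‖ ^ 2 ∧
      (γ ≤ 2 / L → F H η θ' ≤ F H η θ) := by
  subst hθ'
  have : NeZero n := ⟨by rintro rfl; simp [Matrix.trace] at hηtr⟩
  have hsum_nonneg : 0 ≤ ∑ i, ‖H i‖ ^ 2 := Finset.sum_nonneg fun i _ ↦ sq_nonneg ‖H i‖
  have hsum_le : ∑ i, ‖H i‖ ^ 2 ≤ L := by
    have := sum_le_card_mul_sup' ⟨⟨0, hm⟩, Finset.mem_univ _⟩ fun i ↦ ‖H i‖ ^ 2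
    rw [Finset.card_univ, Fintype.card_fin] at this
    linarith
  obtain ⟨hdescent, hmono⟩ := descent_step_general H hHerm η hsum_le θ γ
  exact ⟨hdescent, fun h ↦
    hmono hγ.le (mul_le_of_le_div₀ zero_le_two (hsum_nonneg.trans hsum_le) h)⟩

end QBM10
end

section
/- (Collinearity / Pythagorean identity.) Let η be a density matrix and a ∈ ℝ^m a parameter vector such that Tr[η H_i] = Tr[ρ_a H_i] for all i ∈ {1,…,m}. Then for every b ∈ ℝ^m, (−Tr[η H(b)] + log Z(b)) − (−Tr[η H(a)] + log Z(a)) = S(ρ_a‖ρ_b); equivalently, the quantum relative entropies satisfy S(η‖ρ_b) = S(η‖ρ_a) + S(ρ_a‖ρ_b). -/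
open scoped Matrix.Norms.L2Operator ComplexOrder

namespace QBM11

variable {n m : ℕ}

/-- The Hamiltonian `H(θ) = ∑ i, θ i • H i`. -/
noncomputable def ham (H : Fin m → Matrix (Fin n) (Fin n) ℂ) (θ : Fin m → ℝ) :
    Matrix (Fin n) (Fin n) ℂ :=
  ∑ i, θ i • H i

/-- The partition function `Z(θ) = Tr[exp H(θ)]` (its real part). -/
noncomputable def Z (H : Fin m → Matrix (Fin n) (Fin n) ℂ) (θ : Fin m → ℝ) : ℝ :=
  (NormedSpace.exp (ham H θ)).trace.re

/-- The Gibbs state `ρ_θ = exp H(θ) / Z(θ)`. -/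
noncomputable def gibbs (H : Fin m → Matrix (Fin n) (Fin n) ℂ) (θ : Fin m → ℝ) :
    Matrix (Fin n) (Fin n) ℂ :=
  (Z H θ : ℂ)⁻¹ • NormedSpace.exp (ham H θ)

/-- The log-partition function `θ ↦ log Z(θ)`. -/
noncomputable def logZ (H : Fin m → Matrix (Fin n) (Fin n) ℂ) (θ : Fin m → ℝ) : ℝ :=
  Real.log (Z H θ)

/-- The QBM objective `F(θ) = log Z(θ) − ∑ i, θ i * Tr[η H i]`. -/
noncomputable def F (H : Fin m → Matrix (Fin n) (Fin n) ℂ) (η : Matrix (Fin n) (Fin n) ℂ)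
    (θ : Fin m → ℝ) : ℝ :=
  logZ H θ - ∑ i, θ i * (η * H i).trace.re

/-- The quantum relative entropy between two Gibbs states of the family:
`S(ρ_a‖ρ_b) = Tr[ρ_a (H(a) − H(b))] − log Z(a) + log Z(b)`. -/
noncomputable def relEnt (H : Fin m → Matrix (Fin n) (Fin n) ℂ) (a b : Fin m → ℝ) : ℝ :=
  (gibbs H a * (ham H a - ham H b)).trace.re - logZ H a + logZ H b

theorem re_trace_mul_ham (H : Fin m → Matrix (Fin n) (Fin n) ℂ)
    (A : Matrix (Fin n) (Fin n) ℂ) (θ : Fin m → ℝ) :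
    (A * ham H θ).trace.re = ∑ i, θ i * (A * H i).trace.re := by
  simp only [ham, Finset.mul_sum, mul_smul_comm, Matrix.trace_sum, Matrix.trace_smul,
    Complex.re_sum, Complex.smul_re, smul_eq_mul]

/-- As `log ρ_θ = H(θ) − log Z(θ)` for Hermitian `H i`, the right-hand side is the cross entropy
`−Tr[η log ρ_θ]` when `Tr η = 1`; subtracting the entropy of `η` gives `S(η‖ρ_θ)`. -/
theorem F_eq_neg_re_trace_add_logZ (H : Fin m → Matrix (Fin n) (Fin n) ℂ)
    (η : Matrix (Fin n) (Fin n) ℂ) (θ : Fin m → ℝ) :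
    F H η θ = -(η * ham H θ).trace.re + logZ H θ := by
  rw [F, re_trace_mul_ham, sub_eq_neg_add]

theorem F_congr {H : Fin m → Matrix (Fin n) (Fin n) ℂ} {η σ : Matrix (Fin n) (Fin n) ℂ}
    (hmatch : ∀ i, (η * H i).trace.re = (σ * H i).trace.re) : F H η = F H σ := by
  funext θ
  simp only [F, hmatch]

theorem relEnt_eq_F_sub_F (H : Fin m → Matrix (Fin n) (Fin n) ℂ) (a b : Fin m → ℝ) :
    relEnt H a b = F H (gibbs H a) b - F H (gibbs H a) a := by
  rw [relEnt, F_eq_neg_re_trace_add_logZ, F_eq_neg_re_trace_add_logZ, mul_sub,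
    Matrix.trace_sub, Complex.sub_re]
  ring

theorem collinearity_general (H : Fin m → Matrix (Fin n) (Fin n) ℂ)
    (η : Matrix (Fin n) (Fin n) ℂ) (a : Fin m → ℝ)
    (hmatch : ∀ i, (η * H i).trace.re = (gibbs H a * H i).trace.re) (b : Fin m → ℝ) :
    (-(η * ham H b).trace.re + logZ H b) - (-(η * ham H a).trace.re + logZ H a) =
      relEnt H a b := by
  rw [← F_eq_neg_re_trace_add_logZ, ← F_eq_neg_re_trace_add_logZ, F_congr hmatch,
    relEnt_eq_F_sub_F]

/-- **Collinearity / Pythagorean identity.** If the density matrix `η` has the same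
expectation values as `ρ_a` on all the `H_i`, then for every `b`,
`(−Tr[η H(b)] + log Z(b)) − (−Tr[η H(a)] + log Z(a)) = S(ρ_a‖ρ_b)`;
equivalently `S(η‖ρ_b) = S(η‖ρ_a) + S(ρ_a‖ρ_b)`. -/
theorem collinearity (H : Fin m → Matrix (Fin n) (Fin n) ℂ)
    (hHerm : ∀ i, (H i).IsHermitian)
    (η : Matrix (Fin n) (Fin n) ℂ) (hη : η.PosSemidef) (hηtr : η.trace = 1)
    (a : Fin m → ℝ) (hmatch : ∀ i, (η * H i).trace.re = (gibbs H a * H i).trace.re)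
    (b : Fin m → ℝ) :
    (-(η * ham H b).trace.re + logZ H b) - (-(η * ham H a).trace.re + logZ H a) =
      relEnt H a b :=
  collinearity_general H η a hmatch b

end QBM11
end

section
/- Let a, b ∈ ℝ^m and ε > 0, and suppose |Tr[ρ_b H_i] − Tr[ρ_a H_i]| ≤ 2ε for all i ∈ {1,…,m}. Then S(ρ_a‖ρ_b) ≤ 2ε·‖b − a‖₁, where ‖b − a‖₁ = ∑_{i=1}^m |b_i − a_i|. -/
/-!
The log-partition functions cancel in the symmetrised relative entropy, so
`S(ρ_a‖ρ_b) ≤ S(ρ_a‖ρ_b) + S(ρ_b‖ρ_a) = ∑ i, (b i - a i) * (Tr[ρ_b H i] - Tr[ρ_a H i])`.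
The nonnegativity of `S(ρ_b‖ρ_a)` used here is the Peierls–Bogoliubov inequality, a consequence of
Klein's inequality for `exp`. Klein's inequality is in turn a scalar tangent-line inequality
averaged over pairs of eigenvalues with the weights `|⟨u i, v j⟩|²`, where `u` and `v` are
eigenbases of the two matrices.
-/

open scoped Matrix.Norms.L2Operator ComplexOrder

namespace QBM13

variable {n m : ℕ}

/-- The Hamiltonian `H(θ) = ∑ i, θ i • H i`. -/
noncomputable def ham (H : Fin m → Matrix (Fin n) (Fin n) ℂ) (θ : Fin m → ℝ) :
    Matrix (Fin n) (Fin n) ℂ :=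
  ∑ i, θ i • H i

/-- The partition function `Z(θ) = Tr[exp H(θ)]` (its real part). -/
noncomputable def Z (H : Fin m → Matrix (Fin n) (Fin n) ℂ) (θ : Fin m → ℝ) : ℝ :=
  (NormedSpace.exp (ham H θ)).trace.re

/-- The Gibbs state `ρ_θ = exp H(θ) / Z(θ)`. -/
noncomputable def gibbs (H : Fin m → Matrix (Fin n) (Fin n) ℂ) (θ : Fin m → ℝ) :
    Matrix (Fin n) (Fin n) ℂ :=
  (Z H θ : ℂ)⁻¹ • NormedSpace.exp (ham H θ)

/-- The log-partition function `θ ↦ log Z(θ)`. -/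
noncomputable def logZ (H : Fin m → Matrix (Fin n) (Fin n) ℂ) (θ : Fin m → ℝ) : ℝ :=
  Real.log (Z H θ)

/-- The QBM objective `F(θ) = log Z(θ) − ∑ i, θ i * Tr[η H i]`. -/
noncomputable def F (H : Fin m → Matrix (Fin n) (Fin n) ℂ) (η : Matrix (Fin n) (Fin n) ℂ)
    (θ : Fin m → ℝ) : ℝ :=
  logZ H θ - ∑ i, θ i * (η * H i).trace.re

/-- The quantum relative entropy between two Gibbs states of the family:
`S(ρ_a‖ρ_b) = Tr[ρ_a (H(a) − H(b))] − log Z(a) + log Z(b)`. -/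
noncomputable def relEnt (H : Fin m → Matrix (Fin n) (Fin n) ℂ) (a b : Fin m → ℝ) : ℝ :=
  (gibbs H a * (ham H a - ham H b)).trace.re - logZ H a + logZ H b

lemma sum_mul_le_mul_sum_abs {α R : Type*} [CommRing R] [LinearOrder R] [IsStrictOrderedRing R]
    {s : Finset α} {x y : α → R} {C : R} (hy : ∀ i ∈ s, |y i| ≤ C) :
    ∑ i ∈ s, x i * y i ≤ C * ∑ i ∈ s, |x i| := by
  rw [Finset.mul_sum]
  refine Finset.sum_le_sum fun i hi ↦ ?_
  calc x i * y i ≤ |x i * y i| := le_abs_self _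
    _ = |y i| * |x i| := by rw [abs_mul, mul_comm]
    _ ≤ C * |x i| := by gcongr; exact hy i hi

section TraceInequalities

variable {𝕜 ι : Type*} [RCLike 𝕜] [Fintype ι] [DecidableEq ι] {A B : Matrix ι ι 𝕜}

/-- The transition probabilities `|⟨u i, v j⟩|²` between the eigenbases `u` of `A` and `v` of `B`,
the weights with which pairs of eigenvalues enter `Tr[f(A) g(B)]`. They are encoded as the squared
absolute values of the entries of the change-of-basis matrix. -/
noncomputable def eigenOverlap (hA : A.IsHermitian) (hB : B.IsHermitian) (i j : ι) : ℝ :=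
  ‖(star (hA.eigenvectorUnitary : Matrix ι ι 𝕜) * hB.eigenvectorUnitary) i j‖ ^ 2

lemma re_trace_diagonal_mul_mul_diagonal_mul_conjTranspose {κ : Type*} [Fintype κ]
    [DecidableEq κ] (W : Matrix ι κ 𝕜) (f : ι → ℝ) (g : κ → ℝ) :
    RCLike.re (Matrix.diagonal (fun i ↦ (f i : 𝕜)) * W * Matrix.diagonal (fun j ↦ (g j : 𝕜)) *
      W.conjTranspose).trace = ∑ i, ∑ j, f i * g j * ‖W i j‖ ^ 2 := by
  simp only [Matrix.trace, Matrix.diag_apply, Matrix.mul_apply (N := W.conjTranspose),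
    Matrix.mul_diagonal, Matrix.diagonal_mul, Matrix.conjTranspose_apply, map_sum]
  refine Finset.sum_congr rfl fun i _ ↦ Finset.sum_congr rfl fun j _ ↦ ?_
  have entry : (f i : 𝕜) * W i j * g j * star (W i j) = ((f i * g j * ‖W i j‖ ^ 2 : ℝ) : 𝕜) := by
    push_cast
    rw [← RCLike.mul_conj, starRingEnd_apply]
    ring
  rw [entry, RCLike.ofReal_re]

lemma re_trace_cfc_mul_cfc (hA : A.IsHermitian) (hB : B.IsHermitian) (f g : ℝ → ℝ) :
    RCLike.re (cfc f A * cfc g B).trace =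
      ∑ i, ∑ j, f (hA.eigenvalues i) * g (hB.eigenvalues j) * eigenOverlap hA hB i j := by
  unfold eigenOverlap
  rw [← re_trace_diagonal_mul_mul_diagonal_mul_conjTranspose, hA.cfc_eq, hB.cfc_eq,
    Matrix.IsHermitian.cfc, Matrix.IsHermitian.cfc, Unitary.conjStarAlgAut_apply,
    Unitary.conjStarAlgAut_apply, mul_assoc, mul_assoc, Matrix.trace_mul_comm,
    ← Matrix.star_eq_conjTranspose, star_mul, star_star]
  simp only [mul_assoc, Function.comp_def]

/-- For `f` convex, `tangent_le` holds with `f'` the derivative of `f`. -/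
lemma klein_inequality (hA : A.IsHermitian) (hB : B.IsHermitian) {f f' : ℝ → ℝ}
    (tangent_le : ∀ x ∈ spectrum ℝ A, ∀ y ∈ spectrum ℝ B, f y + f' y * (x - y) ≤ f x) :
    RCLike.re (cfc f B).trace + RCLike.re (cfc f' B * (A - B)).trace ≤
      RCLike.re (cfc f A).trace := by
  have continuousOn_spectrum (h : ℝ → ℝ) : ContinuousOn h (spectrum ℝ B) :=
    B.finite_real_spectrum.continuousOn h
  have trace_A : RCLike.re (cfc f A).trace = ∑ i, ∑ j,
      f (hA.eigenvalues j) * eigenOverlap hB hA i j := by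
    simpa [cfc_const_one ℝ B hB.isSelfAdjoint] using re_trace_cfc_mul_cfc hB hA (fun _ ↦ 1) f
  have trace_B (h : ℝ → ℝ) : RCLike.re (cfc h B).trace = ∑ i, ∑ j,
      h (hB.eigenvalues i) * eigenOverlap hB hA i j := by
    simpa [cfc_const_one ℝ A hA.isSelfAdjoint] using re_trace_cfc_mul_cfc hB hA h (fun _ ↦ 1)
  have trace_BA : RCLike.re (cfc f' B * A).trace = ∑ i, ∑ j,
      f' (hB.eigenvalues i) * hA.eigenvalues j * eigenOverlap hB hA i j := by
    simpa [cfc_id' ℝ A hA.isSelfAdjoint] using re_trace_cfc_mul_cfc hB hA f' (fun x ↦ x)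
  have cfc_mul_self : cfc f' B * B = cfc (fun y ↦ f' y * y) B := by
    rw [cfc_mul f' (fun y ↦ y) B (continuousOn_spectrum _) (continuousOn_spectrum _),
      cfc_id' ℝ B hB.isSelfAdjoint]
  rw [mul_sub, Matrix.trace_sub, map_sub, cfc_mul_self, trace_A, trace_B, trace_B, trace_BA]
  simp only [← Finset.sum_add_distrib, ← Finset.sum_sub_distrib]
  refine Finset.sum_le_sum fun i _ ↦ Finset.sum_le_sum fun j _ ↦ ?_
  have overlap_nonneg : 0 ≤ eigenOverlap hB hA i j := sq_nonneg _
  have weighted_tangent_le := mul_le_mul_of_nonneg_right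
    (tangent_le _ (hA.eigenvalues_mem_spectrum_real j) _ (hB.eigenvalues_mem_spectrum_real i))
    overlap_nonneg
  linarith

lemma cfc_real_exp_eq_exp (hA : A.IsHermitian) : cfc Real.exp A = NormedSpace.exp A := by
  let : NormedAlgebra ℝ (Matrix ι ι 𝕜) :=
    { norm_smul_le r M := by simpa using norm_smul_le (r : 𝕜) M }
  exact CFC.real_exp_eq_normedSpace_exp hA.isSelfAdjoint

lemma klein_inequality_exp (hA : A.IsHermitian) (hB : B.IsHermitian) :
    RCLike.re (NormedSpace.exp B).trace + RCLike.re (NormedSpace.exp B * (A - B)).trace ≤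
      RCLike.re (NormedSpace.exp A).trace := by
  rw [← cfc_real_exp_eq_exp hA, ← cfc_real_exp_eq_exp hB]
  refine klein_inequality hA hB fun x _ y _ ↦ ?_
  calc Real.exp y + Real.exp y * (x - y)
      = Real.exp y * (x - y + 1) := by ring
    _ ≤ Real.exp y * Real.exp (x - y) := by gcongr; exact Real.add_one_le_exp _
    _ = Real.exp x := by rw [← Real.exp_add, add_sub_cancel]

open scoped MatrixOrder in
lemma posDef_exp (hA : A.IsHermitian) : (NormedSpace.exp A).PosDef := by
  have exp_nonneg : 0 ≤ NormedSpace.exp A := by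
    rw [← cfc_real_exp_eq_exp hA]
    exact cfc_nonneg fun x _ ↦ Real.exp_nonneg x
  exact (Matrix.nonneg_iff_posSemidef.mp exp_nonneg).posDef_iff_isUnit.mpr (Matrix.isUnit_exp A)

lemma re_trace_exp_pos [Nonempty ι] (hA : A.IsHermitian) :
    0 < RCLike.re (NormedSpace.exp A).trace :=
  (RCLike.pos_iff.mp (posDef_exp hA).trace_pos).1

lemma exp_add_algebraMap (A : Matrix ι ι 𝕜) (c : ℝ) :
    NormedSpace.exp (A + algebraMap ℝ (Matrix ι ι 𝕜) c) = Real.exp c • NormedSpace.exp A := by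
  have exp_algebraMap : NormedSpace.exp (algebraMap ℝ (Matrix ι ι 𝕜) c) =
      algebraMap ℝ (Matrix ι ι 𝕜) (Real.exp c) := by
    simp only [Matrix.algebraMap_eq_diagonal, Matrix.exp_diagonal, Pi.algebraMap_def]
    rw [Pi.exp_def, Real.exp_eq_exp_ℝ, NormedSpace.algebraMap_exp_comm]
  rw [Matrix.exp_add_of_commute _ _ (Algebra.commutes c A).symm, exp_algebraMap,
    ← Algebra.commutes, ← Algebra.smul_def]

lemma peierls_bogoliubov_inequality [Nonempty ι] (hA : A.IsHermitian) (hB : B.IsHermitian) :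
    Real.log (RCLike.re (NormedSpace.exp B).trace) +
        RCLike.re (NormedSpace.exp B * (A - B)).trace / RCLike.re (NormedSpace.exp B).trace ≤
      Real.log (RCLike.re (NormedSpace.exp A).trace) := by
  set z := RCLike.re (NormedSpace.exp B).trace with hz
  set c := RCLike.re (NormedSpace.exp B * (A - B)).trace / z with hc
  have z_pos : 0 < z := re_trace_exp_pos hB
  -- The shift of `B` by `c` makes the linear term of Klein's inequality vanish.
  have klein := klein_inequality_exp hA
    (hB.add (IsSelfAdjoint.algebraMap _ (IsSelfAdjoint.all c)))
  have linear_term : RCLike.re (NormedSpace.exp B * (A - (B + algebraMap ℝ _ c))).trace = 0 := by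
    rw [← sub_sub, mul_sub, ← Algebra.commutes c, ← Algebra.smul_def, Matrix.trace_sub,
      Matrix.trace_smul, map_sub, RCLike.smul_re, ← hz, hc, div_mul_cancel₀ _ z_pos.ne', sub_self]
  rw [exp_add_algebraMap, smul_mul_assoc, Matrix.trace_smul, Matrix.trace_smul, RCLike.smul_re,
    RCLike.smul_re, linear_term, mul_zero, add_zero, ← hz] at klein
  calc Real.log z + c = Real.log (Real.exp c * z) := by
        rw [Real.log_mul (Real.exp_ne_zero c) z_pos.ne', Real.log_exp, add_comm]
    _ ≤ Real.log (RCLike.re (NormedSpace.exp A).trace) := Real.log_le_log (by positivity) klein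

end TraceInequalities

lemma isHermitian_ham {H : Fin m → Matrix (Fin n) (Fin n) ℂ} (hH : ∀ i, (H i).IsHermitian)
    (θ : Fin m → ℝ) : (ham H θ).IsHermitian :=
  isSelfAdjoint_sum _ fun i _ ↦ (IsSelfAdjoint.all (θ i)).smul (hH i)

lemma re_trace_mul_ham (R : Matrix (Fin n) (Fin n) ℂ) (H : Fin m → Matrix (Fin n) (Fin n) ℂ)
    (θ : Fin m → ℝ) : (R * ham H θ).trace.re = ∑ i, θ i * (R * H i).trace.re := by
  simp [ham, Finset.mul_sum, Matrix.trace_sum]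

lemma re_trace_gibbs_mul (H : Fin m → Matrix (Fin n) (Fin n) ℂ) (θ : Fin m → ℝ)
    (M : Matrix (Fin n) (Fin n) ℂ) :
    (gibbs H θ * M).trace.re = (NormedSpace.exp (ham H θ) * M).trace.re / Z H θ := by
  rw [gibbs, ← Complex.ofReal_inv, smul_mul_assoc, Matrix.trace_smul, smul_eq_mul,
    Complex.re_ofReal_mul, inv_mul_eq_div]

lemma relEnt_nonneg {H : Fin m → Matrix (Fin n) (Fin n) ℂ} (hH : ∀ i, (H i).IsHermitian)
    (a b : Fin m → ℝ) : 0 ≤ relEnt H a b := by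
  rcases isEmpty_or_nonempty (Fin n) with _ | _
  · simp [relEnt, logZ, Z, Matrix.trace]
  · have peierls_bogoliubov : logZ H a +
        (NormedSpace.exp (ham H a) * (ham H b - ham H a)).trace.re / Z H a ≤ logZ H b :=
      peierls_bogoliubov_inequality (isHermitian_ham hH b) (isHermitian_ham hH a)
    rw [← re_trace_gibbs_mul, ← neg_sub (ham H a), mul_neg, Matrix.trace_neg,
      Complex.neg_re] at peierls_bogoliubov
    unfold relEnt
    linarith

lemma relEnt_add_relEnt_swap (H : Fin m → Matrix (Fin n) (Fin n) ℂ) (a b : Fin m → ℝ) :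
    relEnt H a b + relEnt H b a =
      ∑ i, (b i - a i) * ((gibbs H b * H i).trace.re - (gibbs H a * H i).trace.re) := by
  simp only [relEnt, mul_sub, Matrix.trace_sub, Complex.sub_re, re_trace_mul_ham, sub_mul,
    Finset.sum_sub_distrib]
  ring

/-- If all Gibbs expectation values of `ρ_a` and `ρ_b` agree to within `2ε`, then
`S(ρ_a‖ρ_b) ≤ 2ε·‖b − a‖₁`. -/
theorem relEnt_le_of_close_expectations (H : Fin m → Matrix (Fin n) (Fin n) ℂ)
    (hHerm : ∀ i, (H i).IsHermitian) (a b : Fin m → ℝ) (ε : ℝ) (hε : 0 < ε)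
    (hclose : ∀ i, |(gibbs H b * H i).trace.re - (gibbs H a * H i).trace.re| ≤ 2 * ε) :
    relEnt H a b ≤ 2 * ε * ∑ i, |b i - a i| := by
  calc relEnt H a b
      ≤ relEnt H a b + relEnt H b a := le_add_of_nonneg_right (relEnt_nonneg hHerm b a)
    _ = ∑ i, (b i - a i) * ((gibbs H b * H i).trace.re - (gibbs H a * H i).trace.re) :=
        relEnt_add_relEnt_swap H a b
    _ ≤ 2 * ε * ∑ i, |b i - a i| := sum_mul_le_mul_sum_abs fun i _ ↦ hclose i

end QBM13
end

section
/- (Peierls–Bogoliubov / Gibbs variational inequality.) For all parameter vectors a, b ∈ ℝ^m, log Z(b) ≥ log Z(a) + Tr[ρ_a (H(b) − H(a))]; equivalently, the quantum relative entropy between Gibbs states is nonnegative: S(ρ_a‖ρ_b) ≥ 0. -/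
open scoped Matrix.Norms.L2Operator ComplexOrder

namespace QBM14

variable {n m : ℕ}

/-- The Hamiltonian `H(θ) = ∑ i, θ i • H i`. -/
noncomputable def ham (H : Fin m → Matrix (Fin n) (Fin n) ℂ) (θ : Fin m → ℝ) :
    Matrix (Fin n) (Fin n) ℂ :=
  ∑ i, θ i • H i

/-- The partition function `Z(θ) = Tr[exp H(θ)]` (its real part). -/
noncomputable def Z (H : Fin m → Matrix (Fin n) (Fin n) ℂ) (θ : Fin m → ℝ) : ℝ :=
  (NormedSpace.exp (ham H θ)).trace.re

/-- The Gibbs state `ρ_θ = exp H(θ) / Z(θ)`. -/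
noncomputable def gibbs (H : Fin m → Matrix (Fin n) (Fin n) ℂ) (θ : Fin m → ℝ) :
    Matrix (Fin n) (Fin n) ℂ :=
  (Z H θ : ℂ)⁻¹ • NormedSpace.exp (ham H θ)

/-- The log-partition function `θ ↦ log Z(θ)`. -/
noncomputable def logZ (H : Fin m → Matrix (Fin n) (Fin n) ℂ) (θ : Fin m → ℝ) : ℝ :=
  Real.log (Z H θ)

/-- The QBM objective `F(θ) = log Z(θ) − ∑ i, θ i * Tr[η H i]`. -/
noncomputable def F (H : Fin m → Matrix (Fin n) (Fin n) ℂ) (η : Matrix (Fin n) (Fin n) ℂ)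
    (θ : Fin m → ℝ) : ℝ :=
  logZ H θ - ∑ i, θ i * (η * H i).trace.re

/-- The quantum relative entropy between two Gibbs states of the family:
`S(ρ_a‖ρ_b) = Tr[ρ_a (H(a) − H(b))] − log Z(a) + log Z(b)`. -/
noncomputable def relEnt (H : Fin m → Matrix (Fin n) (Fin n) ℂ) (a b : Fin m → ℝ) : ℝ :=
  (gibbs H a * (ham H a - ham H b)).trace.re - logZ H a + logZ H b

/-!
If `u i` and `v j` are orthonormal eigenbases of Hermitian matrices `A` and `B`, with eigenvalues
`x i` and `y j`, then `Tr[f(A) g(B)] = ∑ i j, f (x i) * g (y j) * |⟪u i, v j⟫| ^ 2`. The weights are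
nonnegative, so a scalar inequality between sums of products `f x * g y` passes to traces. Applied
to `(1 - c) * exp x + exp x * (y - x) ≤ exp (-c) * exp y`, which is `1 + t ≤ exp t` at
`t = y - x - c`, this gives
`(1 - c) * Tr[exp A] + Tr[exp A * (B - A)] ≤ exp (-c) * Tr[exp B]`. The choice
`c = Tr[exp A * (B - A)] / Tr[exp A]` is optimal, and the logarithm of the result is the
Peierls–Bogoliubov inequality.
-/

open RCLike Matrix

section HermitianMatrix

variable {ι κ μ 𝕜 : Type*} [Fintype ι] [RCLike 𝕜]

lemma trace_conj_diagonal_mul_conj_diagonal [Fintype κ] [DecidableEq κ] [Fintype μ] [DecidableEq μ]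
    (U : Matrix ι κ 𝕜) (V : Matrix ι μ 𝕜) (d : κ → 𝕜) (e : μ → 𝕜) :
    (U * diagonal d * Uᴴ * (V * diagonal e * Vᴴ)).trace =
      ∑ i, ∑ j, d i * e j * (‖(Uᴴ * V) i j‖ ^ 2 : ℝ) := by
  have cyclic : (U * diagonal d * Uᴴ * (V * diagonal e * Vᴴ)).trace =
      (diagonal d * (Uᴴ * V) * (diagonal e * (Uᴴ * V)ᴴ)).trace := by
    rw [conjTranspose_mul, conjTranspose_conjTranspose, Matrix.mul_assoc U, Matrix.mul_assoc U,
      trace_mul_comm U]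
    simp only [Matrix.mul_assoc]
  rw [cyclic]
  simp only [trace, diag_apply]
  refine Finset.sum_congr rfl fun i _ ↦ ?_
  rw [mul_apply]
  refine Finset.sum_congr rfl fun j _ ↦ ?_
  rw [diagonal_mul, diagonal_mul, conjTranspose_apply, ofReal_pow, ← RCLike.mul_conj,
    starRingEnd_apply]
  ring

variable [DecidableEq ι] {A B : Matrix ι ι 𝕜}

lemma trace_cfc_mul_cfc (hA : A.IsHermitian) (hB : B.IsHermitian) (f g : ℝ → ℝ) :
    (cfc f A * cfc g B).trace =
      ((∑ i, ∑ j, f (hA.eigenvalues i) * g (hB.eigenvalues j) *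
        ‖((hA.eigenvectorUnitary : Matrix ι ι 𝕜)ᴴ * hB.eigenvectorUnitary) i j‖ ^ 2 : ℝ) : 𝕜) := by
  rw [hA.cfc_eq, hB.cfc_eq, IsHermitian.cfc, IsHermitian.cfc, Unitary.conjStarAlgAut_apply,
    Unitary.conjStarAlgAut_apply, star_eq_conjTranspose, star_eq_conjTranspose,
    trace_conj_diagonal_mul_conj_diagonal]
  simp only [Function.comp_apply, map_sum, map_mul]

lemma re_trace_sum_cfc_mul_cfc_nonneg (hA : A.IsHermitian) (hB : B.IsHermitian)
    (s : Finset κ) (f g : κ → ℝ → ℝ)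
    (h : ∀ x ∈ spectrum ℝ A, ∀ y ∈ spectrum ℝ B, 0 ≤ ∑ k ∈ s, f k x * g k y) :
    0 ≤ re (∑ k ∈ s, cfc (f k) A * cfc (g k) B).trace := by
  simp only [trace_sum, map_sum, trace_cfc_mul_cfc hA hB, ofReal_re]
  rw [Finset.sum_comm]
  refine Finset.sum_nonneg fun i _ ↦ ?_
  rw [Finset.sum_comm]
  refine Finset.sum_nonneg fun j _ ↦ ?_
  rw [← Finset.sum_mul]
  exact mul_nonneg (h _ (hA.eigenvalues_mem_spectrum_real i) _ (hB.eigenvalues_mem_spectrum_real j))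
    (sq_nonneg _)

theorem klein_inequality (hA : A.IsHermitian) (hB : B.IsHermitian) {f f' g : ℝ → ℝ}
    (affine_le : ∀ x ∈ spectrum ℝ A, ∀ y ∈ spectrum ℝ B, f x + f' x * (y - x) ≤ g y) :
    re (cfc f A).trace + re (cfc f' A * (B - A)).trace ≤ re (cfc g B).trace := by
  have hAs : IsSelfAdjoint A := hA
  have hBs : IsSelfAdjoint B := hB
  have hcont (u : ℝ → ℝ) : ContinuousOn u (spectrum ℝ A) := A.finite_real_spectrum.continuousOn u
  -- `g y - f x - f' x * (y - x) = 1 * g y + (f' x * x - f x) * 1 + (-f' x) * y`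
  have sum_nonneg := re_trace_sum_cfc_mul_cfc_nonneg hA hB Finset.univ
    ![fun _ ↦ 1, fun x ↦ f' x * x - f x, fun x ↦ -f' x] ![g, fun _ ↦ 1, fun y ↦ y]
    fun x hx y hy ↦ by
      simp only [Fin.sum_univ_three, cons_val]
      linarith [affine_le x hx y hy]
  simp only [Fin.sum_univ_three, cons_val] at sum_nonneg
  rw [cfc_const_one ℝ A, cfc_const_one ℝ B, cfc_id' ℝ B, cfc_neg,
    cfc_sub _ _ A (hcont _) (hcont _), cfc_mul _ _ A (hcont _) (hcont _), cfc_id' ℝ A] at sum_nonneg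
  simp only [one_mul, mul_one, neg_mul, trace_add, trace_sub, trace_neg, map_add, map_sub,
    map_neg] at sum_nonneg
  simp only [mul_sub, trace_sub, map_sub]
  linarith

lemma cfc_real_exp_eq_exp (hA : A.IsHermitian) : cfc Real.exp A = NormedSpace.exp A := by
  -- For general `𝕜` the operator norm comes only with a `NormedAlgebra 𝕜` instance.
  let : NormedAlgebra ℝ (Matrix ι ι 𝕜) :=
    { norm_smul_le r M := by
        rw [real_smul_eq_coe_smul (K := 𝕜)]
        exact (norm_smul_le (r : 𝕜) M).trans_eq (by rw [norm_ofReal, Real.norm_eq_abs]) }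
  exact CFC.real_exp_eq_normedSpace_exp hA.isSelfAdjoint

lemma one_sub_mul_re_trace_exp_add_le (hA : A.IsHermitian) (hB : B.IsHermitian) (c : ℝ) :
    (1 - c) * re (NormedSpace.exp A).trace + re (NormedSpace.exp A * (B - A)).trace ≤
      Real.exp (-c) * re (NormedSpace.exp B).trace := by
  have tangent_le (x y : ℝ) :
      (1 - c) * Real.exp x + Real.exp x * (y - x) ≤ Real.exp (-c) * Real.exp y :=
    calc (1 - c) * Real.exp x + Real.exp x * (y - x)
        = Real.exp x * ((-c + y - x) + 1) := by ring
      _ ≤ Real.exp x * Real.exp (-c + y - x) := by gcongr; exact Real.add_one_le_exp _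
      _ = Real.exp (-c) * Real.exp y := by rw [← Real.exp_add, ← Real.exp_add, add_sub_cancel]
  have klein := klein_inequality hA hB fun x _ y _ ↦ tangent_le x y
  rwa [cfc_const_mul (1 - c) Real.exp A, cfc_const_mul (Real.exp (-c)) Real.exp B,
    cfc_real_exp_eq_exp hA, cfc_real_exp_eq_exp hB, trace_smul, trace_smul, RCLike.smul_re,
    RCLike.smul_re] at klein

open scoped MatrixOrder in
lemma posDef_exp (hA : A.IsHermitian) : (NormedSpace.exp A).PosDef :=
  have exp_nonneg : 0 ≤ NormedSpace.exp A :=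
    cfc_real_exp_eq_exp hA ▸ cfc_nonneg fun x _ ↦ Real.exp_nonneg x
  (nonneg_iff_posSemidef.mp exp_nonneg).posDef_iff_isUnit.mpr (isUnit_exp A)

lemma re_trace_exp_pos [Nonempty ι] (hA : A.IsHermitian) : 0 < re (NormedSpace.exp A).trace :=
  (RCLike.pos_iff.mp (posDef_exp hA).trace_pos).1

theorem re_trace_exp_mul_exp_le [Nonempty ι] (hA : A.IsHermitian) (hB : B.IsHermitian) :
    re (NormedSpace.exp A).trace *
        Real.exp (re (NormedSpace.exp A * (B - A)).trace / re (NormedSpace.exp A).trace) ≤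
      re (NormedSpace.exp B).trace := by
  set z := re (NormedSpace.exp A).trace
  set c := re (NormedSpace.exp A * (B - A)).trace / z with hc
  have h : (1 - c) * z + c * z ≤ Real.exp (-c) * re (NormedSpace.exp B).trace := by
    rw [hc, div_mul_cancel₀ _ (re_trace_exp_pos hA).ne']
    exact one_sub_mul_re_trace_exp_add_le hA hB c
  rwa [← add_mul, sub_add_cancel, one_mul, Real.exp_neg, ← div_eq_inv_mul,
    le_div_iff₀ (Real.exp_pos c)] at h

theorem peierls_bogoliubov_general (hA : A.IsHermitian) (hB : B.IsHermitian) :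
    Real.log (re (NormedSpace.exp A).trace) +
        re (NormedSpace.exp A * (B - A)).trace / re (NormedSpace.exp A).trace ≤
      Real.log (re (NormedSpace.exp B).trace) := by
  cases isEmpty_or_nonempty ι
  · simp [trace]
  · have hpos := re_trace_exp_pos hA
    rw [← Real.log_exp (_ / _), ← Real.log_mul hpos.ne' (Real.exp_ne_zero _)]
    exact Real.log_le_log (by positivity) (re_trace_exp_mul_exp_le hA hB)

end HermitianMatrix

lemma isHermitian_ham {H : Fin m → Matrix (Fin n) (Fin n) ℂ} (hHerm : ∀ i, (H i).IsHermitian)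
    (θ : Fin m → ℝ) : (ham H θ).IsHermitian :=
  isSelfAdjoint_sum _ fun i _ ↦ (IsSelfAdjoint.all (θ i)).smul (hHerm i)

lemma re_trace_gibbs_mul (H : Fin m → Matrix (Fin n) (Fin n) ℂ) (θ : Fin m → ℝ)
    (X : Matrix (Fin n) (Fin n) ℂ) :
    (gibbs H θ * X).trace.re = (NormedSpace.exp (ham H θ) * X).trace.re / Z H θ := by
  rw [gibbs, smul_mul, trace_smul, smul_eq_mul, ← Complex.ofReal_inv, Complex.re_ofReal_mul,
    inv_mul_eq_div]

lemma relEnt_eq_sub (H : Fin m → Matrix (Fin n) (Fin n) ℂ) (a b : Fin m → ℝ) :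
    relEnt H a b = logZ H b - (logZ H a + (gibbs H a * (ham H b - ham H a)).trace.re) := by
  rw [relEnt, ← neg_sub (ham H b), mul_neg, trace_neg, Complex.neg_re]
  ring

/-- **Peierls–Bogoliubov / Gibbs variational inequality.**
`log Z(b) ≥ log Z(a) + Tr[ρ_a (H(b) − H(a))]`; equivalently `S(ρ_a‖ρ_b) ≥ 0`. -/
theorem peierls_bogoliubov (H : Fin m → Matrix (Fin n) (Fin n) ℂ)
    (hHerm : ∀ i, (H i).IsHermitian) (a b : Fin m → ℝ) :
    logZ H b ≥ logZ H a + (gibbs H a * (ham H b - ham H a)).trace.re ∧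
      0 ≤ relEnt H a b := by
  rw [relEnt_eq_sub, sub_nonneg, re_trace_gibbs_mul, ge_iff_le, and_self]
  exact peierls_bogoliubov_general (isHermitian_ham hHerm a) (isHermitian_ham hHerm b)

end QBM14
end

section
/- (Quantum Pinsker bound on expectation values for Gibbs states.) For all parameter vectors a, b ∈ ℝ^m and every nonzero Hermitian n×n matrix H, |Tr[H·(ρ_a − ρ_b)]| ≤ ‖H‖·√(2·S(ρ_a‖ρ_b)), where ‖H‖ is the operator (spectral) norm. -/
open scoped Matrix.Norms.L2Operator ComplexOrder

namespace QBM15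

variable {n m : ℕ}

/-- The Hamiltonian `H(θ) = ∑ i, θ i • H i`. -/
noncomputable def ham (H : Fin m → Matrix (Fin n) (Fin n) ℂ) (θ : Fin m → ℝ) :
    Matrix (Fin n) (Fin n) ℂ :=
  ∑ i, θ i • H i

/-- The partition function `Z(θ) = Tr[exp H(θ)]` (its real part). -/
noncomputable def Z (H : Fin m → Matrix (Fin n) (Fin n) ℂ) (θ : Fin m → ℝ) : ℝ :=
  (NormedSpace.exp (ham H θ)).trace.re

/-- The Gibbs state `ρ_θ = exp H(θ) / Z(θ)`. -/
noncomputable def gibbs (H : Fin m → Matrix (Fin n) (Fin n) ℂ) (θ : Fin m → ℝ) :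
    Matrix (Fin n) (Fin n) ℂ :=
  (Z H θ : ℂ)⁻¹ • NormedSpace.exp (ham H θ)

/-- The log-partition function `θ ↦ log Z(θ)`. -/
noncomputable def logZ (H : Fin m → Matrix (Fin n) (Fin n) ℂ) (θ : Fin m → ℝ) : ℝ :=
  Real.log (Z H θ)

/-- The QBM objective `F(θ) = log Z(θ) − ∑ i, θ i * Tr[η H i]`. -/
noncomputable def F (H : Fin m → Matrix (Fin n) (Fin n) ℂ) (η : Matrix (Fin n) (Fin n) ℂ)
    (θ : Fin m → ℝ) : ℝ :=
  logZ H θ - ∑ i, θ i * (η * H i).trace.re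

/-- The quantum relative entropy between two Gibbs states of the family:
`S(ρ_a‖ρ_b) = Tr[ρ_a (H(a) − H(b))] − log Z(a) + log Z(b)`. -/
noncomputable def relEnt (H : Fin m → Matrix (Fin n) (Fin n) ℂ) (a b : Fin m → ℝ) : ℝ :=
  (gibbs H a * (ham H a - ham H b)).trace.re - logZ H a + logZ H b

/-!
Let `x i`, `y j` be the eigenvalues of Hermitian matrices `K`, `L`, let `C i j` be the inner
products of their eigenvectors, and let `M j i` be the entries of `A` between the two eigenbases.
Then `Tr[A (e^K − e^L)] = ∑ i j, (e^{x i} − e^{y j}) C i j M j i`, and the relative entropy of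
`e^K` and `e^L` is `∑ i j, |C i j|² d(x i, y j)` with `d(x, y) = e^x (x − y) − e^x + e^y`. The
scalar inequality `(e^x − e^y)² ≤ (2/3 e^x + 4/3 e^y) d(x, y)` turns the bound into a
Cauchy–Schwarz inequality. Since the rows and columns of `M` have `ℓ²` norm at most `‖A‖`, the
remaining factor is at most `‖A‖² (2/3 Tr e^K + 4/3 Tr e^L)`, which for states is `2 ‖A‖²`.
-/

section Scalar

open InformationTheory

lemma two_mul_sub_one_le_add_one_mul_log {x : ℝ} (hx : 1 ≤ x) :
    2 * (x - 1) ≤ (x + 1) * Real.log x := by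
  have h := Real.le_log_one_add_of_nonneg (sub_nonneg.2 hx)
  rw [add_sub_cancel, div_le_iff₀ (by linarith)] at h
  linarith

lemma add_one_mul_log_le_two_mul_sub_one {x : ℝ} (hx₀ : 0 < x) (hx₁ : x ≤ 1) :
    (x + 1) * Real.log x ≤ 2 * (x - 1) := by
  have h := mul_le_mul_of_nonneg_left
    (two_mul_sub_one_le_add_one_mul_log ((one_le_inv₀ hx₀).2 hx₁)) hx₀.le
  rw [Real.log_inv] at h
  field_simp at h
  linarith

lemma three_mul_sub_one_sq_le_mul_klFun {x : ℝ} (hx : 0 ≤ x) :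
    3 * (x - 1) ^ 2 ≤ (2 * x + 4) * klFun x := by
  let g : ℝ → ℝ := fun t ↦ (2 * t + 4) * klFun t - 3 * (t - 1) ^ 2
  have hderiv {t : ℝ} (ht : 0 < t) :
      HasDerivAt g (4 * ((t + 1) * Real.log t - 2 * (t - 1))) t := by
    have h₁ := (((hasDerivAt_id t).const_mul 2).add_const 4).mul (hasDerivAt_klFun ht.ne')
    have h₂ := (((hasDerivAt_id t).sub_const 1).pow 2).const_mul 3
    refine (h₁.sub h₂).congr_deriv ?_
    simp only [klFun_apply, id_eq]
    push_cast
    ring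
  have hcont : Continuous g := by fun_prop
  have hmin : IsMinOn g (Set.Ici 0) 1 := isMinOn_Ici_of_deriv
    hcont.continuousAt hcont.continuousAt
    (fun t ht ↦ (hderiv ht.1).differentiableAt.differentiableWithinAt)
    (fun t ht ↦ (hderiv (zero_lt_one.trans ht)).differentiableAt.differentiableWithinAt)
    (fun t ht ↦ by
      rw [(hderiv ht.1).deriv]
      linarith [add_one_mul_log_le_two_mul_sub_one ht.1 ht.2.le])
    (fun t ht ↦ by
      rw [(hderiv (zero_lt_one.trans ht)).deriv]
      linarith [two_mul_sub_one_le_add_one_mul_log (le_of_lt ht)])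
  have h : g 1 ≤ g x := hmin hx
  simp only [g, klFun_one] at h
  linarith

lemma exp_mul_klFun_exp_sub (x y : ℝ) :
    Real.exp y * klFun (Real.exp (x - y)) =
      Real.exp x * (x - y) - Real.exp x + Real.exp y := by
  have h : Real.exp y * Real.exp (x - y) = Real.exp x := by rw [← Real.exp_add, add_sub_cancel]
  rw [klFun_apply, Real.log_exp, ← h]
  ring

lemma exp_mul_sub_sub_exp_add_exp_nonneg (x y : ℝ) :
    0 ≤ Real.exp x * (x - y) - Real.exp x + Real.exp y := by
  rw [← exp_mul_klFun_exp_sub]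
  exact mul_nonneg (Real.exp_nonneg y) (klFun_nonneg (Real.exp_nonneg _))

lemma sq_exp_sub_exp_le (x y : ℝ) :
    (Real.exp x - Real.exp y) ^ 2 ≤
      (2 / 3 * Real.exp x + 4 / 3 * Real.exp y) *
        (Real.exp x * (x - y) - Real.exp x + Real.exp y) := by
  have h : Real.exp x = Real.exp y * Real.exp (x - y) := by rw [← Real.exp_add, add_sub_cancel]
  have hkl := mul_le_mul_of_nonneg_left
    (three_mul_sub_one_sq_le_mul_klFun (Real.exp_nonneg (x - y))) (sq_nonneg (Real.exp y))
  rw [← exp_mul_klFun_exp_sub, h]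
  linear_combination hkl / 3

end Scalar

section OperatorNorm

open Matrix

variable {𝕜 ι κ : Type*} [RCLike 𝕜] [Fintype ι] [Fintype κ]

lemma norm_sum_sum_mul_mul_sq_le (C : Matrix ι κ 𝕜) (M : Matrix κ ι 𝕜) {δ w d : ι → κ → ℝ}
    (hw : ∀ i j, 0 ≤ w i j) (hd : ∀ i j, 0 ≤ d i j) (hδ : ∀ i j, δ i j ^ 2 ≤ w i j * d i j) :
    ‖∑ i, ∑ j, (δ i j : 𝕜) * (C i j * M j i)‖ ^ 2 ≤
      (∑ i, ∑ j, ‖M j i‖ ^ 2 * w i j) * ∑ i, ∑ j, ‖C i j‖ ^ 2 * d i j := by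
  simp only [← Fintype.sum_prod_type']
  refine (pow_le_pow_left₀ (norm_nonneg _) (norm_sum_le _ _) 2).trans
    (Finset.sum_sq_le_sum_mul_sum_of_sq_le_mul _
      (fun p _ ↦ mul_nonneg (sq_nonneg _) (hw p.1 p.2))
      (fun p _ ↦ mul_nonneg (sq_nonneg _) (hd p.1 p.2)) fun p _ ↦ ?_)
  have h := mul_le_mul_of_nonneg_right (hδ p.1 p.2) (sq_nonneg (‖C p.1 p.2‖ * ‖M p.2 p.1‖))
  rw [norm_mul, norm_mul, RCLike.norm_ofReal, mul_pow, sq_abs]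
  exact h.trans_eq (by ring)

variable [DecidableEq ι]

lemma sum_norm_sq_col_le (M : Matrix κ ι 𝕜) (i : ι) : ∑ j, ‖M j i‖ ^ 2 ≤ ‖M‖ ^ 2 := by
  have h := l2_opNorm_mulVec M (EuclideanSpace.single i (1 : 𝕜))
  rw [PiLp.norm_single, norm_one, mul_one] at h
  simpa [EuclideanSpace.norm_sq_eq] using pow_le_pow_left₀ (norm_nonneg _) h 2

lemma sum_norm_sq_row_le (M : Matrix κ ι 𝕜) (j : κ) : ∑ i, ‖M j i‖ ^ 2 ≤ ‖M‖ ^ 2 := by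
  classical
  simpa [l2_opNorm_conjTranspose] using sum_norm_sq_col_le Mᴴ j

lemma sum_sum_norm_sq_mul_add_le (M : Matrix κ ι 𝕜) {u : ι → ℝ} {v : κ → ℝ}
    (hu : ∀ i, 0 ≤ u i) (hv : ∀ j, 0 ≤ v j) :
    ∑ i, ∑ j, ‖M j i‖ ^ 2 * (u i + v j) ≤ ‖M‖ ^ 2 * (∑ i, u i + ∑ j, v j) := by
  have hcol : ∑ i, (∑ j, ‖M j i‖ ^ 2) * u i ≤ ∑ i, ‖M‖ ^ 2 * u i :=
    Finset.sum_le_sum fun i _ ↦ mul_le_mul_of_nonneg_right (sum_norm_sq_col_le M i) (hu i)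
  have hrow : ∑ j, (∑ i, ‖M j i‖ ^ 2) * v j ≤ ∑ j, ‖M‖ ^ 2 * v j :=
    Finset.sum_le_sum fun j _ ↦ mul_le_mul_of_nonneg_right (sum_norm_sq_row_le M j) (hv j)
  simp only [mul_add, Finset.sum_add_distrib]
  rw [Finset.sum_comm (f := fun i j ↦ ‖M j i‖ ^ 2 * v j)]
  simpa only [Finset.sum_mul, Finset.mul_sum] using add_le_add hcol hrow

end OperatorNorm

section Eigenbasis

open Matrix

variable {𝕜 ι : Type*} [RCLike 𝕜] [Fintype ι] [DecidableEq ι] {K L : Matrix ι ι 𝕜}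

/-- The matrix of `A` from the eigenbasis of `L` to the eigenbasis of `K`. For `A = 1` its entries
are the inner products between the two eigenbases. -/
noncomputable def eigenbasisMatrix (hK : K.IsHermitian) (hL : L.IsHermitian) (A : Matrix ι ι 𝕜) :
    Matrix ι ι 𝕜 :=
  star (hK.eigenvectorUnitary : Matrix ι ι 𝕜) * A * hL.eigenvectorUnitary

lemma norm_eigenbasisMatrix (hK : K.IsHermitian) (hL : L.IsHermitian) (A : Matrix ι ι 𝕜) :
    ‖eigenbasisMatrix hK hL A‖ = ‖A‖ := by
  rw [eigenbasisMatrix, CStarRing.norm_mul_coe_unitary, ← Unitary.coe_star,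
    CStarRing.norm_coe_unitary_mul]

lemma conjTranspose_eigenbasisMatrix (hK : K.IsHermitian) (hL : L.IsHermitian)
    (A : Matrix ι ι 𝕜) : (eigenbasisMatrix hK hL A)ᴴ = eigenbasisMatrix hL hK Aᴴ := by
  simp only [eigenbasisMatrix, conjTranspose_mul, star_eq_conjTranspose,
    conjTranspose_conjTranspose, Matrix.mul_assoc]

lemma cfc_eq_eigenvectorUnitary_mul_diagonal_mul (hK : K.IsHermitian) (f : ℝ → ℝ) :
    cfc f K = (hK.eigenvectorUnitary : Matrix ι ι 𝕜) *
      diagonal (fun i ↦ (f (hK.eigenvalues i) : 𝕜)) *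
        star (hK.eigenvectorUnitary : Matrix ι ι 𝕜) := by
  rw [hK.cfc_eq, IsHermitian.cfc, Unitary.conjStarAlgAut_apply]
  rfl

lemma trace_cfc (hK : K.IsHermitian) (f : ℝ → ℝ) :
    (cfc f K).trace = ∑ i, (f (hK.eigenvalues i) : 𝕜) := by
  rw [cfc_eq_eigenvectorUnitary_mul_diagonal_mul hK, trace_mul_cycle, Unitary.coe_star_mul_self,
    one_mul, trace_diagonal]

lemma trace_mul_cfc_mul_cfc (hK : K.IsHermitian) (hL : L.IsHermitian) (A : Matrix ι ι 𝕜)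
    (f g : ℝ → ℝ) :
    (A * cfc f K * cfc g L).trace =
      ∑ i, ∑ j, ((f (hK.eigenvalues i) * g (hL.eigenvalues j) : ℝ) : 𝕜) *
        (eigenbasisMatrix hK hL 1 i j * eigenbasisMatrix hL hK A j i) := by
  have hcycle : (A * cfc f K * cfc g L).trace =
      (eigenbasisMatrix hL hK A * diagonal (fun i ↦ (f (hK.eigenvalues i) : 𝕜)) *
        (eigenbasisMatrix hK hL 1 * diagonal (fun j ↦ (g (hL.eigenvalues j) : 𝕜)))).trace := by
    rw [cfc_eq_eigenvectorUnitary_mul_diagonal_mul hK,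
      cfc_eq_eigenvectorUnitary_mul_diagonal_mul hL, ← mul_assoc, trace_mul_comm]
    simp only [eigenbasisMatrix, mul_one, mul_assoc]
  rw [hcycle, trace, Finset.sum_comm]
  refine Finset.sum_congr rfl fun j _ ↦ ?_
  rw [diag_apply, mul_apply]
  refine Finset.sum_congr rfl fun i _ ↦ ?_
  rw [mul_diagonal, mul_diagonal]
  push_cast
  ring

lemma re_trace_cfc_mul_cfc (hK : K.IsHermitian) (hL : L.IsHermitian) (f g : ℝ → ℝ) :
    RCLike.re (cfc f K * cfc g L).trace =
      ∑ i, ∑ j, ‖eigenbasisMatrix hK hL 1 i j‖ ^ 2 *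
        (f (hK.eigenvalues i) * g (hL.eigenvalues j)) := by
  have h (i j : ι) : eigenbasisMatrix hL hK 1 j i = star (eigenbasisMatrix hK hL 1 i j) := by
    rw [← conjTranspose_apply, conjTranspose_eigenbasisMatrix, conjTranspose_one]
  rw [← one_mul (cfc f K), trace_mul_cfc_mul_cfc hK hL]
  simp only [h, RCLike.star_def, RCLike.mul_conj, map_sum]
  norm_cast
  simp only [mul_comm]

end Eigenbasis

section Pinsker

open Matrix NormedSpace

variable {𝕜 ι : Type*} [RCLike 𝕜] [Fintype ι] [DecidableEq ι] {K L : Matrix ι ι 𝕜}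

/-- The relative entropy `S(ρ‖σ) = Tr[ρ (log ρ − log σ) − ρ + σ]` of the positive definite matrices
`ρ = exp K` and `σ = exp L`, which are not assumed to have trace one. It is encoded as a function of
the logarithms `K` and `L`. -/
noncomputable def expRelEntropy (K L : Matrix ι ι 𝕜) : ℝ :=
  RCLike.re (exp K * (K - L) - exp K + exp L).trace

lemma cfc_real_exp (hK : K.IsHermitian) : cfc Real.exp K = exp K := by
  have hconj := cfc_eq_eigenvectorUnitary_mul_diagonal_mul hK id
  rw [cfc_id ℝ K] at hconj
  have hexp : exp (fun i ↦ (hK.eigenvalues i : 𝕜)) =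
      fun i ↦ (Real.exp (hK.eigenvalues i) : 𝕜) := by
    funext i
    rw [Pi.coe_exp, Real.exp_eq_exp_ℝ]
    exact (algebraMap_exp_comm (𝔸 := 𝕜) (hK.eigenvalues i)).symm
  rw [cfc_eq_eigenvectorUnitary_mul_diagonal_mul hK]
  conv_rhs => rw [hconj]
  exact .symm <| (exp_units_conj (Unitary.toUnits hK.eigenvectorUnitary) _).trans <| by
    simp only [id_eq, exp_diagonal, hexp]
    rfl

lemma exp_sub_smul_one (K : Matrix ι ι 𝕜) (c : 𝕜) :
    exp (K - c • (1 : Matrix ι ι 𝕜)) = exp (-c) • exp K := by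
  have hscalar : exp ((-c) • (1 : Matrix ι ι 𝕜)) = exp (-c) • (1 : Matrix ι ι 𝕜) := by
    rw [smul_one_eq_diagonal, smul_one_eq_diagonal, exp_diagonal, Pi.exp_def]
  rw [sub_eq_add_neg, ← neg_smul,
    Matrix.exp_add_of_commute _ _ ((Commute.one_right K).smul_right _), hscalar,
    mul_smul_comm, mul_one]

lemma re_trace_exp (hK : K.IsHermitian) :
    RCLike.re (exp K).trace = ∑ i, Real.exp (hK.eigenvalues i) := by
  rw [← cfc_real_exp hK, trace_cfc hK, map_sum]
  simp only [RCLike.ofReal_re]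

lemma trace_mul_exp_sub_exp (hK : K.IsHermitian) (hL : L.IsHermitian) (A : Matrix ι ι 𝕜) :
    (A * (exp K - exp L)).trace =
      ∑ i, ∑ j, ((Real.exp (hK.eigenvalues i) - Real.exp (hL.eigenvalues j) : ℝ) : 𝕜) *
        (eigenbasisMatrix hK hL 1 i j * eigenbasisMatrix hL hK A j i) := by
  have h : A * (exp K - exp L) =
      A * cfc Real.exp K * cfc (fun _ ↦ (1 : ℝ)) L -
        A * cfc (fun _ ↦ (1 : ℝ)) K * cfc Real.exp L := by
    rw [cfc_real_exp hK, cfc_real_exp hL, cfc_const_one ℝ K, cfc_const_one ℝ L]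
    noncomm_ring
  simp only [h, trace_sub, trace_mul_cfc_mul_cfc hK hL, mul_one, one_mul, RCLike.ofReal_sub,
    sub_mul, Finset.sum_sub_distrib]

lemma expRelEntropy_eq_sum (hK : K.IsHermitian) (hL : L.IsHermitian) :
    expRelEntropy K L = ∑ i, ∑ j, ‖eigenbasisMatrix hK hL 1 i j‖ ^ 2 *
      (Real.exp (hK.eigenvalues i) * (hK.eigenvalues i - hL.eigenvalues j) -
        Real.exp (hK.eigenvalues i) + Real.exp (hL.eigenvalues j)) := by
  have hexpK : cfc (fun x : ℝ ↦ Real.exp x * x) K = exp K * K := by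
    rw [cfc_mul Real.exp (fun x ↦ x) K, cfc_real_exp hK, cfc_id' ℝ K]
  have h : exp K * (K - L) - exp K + exp L =
      cfc (fun x : ℝ ↦ Real.exp x * x) K * cfc (fun _ ↦ (1 : ℝ)) L -
        cfc Real.exp K * cfc (fun y : ℝ ↦ y) L -
        cfc Real.exp K * cfc (fun _ ↦ (1 : ℝ)) L + cfc (fun _ ↦ (1 : ℝ)) K * cfc Real.exp L := by
    rw [hexpK, cfc_real_exp hK, cfc_real_exp hL, cfc_const_one ℝ K, cfc_const_one ℝ L,
      cfc_id' ℝ L]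
    noncomm_ring
  simp only [expRelEntropy, h, trace_add, trace_sub, map_add, map_sub, re_trace_cfc_mul_cfc hK hL,
    ← Finset.sum_add_distrib, ← Finset.sum_sub_distrib]
  refine Finset.sum_congr rfl fun i _ ↦ Finset.sum_congr rfl fun j _ ↦ ?_
  ring

lemma expRelEntropy_nonneg (hK : K.IsHermitian) (hL : L.IsHermitian) : 0 ≤ expRelEntropy K L := by
  rw [expRelEntropy_eq_sum hK hL]
  exact Finset.sum_nonneg fun i _ ↦ Finset.sum_nonneg fun j _ ↦
    mul_nonneg (sq_nonneg _) (exp_mul_sub_sub_exp_add_exp_nonneg _ _)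

theorem norm_trace_mul_exp_sub_exp_sq_le (hK : K.IsHermitian) (hL : L.IsHermitian)
    (A : Matrix ι ι 𝕜) :
    ‖(A * (exp K - exp L)).trace‖ ^ 2 ≤
      ‖A‖ ^ 2 * (2 / 3 * RCLike.re (exp K).trace + 4 / 3 * RCLike.re (exp L).trace) *
        expRelEntropy K L := by
  have hweight : ∑ i, ∑ j, ‖eigenbasisMatrix hL hK A j i‖ ^ 2 *
        (2 / 3 * Real.exp (hK.eigenvalues i) + 4 / 3 * Real.exp (hL.eigenvalues j)) ≤
      ‖A‖ ^ 2 * (2 / 3 * RCLike.re (exp K).trace + 4 / 3 * RCLike.re (exp L).trace) := by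
    rw [re_trace_exp hK, re_trace_exp hL, Finset.mul_sum, Finset.mul_sum,
      ← norm_eigenbasisMatrix hL hK A]
    exact sum_sum_norm_sq_mul_add_le _ (fun i ↦ by positivity) (fun j ↦ by positivity)
  rw [trace_mul_exp_sub_exp hK hL]
  refine (norm_sum_sum_mul_mul_sq_le _ _ (fun i j ↦ by positivity)
    (fun i j ↦ exp_mul_sub_sub_exp_add_exp_nonneg _ _)
    (fun i j ↦ sq_exp_sub_exp_le (hK.eigenvalues i) (hL.eigenvalues j))).trans ?_
  rw [← expRelEntropy_eq_sum hK hL]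
  exact mul_le_mul_of_nonneg_right hweight (expRelEntropy_nonneg hK hL)

theorem norm_trace_mul_exp_sub_exp_le_mul_sqrt (hK : K.IsHermitian) (hL : L.IsHermitian)
    (hK₁ : RCLike.re (exp K).trace = 1) (hL₁ : RCLike.re (exp L).trace = 1) (A : Matrix ι ι 𝕜) :
    ‖(A * (exp K - exp L)).trace‖ ≤ ‖A‖ * √(2 * expRelEntropy K L) := by
  have h := norm_trace_mul_exp_sub_exp_sq_le hK hL A
  rw [hK₁, hL₁] at h
  refine (Real.le_sqrt_of_sq_le (h.trans_eq (by ring :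
    _ = ‖A‖ ^ 2 * (2 * expRelEntropy K L)))).trans_eq ?_
  rw [Real.sqrt_mul (sq_nonneg _), Real.sqrt_sq (norm_nonneg _)]

end Pinsker

section Gibbs

open Matrix NormedSpace

variable {H : Fin m → Matrix (Fin n) (Fin n) ℂ}

/-- The normalized Hamiltonian `H(θ) − log Z(θ)`, which is the logarithm of the Gibbs state
`ρ_θ`. -/
noncomputable def logGibbs (H : Fin m → Matrix (Fin n) (Fin n) ℂ) (θ : Fin m → ℝ) :
    Matrix (Fin n) (Fin n) ℂ :=
  ham H θ - (logZ H θ : ℂ) • (1 : Matrix (Fin n) (Fin n) ℂ)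

lemma isHermitian_ham (hHerm : ∀ i, (H i).IsHermitian) (θ : Fin m → ℝ) :
    (ham H θ).IsHermitian := by
  simp only [IsHermitian, ham, conjTranspose_sum, conjTranspose_smul, (hHerm _).eq, star_trivial]

lemma isHermitian_logGibbs (hHerm : ∀ i, (H i).IsHermitian) (θ : Fin m → ℝ) :
    (logGibbs H θ).IsHermitian :=
  (isHermitian_ham hHerm θ).sub <| isHermitian_one.smul (Complex.conj_ofReal _)

variable [NeZero n]

lemma Z_pos (hHerm : ∀ i, (H i).IsHermitian) (θ : Fin m → ℝ) : 0 < Z H θ := by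
  have hZ : Z H θ = ∑ i, Real.exp ((isHermitian_ham hHerm θ).eigenvalues i) :=
    re_trace_exp (isHermitian_ham hHerm θ)
  exact hZ ▸ Finset.sum_pos (fun _ _ ↦ Real.exp_pos _) Finset.univ_nonempty

lemma exp_logGibbs (hHerm : ∀ i, (H i).IsHermitian) (θ : Fin m → ℝ) :
    exp (logGibbs H θ) = gibbs H θ := by
  rw [logGibbs, exp_sub_smul_one, gibbs, ← Complex.exp_eq_exp_ℂ, Complex.exp_neg, logZ,
    ← Complex.ofReal_exp, Real.exp_log (Z_pos hHerm θ)]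

lemma re_trace_gibbs (hHerm : ∀ i, (H i).IsHermitian) (θ : Fin m → ℝ) :
    (gibbs H θ).trace.re = 1 := by
  rw [gibbs, trace_smul, smul_eq_mul, ← Complex.ofReal_inv, Complex.re_ofReal_mul]
  exact inv_mul_cancel₀ (Z_pos hHerm θ).ne'

lemma expRelEntropy_logGibbs (hHerm : ∀ i, (H i).IsHermitian) (a b : Fin m → ℝ) :
    expRelEntropy (logGibbs H a) (logGibbs H b) = relEnt H a b := by
  have hdiff : logGibbs H a - logGibbs H b =
      ham H a - ham H b - ((logZ H a - logZ H b : ℝ) : ℂ) • (1 : Matrix (Fin n) (Fin n) ℂ) := by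
    rw [logGibbs, logGibbs, Complex.ofReal_sub]
    module
  rw [expRelEntropy, exp_logGibbs hHerm, exp_logGibbs hHerm, hdiff, relEnt]
  simp only [mul_sub, mul_smul_comm, mul_one, trace_add, trace_sub, trace_smul, smul_eq_mul,
    RCLike.re_to_complex, Complex.add_re, Complex.sub_re, Complex.re_ofReal_mul,
    re_trace_gibbs hHerm]
  ring

end Gibbs

theorem pinsker_expectation_bound_general [NeZero n] (H : Fin m → Matrix (Fin n) (Fin n) ℂ)
    (hHerm : ∀ i, (H i).IsHermitian) (a b : Fin m → ℝ) (A : Matrix (Fin n) (Fin n) ℂ) :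
    ‖(A * (gibbs H a - gibbs H b)).trace‖ ≤ ‖A‖ * √(2 * relEnt H a b) := by
  rw [← exp_logGibbs hHerm, ← exp_logGibbs hHerm, ← expRelEntropy_logGibbs hHerm]
  refine norm_trace_mul_exp_sub_exp_le_mul_sqrt (isHermitian_logGibbs hHerm a)
    (isHermitian_logGibbs hHerm b) ?_ ?_ A <;>
    exact exp_logGibbs hHerm _ ▸ re_trace_gibbs hHerm _

/-- **Quantum Pinsker bound on expectation values for Gibbs states.** For every nonzero
Hermitian `A`, `|Tr[A(ρ_a − ρ_b)]| ≤ ‖A‖·√(2·S(ρ_a‖ρ_b))` (operator norm). -/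
theorem pinsker_expectation_bound (H : Fin m → Matrix (Fin n) (Fin n) ℂ)
    (hHerm : ∀ i, (H i).IsHermitian) (a b : Fin m → ℝ)
    (A : Matrix (Fin n) (Fin n) ℂ) (hA : A.IsHermitian) (hA0 : A ≠ 0) :
    |(A * (gibbs H a - gibbs H b)).trace.re| ≤ ‖A‖ * Real.sqrt (2 * relEnt H a b) := by
  have : NeZero n := ⟨by rintro rfl; exact hA0 (Subsingleton.elim A 0)⟩
  exact (Complex.abs_re_le_norm _).trans (pinsker_expectation_bound_general H hHerm a b A)

end QBM15
end
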